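/- Let r ≥ 2 and let 1 ≤ d_1 ≤ ⋯ ≤ d_r be integers. Let Z ⊆ W_{r,d_1}×⋯×W_{r,d_r} be the set of tuples (F_1,…,F_r) with dim V(F_1,…,F_r) ≥ 1, let D ⊆ W_{r,d_1}×⋯×W_{r,d_r} be the set of tuples with dim V(F_1,…,F_{r−1}) ≥ 2, and let L be the set of tuples (F_1,…,F_r) such that V(F_1,…,F_r) contains a line of ℙ^r. Then the Zariski closure of Z \ D has a unique irreducible component of maximal dimension, and this component equals L; in particular, that component consists of tuples of homogeneous forms all vanishing on some common line. -/

import Mathlib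

open MvPolynomial

noncomputable section

variable (K : Type*) [Field K] (M : Type*) [AddCommGroup M] [Module K M]

/-- Evaluation of a polynomial in the linear functionals of `M` at a point `v : M`.
These are precisely the polynomial functions on the affine space `M`. -/
def polyEval (p : MvPolynomial (M →ₗ[K] K) K) (v : M) : K :=
  MvPolynomial.eval (fun φ : M →ₗ[K] K => φ v) p

lemma polyEval_mul (p q : MvPolynomial (M →ₗ[K] K) K) (v : M) :
    polyEval K M (p * q) v = polyEval K M p v * polyEval K M q v :=
  map_mul (MvPolynomial.eval fun φ : M →ₗ[K] K => φ v) p q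

/-- The collection of Zariski-closed subsets of the affine space `M`:
common zero loci of families of polynomial functions. -/
def zariskiCloseds : Set (Set M) :=
  {s | ∃ S : Set (MvPolynomial (M →ₗ[K] K) K), s = {v | ∀ p ∈ S, polyEval K M p v = 0}}

/-- The Zariski topology on an affine space (vector space) `M` over `K`. -/
def zariskiTopology : TopologicalSpace M := by
  refine TopologicalSpace.ofClosed (zariskiCloseds K M) ⟨{1}, ?_⟩ ?_ ?_
  · ext v
    simp [polyEval]
  · intro A hA
    choose S hS using fun a : A => hA a.2
    refine ⟨⋃ a : A, S a, ?_⟩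
    ext v
    simp only [Set.mem_sInter, Set.mem_setOf_eq, Set.mem_iUnion]
    constructor
    · rintro h p ⟨a, hp⟩
      have := h a a.2
      rw [hS a] at this
      exact this p hp
    · intro h t ht
      have : v ∈ {w | ∀ p ∈ S ⟨t, ht⟩, polyEval K M p w = 0} :=
        fun p hp => h p ⟨⟨t, ht⟩, hp⟩
      rw [← hS ⟨t, ht⟩] at this
      exact this
  · rintro s ⟨S₁, rfl⟩ t ⟨S₂, rfl⟩
    refine ⟨Set.image2 (· * ·) S₁ S₂, ?_⟩
    ext v
    simp only [Set.mem_union, Set.mem_setOf_eq]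
    constructor
    · rintro (h | h) p ⟨p₁, h₁, p₂, h₂, rfl⟩
      · show polyEval K M (p₁ * p₂) v = 0
        rw [polyEval_mul, h p₁ h₁, zero_mul]
      · show polyEval K M (p₁ * p₂) v = 0
        rw [polyEval_mul, h p₂ h₂, mul_zero]
    · intro h
      by_contra hc
      push_neg at hc
      obtain ⟨⟨p₁, h₁, hv₁⟩, ⟨p₂, h₂, hv₂⟩⟩ := hc
      have h12 := h (p₁ * p₂) ⟨p₁, h₁, p₂, h₂, rfl⟩
      rw [polyEval_mul] at h12
      exact mul_ne_zero hv₁ hv₂ h12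

/-- The dimension of a subset of affine space: the Krull dimension of its Zariski closure. -/
def dimSet {M : Type*} [TopologicalSpace M] (s : Set M) : WithBot ℕ∞ :=
  topologicalKrullDim ↥(closure s)

/-- `vdimGE r n F m` says that the common projective vanishing locus
`V(F 0, …, F (n-1)) ⊆ ℙ^r` has dimension at least `m` (with `dim ∅ = -∞`).
This is encoded via the Krull dimension of the homogeneous coordinate ring of the
affine cone: `dim V(F) ≥ m` iff the cone has Krull dimension at least `max m 0 + 1`. -/
def vdimGE {K : Type*} [Field K] (r n : ℕ) (F : Fin n → MvPolynomial (Fin (r + 1)) K)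
    (m : ℤ) : Prop :=
  ((m.toNat + 1 : ℕ) : WithBot ℕ∞) ≤
    ringKrullDim (MvPolynomial (Fin (r + 1)) K ⧸ Ideal.span (Set.range F))

end

noncomputable section Statement0

open MvPolynomial

variable (K : Type*) [Field K]

/-- The affine space `W_{r, d 0} × ⋯ × W_{r, d (n-1)}` of `n`-tuples of homogeneous
forms of degrees `d 0, …, d (n-1)` in the variables `x_0, …, x_r`. -/
abbrev tupleSpace (r n : ℕ) (d : Fin n → ℕ) : Type _ :=
  (i : Fin n) → ↥(homogeneousSubmodule (Fin (r + 1)) K (d i))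

/-- The Zariski topology on the affine space of tuples of forms. -/
instance (r n : ℕ) (d : Fin n → ℕ) : TopologicalSpace (tupleSpace K r n d) :=
  zariskiTopology K _

/-- The forms `F 0, …, F (n-1)` all vanish on a common line of `ℙ^r`, i.e. their common
vanishing locus contains the projectivization of a 2-dimensional linear subspace of
`K^{r+1}` spanned by linearly independent vectors `v, w`. -/
def vanishOnCommonLine {r n : ℕ} {d : Fin n → ℕ} (F : tupleSpace K r n d) : Prop :=
  ∃ v w : Fin (r + 1) → K, LinearIndependent K ![v, w] ∧
    ∀ i : Fin n, ∀ s t : K,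
      MvPolynomial.eval (fun j => s * v j + t * w j) (F i : MvPolynomial (Fin (r + 1)) K) = 0


end Statement0


theorem mem_range_of_isIntegral_isAlgClosed {E L : Type*} [Field E] [IsAlgClosed E] [CommRing L]
    [IsDomain L] [Algebra E L] {x : L} (hx : IsIntegral E x) : ∃ e, algebraMap E L e = x :=
  minpoly.mem_range_of_degree_eq_one E x
    (IsAlgClosed.degree_eq_one_of_irreducible E (minpoly.irreducible hx))

open Module in
/-- Linear Cauchy-Davenport over an algebraically closed field. -/
theorem linCD {E L : Type*} [Field E] [IsAlgClosed E] [Field L] [Algebra E L] (n : ℕ) :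
    ∀ (A B : Submodule E L), FiniteDimensional E A → FiniteDimensional E B → A ≠ ⊥ → B ≠ ⊥ →
      finrank E B ≤ n → finrank E A + finrank E B ≤ finrank E (A * B : Submodule E L) + 1 := by
  induction n with
  | zero =>
    intro A B _ _ _ hB h
    exact absurd (Submodule.finrank_eq_zero.mp (Nat.le_zero.mp h)) hB
  | succ n ih =>
    intro A B hA hB hA0 hB0 hn
    have hfin : FiniteDimensional E (A * B : Submodule E L) :=
      Module.Finite.iff_fg.2 ((Module.Finite.iff_fg.1 hA).mul (Module.Finite.iff_fg.1 hB))
    have hinj : ∀ u : L, u ≠ 0 → Function.Injective (LinearMap.mulLeft E u) := by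
      intro u hu x y hxy
      exact mul_left_cancel₀ hu hxy
    have hsc_rank : ∀ (u : L) (hu : u ≠ 0) (V : Submodule E L),
        finrank E (V.map (LinearMap.mulLeft E u)) = finrank E V := by
      intro u hu V
      exact ((Submodule.equivMapOfInjective _ (hinj u hu) V).finrank_eq).symm
    obtain ⟨b0, hb0, hb0'⟩ := Submodule.exists_mem_ne_zero_of_ne_bot hB0
    by_cases hcase : ∀ a ∈ A, a ≠ 0 → ∀ b ∈ B, a * b0⁻¹ * b ∈ A
    · -- B is one dimensional
      have hb1 : ∀ b ∈ B, b ∈ Submodule.span E {b0} := by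
        intro b hb
        have hint : IsIntegral E (b0⁻¹ * b) := by
          refine isIntegral_of_smul_mem_submodule (N := A) hA0 (Module.Finite.iff_fg.1 hA) _ ?_
          intro a ha
          by_cases ha0 : a = 0
          · simp [ha0]
          · have := hcase a ha ha0 b hb
            rw [smul_eq_mul]
            convert this using 1; ring
        obtain ⟨e, he⟩ := mem_range_of_isIntegral_isAlgClosed hint
        refine Submodule.mem_span_singleton.2 ⟨e, ?_⟩
        rw [Algebra.smul_def, he]; field_simp
      have hB1 : finrank E B ≤ 1 := by
        have h1 := Submodule.finrank_mono (show B ≤ Submodule.span E {b0} from hb1)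
        have h2 := finrank_span_singleton (K := E) hb0'
        omega
      have h3 : A.map (LinearMap.mulLeft E b0) ≤ A * B := by
        rintro _ ⟨x, hx, rfl⟩
        rw [LinearMap.mulLeft_apply, mul_comm b0 x]
        exact Submodule.mul_mem_mul hx hb0
      have h4 := Submodule.finrank_mono h3
      rw [hsc_rank b0 hb0'] at h4
      omega
    · push Not at hcase
      obtain ⟨a, ha, ha0, b1, hb1, hb1'⟩ := hcase
      set u := a * b0⁻¹ with hu
      have hu0 : u ≠ 0 := mul_ne_zero ha0 (inv_ne_zero hb0')
      let uB := B.map (LinearMap.mulLeft E u)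
      let A' := A ⊔ uB
      let I := A ⊓ uB
      let B' := I.map (LinearMap.mulLeft E u⁻¹)
      have hfB : FiniteDimensional E uB := by infer_instance
      have hB'B : B' ≤ B := by
        rintro _ ⟨x, ⟨_, ⟨y, hy, rfl⟩⟩, rfl⟩
        simpa [hu0] using hy
      have hb0B' : b0 ∈ B' := by
        refine ⟨a, ⟨ha, ⟨b0, hb0, by simp [hu, hb0']⟩⟩, ?_⟩
        simp [hu, ha0]
      have hlt : B' < B := by
        refine lt_of_le_of_ne hB'B ?_
        intro h
        apply hb1'
        rw [← h] at hb1
        obtain ⟨x, ⟨hx, _⟩, rfl⟩ := hb1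
        simpa [hu0] using hx
      have h1 := Submodule.finrank_lt_finrank_of_lt hlt
      have h2 := ih A' B' inferInstance inferInstance
        (fun h => hA0 (le_bot_iff.1 (h ▸ le_sup_left)))
        (fun h => hb0' (by rw [h] at hb0B'; simpa using hb0B')) (by omega)
      have h3 : A' * B' ≤ A * B := by
        rw [Submodule.mul_le]
        rintro m hm _ ⟨x, ⟨hx, ⟨y, hy, rfl⟩⟩, rfl⟩
        obtain ⟨p, hp, q, ⟨z, hz, rfl⟩, rfl⟩ := Submodule.mem_sup.1 hm
        simp only [LinearMap.mulLeft_apply]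
        have e : (p + u * z) * (u⁻¹ * (u * y)) = p * y + (u * y) * z := by field_simp
        rw [e]
        exact add_mem (Submodule.mul_mem_mul hp hy) (Submodule.mul_mem_mul hx hz)
      have h4 := Submodule.finrank_mono h3
      have h5 := Submodule.finrank_sup_add_finrank_inf_eq A uB
      have h6 : finrank E uB = finrank E B := hsc_rank u hu0 B
      have h7 : finrank E B' = finrank E I := hsc_rank _ (inv_ne_zero hu0) I
      simp only [A', I] at *
      omega

open Module in
theorem finrank_pow_ge {E L : Type*} [Field E] [IsAlgClosed E] [Field L] [Algebra E L]
    (V : Submodule E L) [FiniteDimensional E V] (b : ℕ) (hb : b + 1 ≤ finrank E V) (d : ℕ) :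
    b * d + 1 ≤ finrank E (V ^ d : Submodule E L) := by
  have hV0 : V ≠ ⊥ := by
    rintro rfl
    simp at hb
  induction d with
  | zero =>
    rw [pow_zero, Submodule.one_eq_span, finrank_span_singleton (K := E) one_ne_zero]
    simp
  | succ d ih =>
    have hVd0 : V ^ d ≠ ⊥ := by
      intro h
      rw [h] at ih
      simp at ih
    have hfin : FiniteDimensional E (V ^ d : Submodule E L) :=
      Module.Finite.iff_fg.2 ((Module.Finite.iff_fg.1 inferInstance).pow d)
    have := linCD _ (V ^ d) V inferInstance inferInstance hVd0 hV0 le_rfl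
    rw [pow_succ]
    have e : b * (d + 1) = b * d + b := by ring
    omega

/-- Points of finitely generated domains over an algebraically closed field. -/
theorem exists_point {E R : Type*} [Field E] [IsAlgClosed E] [CommRing R] [IsDomain R] [Algebra E R]
    [Algebra.FiniteType E R] (a : R) (ha : a ≠ 0) : ∃ ε : R →ₐ[E] E, ε a ≠ 0 := by
  let S := Localization.Away a
  have hS : Nontrivial S := by
    rw [← not_subsingleton_iff_nontrivial]
    intro h
    replace h := (IsLocalization.subsingleton_iff (S := S) (M := Submonoid.powers a)).1 h
    obtain ⟨n, hn⟩ := h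
    exact pow_ne_zero n ha hn
  have hft : Algebra.FiniteType R S := IsLocalization.finiteType_of_monoid_fg (Submonoid.powers a) S
  have hft' : Algebra.FiniteType E S := Algebra.FiniteType.trans (S := R) inferInstance hft
  obtain ⟨m, hm⟩ := Ideal.exists_maximal S
  let k := S ⧸ m
  let _ : Field k := Ideal.Quotient.field m
  have hftk : Algebra.FiniteType E k :=
    Algebra.FiniteType.of_surjective (Ideal.Quotient.mkₐ E m) (Ideal.Quotient.mkₐ_surjective E m)
  have : Module.Finite E k := finite_of_finite_type_of_isJacobsonRing E k
  have hbij := IsAlgClosed.algebraMap_bijective_of_isIntegral (k := E) (K := k)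
  let e : E ≃ₐ[E] k := AlgEquiv.ofBijective (Algebra.ofId E k) hbij
  refine ⟨(e.symm : k →ₐ[E] E).comp ((Ideal.Quotient.mkₐ E m).comp
    (IsScalarTower.toAlgHom E R S)), ?_⟩
  have hu : IsUnit (algebraMap R S a) := IsLocalization.Away.algebraMap_isUnit a
  exact (hu.map ((e.symm : k →ₐ[E] E).comp (Ideal.Quotient.mkₐ E m))).ne_zero

open MvPolynomial

/-- Existence of a place. -/
theorem exists_place {B F k' : Type*} [CommRing B] [Field F] [CommRing k'] [IsDomain k']
    (φ : B →+* F) (ψ : B →+* k') (h : ∀ b, ψ b ≠ 0 → φ b ≠ 0) :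
    ∃ V : ValuationSubring F, ∀ b, φ b ∈ V ∧ (ψ b = 0 ↔ φ b ∈ V.nonunits) := by
  let P := RingHom.ker ψ
  have hP : P.IsPrime := RingHom.ker_isPrime ψ
  let f : Localization.AtPrime P →+* F := IsLocalization.lift (M := P.primeCompl) (g := φ)
    (fun y => (h y.1 y.2).isUnit)
  obtain ⟨V, hV, hloc⟩ := IsLocalRing.exists_factor_valuationRing f
  have hf : ∀ b, f (algebraMap _ _ b) = φ b := fun b => IsLocalization.lift_eq _ _
  refine ⟨V, fun b => ⟨hf b ▸ hV _, ?_⟩⟩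
  have hfV : f (algebraMap _ _ b) ∈ V := hV _
  rw [← hf b, show f (algebraMap B _ b) = ((f.codRestrict V.toSubring hV (algebraMap B _ b) : V) : F) from rfl,
    V.coe_mem_nonunits_iff, IsLocalRing.mem_maximalIdeal, mem_nonunits_iff,
    ]
  have h1 : IsUnit (f.codRestrict V.toSubring hV (algebraMap B _ b)) ↔ IsUnit (algebraMap B (Localization.AtPrime P) b) :=
    ⟨fun hu => hloc.map_nonunit _ hu, fun hu => hu.map _⟩
  have h2 := IsLocalization.AtPrime.isUnit_to_map_iff (Localization.AtPrime P) P b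
  refine Iff.trans ?_ (not_congr (h1.trans h2)).symm
  change _ ↔ ¬ (b ∉ P)
  rw [not_not]; exact Iff.rfl

/-- `F/E` with `E` algebraically closed; linear disjointness of generic families. -/
theorem linDisj {E F ι κ : Type*} [Field E] [IsAlgClosed E] [Field F] [Algebra E F] [Fintype κ]
    (J : ι → F) (e : κ → F) (m : κ → F)
    (hJ : AlgebraicIndependent (Algebra.adjoin E (Set.range e)) J)
    (hm : ∀ k, IsAlgebraic (Algebra.adjoin E (Set.range J)) (m k))
    (hli : LinearIndependent E m) (h0 : ∑ k, e k * m k = 0) : e = 0 := by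
  classical
  by_contra hne
  obtain ⟨k0, hk0⟩ := Function.ne_iff.1 hne
  set A0 := Algebra.adjoin E (Set.range e) with hA0
  have hft : Algebra.FiniteType E A0 := 
    (Subalgebra.fg_iff_finiteType _).1 ⟨(Set.finite_range e).toFinset, by rw [Set.Finite.coe_toFinset]⟩
  let e' : κ → A0 := fun k => ⟨e k, Algebra.subset_adjoin ⟨k, rfl⟩⟩
  have he0 : e' k0 ≠ 0 := fun h => hk0 (congrArg Subtype.val h)
  obtain ⟨ε, hε⟩ := exists_point (E := E) (e' k0) he0
  let φ : MvPolynomial ι A0 →+* F := (aeval J : MvPolynomial ι A0 →ₐ[A0] F).toRingHom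
  let ψ : MvPolynomial ι A0 →+* MvPolynomial ι E := MvPolynomial.map ε.toRingHom
  have hφ : Function.Injective φ := hJ
  obtain ⟨V, hV⟩ := exists_place φ ψ (by
    intro b hb h
    apply hb
    rw [(map_eq_zero_iff φ hφ).1 h, map_zero])
  have hVE : ∀ x ∈ Algebra.adjoin E (Set.range J), x ∈ V ∧ (x ≠ 0 → x⁻¹ ∈ V) := by
    intro x hx
    rw [Algebra.adjoin_range_eq_range_aeval] at hx
    obtain ⟨p, rfl⟩ := hx
    have h1 : (aeval J p : F) = φ (MvPolynomial.map (algebraMap E A0) p) := by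
      change _ = aeval J _
      rw [MvPolynomial.aeval_map_algebraMap]
    have h2 : ψ (MvPolynomial.map (algebraMap E A0) p) = p := by
      change MvPolynomial.map _ _ = _
      rw [MvPolynomial.map_map]
      have : ε.toRingHom.comp (algebraMap E A0) = RingHom.id E := by
        ext x; simp
      rw [this, MvPolynomial.map_id]
    have h3 := hV (MvPolynomial.map (algebraMap E A0) p)
    rw [h2, ← h1] at h3
    refine ⟨h3.1, fun hne => ?_⟩
    by_contra hcon
    have := h3.2.2 (V.mem_nonunits_iff_or.2 (Or.inr hcon))
    apply hne
    change aeval J p = 0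
    rw [this, map_zero]
  have halg : ∀ x, IsAlgebraic (Algebra.adjoin E (Set.range J)) x → x ∈ V := by
    intro x hx
    obtain ⟨p, hp, hpx⟩ := hx
    have hlc : p.leadingCoeff ≠ 0 := by simpa using hp
    have hlc' : (p.leadingCoeff : F) ≠ 0 := fun h => hlc (Subtype.ext h)
    let S := Algebra.adjoin E (Set.range J)
    let ι' : S →+* V.toSubring := 
      (algebraMap S F).codRestrict V.toSubring (fun s => (hVE s.1 s.2).1)
    have hint : IsIntegral V.toSubring x := by
      let q := p.map ι'
      refine ⟨Polynomial.C ⟨_, (hVE _ p.leadingCoeff.2).2 hlc'⟩ * q, ?_, ?_⟩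
      · apply Polynomial.monic_C_mul_of_mul_leadingCoeff_eq_one
        have : q.leadingCoeff = ι' p.leadingCoeff := by
          apply Polynomial.leadingCoeff_map_of_leadingCoeff_ne_zero
          intro h
          exact hlc' (congrArg Subtype.val h)
        rw [this]
        apply Subtype.ext
        exact inv_mul_cancel₀ hlc'
      · rw [Polynomial.eval₂_mul]
        have : Polynomial.eval₂ (algebraMap V.toSubring F) x q = 0 := by
          rw [Polynomial.eval₂_map]
          exact hpx
        rw [this, mul_zero]
    have hfr : IsFractionRing V.toSubring F := inferInstanceAs (IsFractionRing V F)
    have := IsIntegrallyClosed.isIntegral_iff.1 hint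
    obtain ⟨y, rfl⟩ := this
    exact y.2
  have hS : IsDomain (Algebra.adjoin E (Set.range J)) := inferInstance
  let y : F := ∑ k, algebraMap E F (ε (e' k)) * m k
  have hEalg : ∀ z : E, IsAlgebraic (Algebra.adjoin E (Set.range J)) (algebraMap E F z) := fun z =>
    isAlgebraic_algebraMap (algebraMap E (Algebra.adjoin E (Set.range J)) z)
  have hyalg : IsAlgebraic (Algebra.adjoin E (Set.range J)) y := by
    refine Finset.sum_induction _ _ (fun _ _ => IsAlgebraic.add) isAlgebraic_zero ?_
    intro k _
    exact (hEalg _).mul (hm k)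
  have hynon : y ∈ V.nonunits := by
    have h1 : y = ∑ k, (algebraMap E F (ε (e' k)) - e k) * m k := by
      simp only [sub_mul, Finset.sum_sub_distrib, h0, sub_zero]
      rfl
    rw [h1]
    apply sum_mem
    intro k _
    have h2 : algebraMap E F (ε (e' k)) - e k ∈ V.nonunits := by
      have h3 := hV (C (algebraMap E A0 (ε (e' k)) - e' k))
      have h4 : φ (C (algebraMap E A0 (ε (e' k)) - e' k)) = algebraMap E F (ε (e' k)) - e k := by
        change aeval J _ = _
        rw [MvPolynomial.aeval_C]
        rfl
      rw [h4] at h3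
      apply h3.2.1
      change MvPolynomial.map _ _ = _
      rw [MvPolynomial.map_C]
      simp
    rw [V.mem_nonunits_iff, map_mul]
    exact mul_lt_one_of_lt_of_le h2 ((V.valuation_le_one_iff _).2 (halg _ (hm k)))
  have hy0 : y = 0 := by
    by_contra hy
    have := V.mem_nonunits_iff_or.1 hynon
    rcases this with h | h
    · exact hy h
    · exact h (halg _ hyalg.inv)
  have := Fintype.linearIndependent_iff.1 hli (fun k => ε (e' k)) (by
    simp only [Algebra.smul_def]; exact hy0) k0
  exact hε this

open MvPolynomial

section Mat
open IntermediateField.algebraAdjoinAdjoin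
variable (K : Type*) {F : Type*} [Field K] [Field F] [Algebra K F]

/-- the algebraic matroid -/
noncomputable abbrev aM : Matroid F := AlgebraicIndependent.matroid K F

/-- relative algebraic closure of a set -/
noncomputable def Ecl (S : Set F) : IntermediateField K F :=
  (algebraicClosure (IntermediateField.adjoin K S) F).restrictScalars K

theorem isAlg_adjoin_iff (S : Set F) (x : F) :
    IsAlgebraic (IntermediateField.adjoin K S) x ↔ IsAlgebraic (Algebra.adjoin K S) x :=
  (IsFractionRing.isAlgebraic_iff (Algebra.adjoin K S) (IntermediateField.adjoin K S) F).symm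

theorem mem_aMcl (S : Set F) (x : F) :
    x ∈ (aM K).closure S ↔ IsAlgebraic (Algebra.adjoin K S) x := by
  rw [AlgebraicIndependent.matroid_closure_eq]
  rfl

theorem mem_Ecl (S : Set F) (x : F) : x ∈ Ecl K S ↔ x ∈ (aM K).closure S := by
  rw [mem_aMcl, ← isAlg_adjoin_iff]
  exact mem_algebraicClosure_iff

instance [IsAlgClosed F] (S : Set F) : IsAlgClosed (Ecl K S) :=
  IsAlgClosure.isAlgClosed (R := IntermediateField.adjoin K S)
    (K := algebraicClosure (IntermediateField.adjoin K S) F)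

theorem adjoin_subset_closure (S : Set F) : (Algebra.adjoin K S : Set F) ⊆ (aM K).closure S := by
  intro x hx
  rw [mem_aMcl]
  exact isAlgebraic_algebraMap (⟨x, hx⟩ : Algebra.adjoin K S)

theorem algIndep_of_indep {B I T : Set F} (hB : (aM K).IsBasis B T) (hd : Disjoint B I)
    (hi : (aM K).Indep (B ∪ I)) (A0 : Subring F) (hA0 : (A0 : Set F) ⊆ (aM K).closure T) :
    AlgebraicIndependent A0 ((↑) : I → F) := by
  classical
  rw [AlgebraicIndependent.matroid_indep_iff] at hi
  have h1 : AlgebraicIndependent K (Sum.elim ((↑) : I → F) ((↑) : B → F)) := by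
    have e := (Equiv.Set.union hd).symm
    have h2 := hi.comp (fun x : I ⊕ B => (Equiv.Set.union hd).symm (Sum.swap x))
      ((Equiv.injective _).comp (Equiv.sumComm I B).injective)
    convert h2 using 1
    funext x
    rcases x with x | x <;> simp
  have h3 := (AlgebraicIndependent.sumElim_iff.1 h1).2
  rw [Subtype.range_coe] at h3
  have h4 := h3.extendScalars (Subalgebra.algebraicClosure (Algebra.adjoin K B) F)
  have hle : ∀ x : A0, (x : F) ∈ Subalgebra.algebraicClosure (Algebra.adjoin K B) F := by
    intro x
    have := hA0 x.2
    rw [← hB.closure_eq_closure, mem_aMcl] at this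
    exact this
  let g : A0 →+* Subalgebra.algebraicClosure (Algebra.adjoin K B) F :=
    (A0.subtype).codRestrict _ hle
  let _ : Algebra A0 (Subalgebra.algebraicClosure (Algebra.adjoin K B) F) := g.toAlgebra
  have : IsScalarTower A0 (Subalgebra.algebraicClosure (Algebra.adjoin K B) F) F :=
    IsScalarTower.of_algebraMap_eq (fun x => rfl)
  exact h4.restrictScalars (K := Subalgebra.algebraicClosure (Algebra.adjoin K B) F)
    (fun a b hab => Subtype.ext (congrArg (fun z : Subalgebra.algebraicClosure (Algebra.adjoin K B) F => (z : F)) hab))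

omit [Field F] in
/-- basis transfer when the relative rank does not drop -/
theorem exists_common_basis (M : Matroid F) (hE : M.E = Set.univ) (S T C : Set F) (hST : S ⊆ T) (s t δ : ℕ)
    (h1 : M.eRk S = s) (h2 : M.eRk (S ∪ C) = (s + δ : ℕ)) (h3 : M.eRk T = t)
    (h4 : M.eRk (T ∪ C) = (t + δ : ℕ)) :
    ∃ I B : Set F, C ⊆ M.closure (S ∪ I) ∧ M.IsBasis B T ∧ Disjoint B I ∧ M.Indep (B ∪ I) ∧ I.Finite := by
  obtain ⟨B0, hB0⟩ := M.exists_isBasis S (by simp [hE])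
  obtain ⟨B1, hB1, hB01⟩ := hB0.indep.subset_isBasis_of_subset
    (hB0.subset.trans Set.subset_union_left : B0 ⊆ S ∪ C) (by simp [hE])
  obtain ⟨B, hB⟩ := M.exists_isBasis T (by simp [hE])
  have e0 := hB0.encard_eq_eRk
  have e1 := hB1.encard_eq_eRk
  have e := hB.encard_eq_eRk
  rw [h1] at e0; rw [h2] at e1; rw [h3] at e
  have hI : (B1 \ B0).encard = δ := by
    have := Set.encard_sdiff_add_encard_of_subset hB01
    rw [e0, e1] at this
    have hfin : (B1 \ B0).encard ≠ ⊤ := by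
      intro h; rw [h] at this; simp at this; exact absurd this (by exact_mod_cast ENat.top_ne_natCast _)
    lift (B1 \ B0).encard to ℕ using hfin with n
    norm_cast at this ⊢
    omega
  have hC : C ⊆ M.closure (S ∪ (B1 \ B0)) := by
    refine Set.subset_union_right.trans (hB1.subset_closure.trans (M.closure_subset_closure ?_))
    intro x hx
    by_cases hx0 : x ∈ B0
    · exact Or.inl (hB0.subset hx0)
    · exact Or.inr ⟨hx, hx0⟩
  have hspan : M.eRk (T ∪ C) ≤ M.eRk (B ∪ (B1 \ B0)) := by
    rw [← M.eRk_closure_eq (B ∪ (B1 \ B0))]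
    apply M.eRk_mono
    have hT : T ⊆ M.closure (B ∪ (B1 \ B0)) :=
      hB.subset_closure.trans (M.closure_subset_closure Set.subset_union_left)
    refine Set.union_subset hT (hC.trans ?_)
    apply M.closure_subset_closure_of_subset_closure
    refine Set.union_subset (hST.trans hT) ?_
    exact Set.subset_union_right.trans (M.subset_closure _ (by simp [hE]))
  have hcard : (B ∪ (B1 \ B0)).encard ≤ M.eRk (B ∪ (B1 \ B0)) := by
    refine le_trans ?_ hspan
    rw [h4]
    refine (Set.encard_union_le _ _).trans ?_
    rw [e, hI]; exact_mod_cast le_rfl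
  have hfB : B.Finite := Set.finite_of_encard_eq_coe e
  have hfI : (B1 \ B0).Finite := Set.finite_of_encard_eq_coe hI
  refine ⟨B1 \ B0, B, hC, hB, ?_, ?_, hfI⟩
  · rw [Set.disjoint_iff_inter_eq_empty]
    have h5 := Set.encard_union_add_encard_inter B (B1 \ B0)
    have h6 : ((t + δ : ℕ) : ℕ∞) ≤ (B ∪ (B1 \ B0)).encard := by
      rw [← h4]; exact hspan.trans (M.eRk_le_encard _)
    rw [e, hI] at h5
    rw [← Set.encard_eq_zero]
    have hfu := (hfB.union hfI)
    have hfi := (hfB.inter_of_left (B1 \ B0))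
    rw [hfu.encard_eq_coe_toFinset_card] at h5 h6
    rw [hfi.encard_eq_coe_toFinset_card] at h5 ⊢
    norm_cast at h5 h6 ⊢
    omega
  · have hfu := (hfB.union hfI)
    rw [M.indep_iff_eRk_eq_encard_of_finite hfu]
    exact le_antisymm (M.eRk_le_encard _) hcard

theorem isAlg_of_range {R S : Type*} [CommRing R] [CommRing S] [Algebra R F] [Algebra S F]
    (hR : Function.Injective (algebraMap R F))
    (h : ∀ r : R, ∃ s : S, algebraMap S F s = algebraMap R F r) {x : F} (hx : IsAlgebraic R x) :
    IsAlgebraic S x := by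
  obtain ⟨p, hp, hpx⟩ := hx
  have h1 : p.map (algebraMap R F) ∈ Polynomial.lifts (algebraMap S F) := by
    rw [Polynomial.lifts_iff_coeff_lifts]
    intro n
    rw [Polynomial.coeff_map]
    exact h _
  obtain ⟨q, hq⟩ := (Polynomial.mem_lifts _).1 h1
  refine ⟨q, ?_, ?_⟩
  · rintro rfl
    rw [Polynomial.map_zero] at hq
    exact hp ((Polynomial.map_eq_zero_iff hR).1 hq.symm)
  · rw [Polynomial.aeval_def, ← Polynomial.eval_map, hq, Polynomial.eval_map]
    exact hpx

open Module in
theorem elim_core {E τ ι : Type*} [Field E] [IsAlgClosed E] [Algebra E F] [Fintype τ]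
    (f m : τ → F) (J : ι → F)
    (hm : ∀ k, IsAlgebraic (Algebra.adjoin E (Set.range J)) (m k))
    (hJ : ∀ e : τ → F, (∀ k, e k ∈ Submodule.span E (Set.range f)) →
      AlgebraicIndependent (Algebra.adjoin E (Set.range e)) J)
    (h0 : ∑ k, f k * m k = 0) :
    ∃ W : Finset τ, W.card + finrank E (Submodule.span E (Set.range m)) = Fintype.card τ ∧
      ∀ k, f k ∈ Submodule.span E (f '' W) := by
  classical
  obtain ⟨κ, a, ha, hspan, hli⟩ := exists_linearIndependent' E m
  have : Finite κ := Finite.of_injective a ha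
  have := Fintype.ofFinite κ
  have hc : ∀ k, ∃ c : κ → E, ∑ j, c j • m (a j) = m k := by
    intro k
    have : m k ∈ Submodule.span E (Set.range (m ∘ a)) := by
      rw [hspan]; exact Submodule.subset_span ⟨k, rfl⟩
    exact (Submodule.mem_span_range_iff_exists_fun E).1 this
  choose c hc using hc
  let W : Finset τ := (Finset.univ.image a)ᶜ
  have hcard : W.card + Fintype.card κ = Fintype.card τ := by
    have := Finset.card_compl_add_card (Finset.univ.image a)
    rwa [Finset.card_image_of_injective _ ha, Finset.card_univ] at this
  have hfr : finrank E (Submodule.span E (Set.range m)) = Fintype.card κ := by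
    rw [← hspan]; exact finrank_span_eq_card hli
  have hca : ∀ j j', c (a j) j' = if j' = j then 1 else 0 := by
    intro j j'
    have h1 : ∑ i, (c (a j) i - if i = j then 1 else 0) • (m ∘ a) i = 0 := by
      simp only [sub_smul, Finset.sum_sub_distrib, ite_smul, one_smul, zero_smul,
        Finset.sum_ite_eq', Finset.mem_univ, if_true]
      rw [sub_eq_zero]; exact hc (a j)
    have := Fintype.linearIndependent_iff.1 hli _ h1 j'
    exact sub_eq_zero.1 this
  -- combined coefficient
  let e : κ → F := fun j => ∑ k, c k j • f k
  have he0 : ∑ j, e j * (m ∘ a) j = 0 := by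
    rw [← h0]
    simp only [e, Finset.sum_mul]
    rw [Finset.sum_comm]
    refine Finset.sum_congr rfl fun k _ => ?_
    rw [← hc k, Finset.mul_sum]
    refine Finset.sum_congr rfl fun j _ => ?_
    simp only [Function.comp, Algebra.smul_def]; ring
  have hspanW : ∀ j, f (a j) - e j ∈ Submodule.span E (f '' W) := by
    intro j
    have h1 : e j = f (a j) + ∑ k ∈ W, c k j • f k := by
      simp only [e]
      rw [← Finset.sum_add_sum_compl (Finset.univ.image a)]
      congr 1
      rw [Finset.sum_image (fun x _ y _ h => ha h)]
      simp only [hca, ite_smul, one_smul, zero_smul]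
      simp
    rw [h1]
    have : f (a j) - (f (a j) + ∑ k ∈ W, c k j • f k) = - ∑ k ∈ W, c k j • f k := by ring
    rw [this]
    apply Submodule.neg_mem
    apply Submodule.sum_mem
    intro k hk
    exact Submodule.smul_mem _ _ (Submodule.subset_span ⟨k, hk, rfl⟩)
  have heq : e = 0 := by
    cases isEmpty_or_nonempty κ with
    | inl h => exact Subsingleton.elim _ _
    | inr h =>
      let b : τ → κ := Function.invFun a
      have hb : ∀ j, b (a j) = j := Function.leftInverse_invFun ha
      have h2 := hJ (fun k => e (b k)) (fun k => by
        apply Submodule.sum_mem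
        intro k' _
        exact Submodule.smul_mem _ _ (Submodule.subset_span ⟨k', rfl⟩))
      have h3 : Set.range (fun k => e (b k)) = Set.range e := by
        ext x; constructor
        · rintro ⟨k, rfl⟩; exact ⟨_, rfl⟩
        · rintro ⟨j, rfl⟩; exact ⟨a j, by simp [hb]⟩
      rw [h3] at h2
      exact linDisj J e (m ∘ a) h2 (fun j => hm (a j)) hli he0
  refine ⟨W, by omega, fun k => ?_⟩
  by_cases hk : k ∈ W
  · exact Submodule.subset_span ⟨k, hk, rfl⟩
  · simp only [W, Finset.mem_compl, not_not, Finset.mem_image, Finset.mem_univ, true_and] at hk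
    obtain ⟨j, rfl⟩ := hk
    have := hspanW j
    rwa [heq, Pi.zero_apply, sub_zero] at this

theorem adjoin_sub_aux (E : IntermediateField K F) (S I : Set F) (hS : ∀ y ∈ S, y ∈ E) (x : F)
    (hx : x ∈ Algebra.adjoin K (S ∪ I)) : x ∈ Algebra.adjoin E I := by
  induction hx using Algebra.adjoin_induction with
  | mem x hx =>
    rcases hx with hx | hx
    · exact (Algebra.adjoin E I).algebraMap_mem ⟨x, hS x hx⟩
    · exact Algebra.subset_adjoin hx
  | algebraMap r => exact (Algebra.adjoin E I).algebraMap_mem (algebraMap K E r)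
  | add x y _ _ hx hy => exact add_mem hx hy
  | mul x y _ _ hx hy => exact mul_mem hx hy

open Module in
/-- key rank drop -/
theorem K1' {τ : Type*} [Fintype τ] (S C : Set F) (f m : τ → F) (s t δ : ℕ)
    (h1 : (aM K).eRk S = s) (h2 : (aM K).eRk (S ∪ C) = (s + δ : ℕ))
    (h3 : (aM K).eRk (S ∪ Set.range f) = t)
    (h4 : (aM K).eRk (S ∪ Set.range f ∪ C) = (t + δ : ℕ))
    (hm : ∀ k, m k ∈ Algebra.adjoin K C)
    (E : IntermediateField K F) [IsAlgClosed E] (hE : ∀ x, x ∈ E ↔ x ∈ (aM K).closure S) (h0 : ∑ k, f k * m k = 0) :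
    t + finrank E (Submodule.span E (Set.range m)) ≤ s + Fintype.card τ := by
  classical
  obtain ⟨I, B, hC, hB, hd, hi, hfin⟩ := exists_common_basis (aM K) rfl S (S ∪ Set.range f) C
    Set.subset_union_left s t δ h1 h2 h3 h4
  have hmI : ∀ k, m k ∈ (aM K).closure (S ∪ I) := by
    intro k
    have := adjoin_subset_closure K C (hm k)
    exact (aM K).closure_subset_closure_of_subset_closure hC this
  have hES : ∀ T : Set F, S ⊆ T → ∀ y : E, (y : F) ∈ (aM K).closure T := fun T hT y =>
    (aM K).closure_subset_closure hT ((hE y).1 y.2)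
  have hspcl : ∀ (T : Set F) (U : Set F), S ⊆ T → U ⊆ (aM K).closure T →
      (Submodule.span E U : Set F) ⊆ (aM K).closure T := by
    intro T U hT hU
    have hle : ∀ x, x ∈ (aM K).closure T ↔ x ∈ Ecl K T := fun x => (mem_Ecl K T x).symm
    intro x hx
    induction hx using Submodule.span_induction with
    | mem x hx => exact hU hx
    | zero => exact (hle _).2 (zero_mem _)
    | add x y _ _ hx hy => exact (hle _).2 (add_mem ((hle _).1 hx) ((hle _).1 hy))
    | smul a x _ hx =>
      exact (hle _).2 (mul_mem ((hle _).1 (hES T hT a)) ((hle _).1 hx))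
  obtain ⟨W, hW, hfW⟩ := elim_core (E := E) f m ((↑) : I → F) (by
    intro k
    rw [Subtype.range_coe]
    refine isAlg_of_range (R := Algebra.adjoin K (S ∪ I)) Subtype.val_injective ?_
      ((mem_aMcl _ _ _).1 (hmI k))
    intro x
    have := adjoin_sub_aux K E S I (fun y hy => (hE y).2 ((aM K).mem_closure_of_mem hy)) x x.2
    exact ⟨⟨x, this⟩, rfl⟩) (by
    intro e he
    refine algIndep_of_indep K hB hd hi (Algebra.adjoin E (Set.range e)).toSubring ?_
    have h5 : Algebra.adjoin K ((E : Set F) ∪ Set.range e) ≤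
      (Ecl K (S ∪ Set.range f)).toSubalgebra := by
      apply Algebra.adjoin_le
      rintro y (hy | ⟨k, rfl⟩)
      · exact (mem_Ecl K _ y).2 (hES _ Set.subset_union_left ⟨y, hy⟩)
      · exact (mem_Ecl K _ _).2 (hspcl _ _ Set.subset_union_left
          (Set.subset_union_right.trans ((aM K).subset_closure _)) (he k))
    intro x hx
    rw [← mem_Ecl]
    refine h5 ?_
    replace hx : x ∈ Algebra.adjoin E (Set.range e) := hx
    induction hx using Algebra.adjoin_induction with
    | mem x hx => exact Algebra.subset_adjoin (Or.inr hx)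
    | algebraMap r => exact Algebra.subset_adjoin (Or.inl r.2)
    | add x y hx' hy' hx hy => exact add_mem hx hy
    | mul x y hx' hy' hx hy => exact mul_mem hx hy) h0
  have hle : (aM K).eRk (S ∪ Set.range f) ≤ (s + W.card : ℕ) := by
    have h6 : S ∪ Set.range f ⊆ (aM K).closure (S ∪ f '' W) := by
      refine Set.union_subset (Set.subset_union_left.trans ((aM K).subset_closure _)) ?_
      rintro _ ⟨k, rfl⟩
      exact hspcl _ _ Set.subset_union_left
        (Set.subset_union_right.trans ((aM K).subset_closure _)) (hfW k)
    refine ((aM K).eRk_mono h6).trans ?_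
    rw [(aM K).eRk_closure_eq]
    refine ((aM K).eRk_union_le_eRk_add_encard _ _).trans ?_
    rw [h1]
    push_cast
    gcongr
    refine (Set.encard_image_le _ _).trans ?_
    rw [Set.encard_coe_eq_coe_finsetCard]
  rw [h3] at hle
  have hle' : t ≤ s + W.card := by exact_mod_cast hle
  omega

open Module in
/-- key rank drop -/
theorem K1 [IsAlgClosed F] {τ : Type*} [Fintype τ] (S C : Set F) (f m : τ → F) (s t δ : ℕ)
    (h1 : (aM K).eRk S = s) (h2 : (aM K).eRk (S ∪ C) = (s + δ : ℕ))
    (h3 : (aM K).eRk (S ∪ Set.range f) = t)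
    (h4 : (aM K).eRk (S ∪ Set.range f ∪ C) = (t + δ : ℕ))
    (hm : ∀ k, m k ∈ Algebra.adjoin K C) (h0 : ∑ k, f k * m k = 0) :
    t + finrank (Ecl K S) (Submodule.span (Ecl K S) (Set.range m)) ≤ s + Fintype.card τ :=
  K1' K S C f m s t δ h1 h2 h3 h4 hm (Ecl K S) (mem_Ecl K S) h0
end Mat

open MvPolynomial

theorem arith_core (n b : ℕ) (hb : 2 ≤ b) (hbn : b ≤ n + 1) (d w ρ δ : ℕ → ℤ)
    (hd : ∀ j ≤ n, 1 ≤ d j ∧ d j ≤ d n) (h1 : ∀ j ≤ n, ρ (j + 1) ≤ ρ j + w j)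
    (h2 : ∀ j ≤ n, δ (j + 1) ≤ δ j)
    (h3 : ∀ j ≤ n, δ (j + 1) = δ j → ρ (j + 1) + (b * d j + 1) ≤ ρ j + w j)
    (h0 : ρ 0 ≤ (n + 1 - b) * (b + 1)) (hδ0 : δ 0 ≤ b + 1) (hδn : δ n ≤ 2)
    (hδ : 2 ≤ δ (n + 1)) :
    ρ (n + 1) + ∑ j ∈ Finset.range (n + 1), (d j + 1) + 1 ≤
      ∑ j ∈ Finset.range (n + 1), w j + 2 * n := by
  have hb' : (2 : ℤ) ≤ b := by exact_mod_cast hb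
  have hbn' : (b : ℤ) ≤ n + 1 := by exact_mod_cast hbn
  have inv : ∀ k ≤ n, ρ k + ∑ j ∈ Finset.range k, (d j + 1) + (b - 1) * k ≤
      ρ 0 + ∑ j ∈ Finset.range k, w j + (δ 0 - δ k) * (d n + b) := by
    intro k
    induction k with
    | zero => intro _; simp
    | succ k ih =>
      intro hk
      have ih := ih (by omega)
      have hd' := hd k (by omega)
      have h1' := h1 k (by omega)
      have h2' := h2 k (by omega)
      rw [Finset.sum_range_succ, Finset.sum_range_succ]
      push_cast
      by_cases he : δ (k + 1) = δ k
      · have h3' := h3 k (by omega) he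
        rw [he]
        nlinarith
      · have h4 : 1 ≤ δ k - δ (k + 1) := by omega
        nlinarith
  have hn := inv n le_rfl
  have e : δ (n + 1) = δ n := by have := h2 n le_rfl; omega
  have h3' := h3 n le_rfl e
  have hdn := hd n le_rfl
  rw [Finset.sum_range_succ, Finset.sum_range_succ]
  have hδn2 : δ n = 2 := by omega
  rw [hδn2] at hn
  have h5 : (δ 0 - 2) * (d n + b) ≤ (b - 1) * (d n + b) := by
    apply mul_le_mul_of_nonneg_right <;> omega
  nlinarith

/-- monomials of degree `d` in `r+1` variables -/
abbrev Mon (r d : ℕ) : Type := {α : Fin (r + 1) →₀ ℕ // α.degree = d}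

noncomputable instance (r d : ℕ) : Fintype (Mon r d) := by
  have : Finite (Mon r d) := by
    have h := Finsupp.finite_of_degree_le (σ := Fin (r + 1)) d
    exact (h.subset (fun α (hα : α.degree = d) => hα.le)).to_subtype
  exact Fintype.ofFinite _

/-- value of a monomial -/
noncomputable def mval {r : ℕ} {F : Type*} [CommSemiring F] (c : Fin (r + 1) → F)
    (α : Fin (r + 1) →₀ ℕ) : F := ∏ i, c i ^ α i

theorem mval_zero {r : ℕ} {F : Type*} [CommSemiring F] (c : Fin (r + 1) → F) : mval c 0 = 1 := by
  simp [mval]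

theorem mval_add {r : ℕ} {F : Type*} [CommSemiring F] (c : Fin (r + 1) → F) (α β) :
    mval c (α + β) = mval c α * mval c β := by
  simp [mval, pow_add, Finset.prod_mul_distrib]

theorem mval_single {r : ℕ} {F : Type*} [CommSemiring F] (c : Fin (r + 1) → F) (i) :
    mval c (Finsupp.single i 1) = c i := by
  classical
  rw [mval, Finset.prod_eq_single i]
  · simp
  · intro j _ hj; simp [hj.symm]
  · simp

theorem span_pow_le {r : ℕ} {E F : Type*} [Field E] [Field F] [Algebra E F] (c : Fin (r + 1) → F)
    (d : ℕ) : (Submodule.span E (Set.range c)) ^ d ≤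
      Submodule.span E (Set.range (fun α : Mon r d => mval c α.1)) := by
  induction d with
  | zero =>
    rw [pow_zero, Submodule.one_eq_span, Submodule.span_le]
    rintro _ rfl
    exact Submodule.subset_span ⟨⟨0, by simp⟩, mval_zero c⟩
  | succ d ih =>
    rw [pow_succ]
    refine (mul_le_mul' ih le_rfl).trans ?_
    rw [Submodule.span_mul_span, Submodule.span_le]
    rintro _ ⟨_, ⟨α, rfl⟩, _, ⟨i, rfl⟩, rfl⟩
    refine Submodule.subset_span ⟨⟨α.1 + Finsupp.single i 1, by simp [α.2]⟩, ?_⟩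
    simp [mval_add, mval_single]

theorem mval_mem_adjoin {r : ℕ} {K F : Type*} [Field K] [Field F] [Algebra K F] (c : Fin (r + 1) → F) (α) :
    mval c α ∈ Algebra.adjoin K (Set.range c) :=
  Subalgebra.prod_mem _ fun i _ => Subalgebra.pow_mem _ (Algebra.subset_adjoin (Set.mem_range_self i)) _

theorem li_of_le {K F κ : Type*} [Field K] [Field F] [Algebra K F] [Fintype κ]
    (E E' : IntermediateField K F) (h : E ≤ E') (v : κ → F) (hv : LinearIndependent E' v) :
    LinearIndependent E v := by
  rw [Fintype.linearIndependent_iff] at hv ⊢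
  intro z hz k
  have h2 : ∑ i, (⟨z i, h (z i).2⟩ : E') • v i = 0 := by
    rw [← hz]; exact Finset.sum_congr rfl fun i _ => by rw [IntermediateField.smul_def, IntermediateField.smul_def]
  have := hv _ h2 k
  exact Subtype.ext (congrArg (fun x : E' => (x : F)) this)

open Module in
/-- rank bound -/
theorem rank_bound {K F : Type*} [Field K] [Field F] [Algebra K F] [IsAlgClosed F] (n b : ℕ)
    (hb : 2 ≤ b)
    (d : Fin (n + 1) → ℕ) (hd1 : ∀ i, 1 ≤ d i) (hmono : Monotone d) (c : Fin (n + 1 + 1) → F)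
    (f : (i : Fin (n + 1)) → Mon (n + 1) (d i) → F)
    (hf0 : ∀ i, ∑ α, f i α * mval c α.1 = 0)
    (T : Set F) (hT : T = ⋃ i, Set.range (f i))
    (hlast : (aM K).eRk T + 2 ≤ (aM K).eRk (T ∪ Set.range c)) (l1 l2 : F)
    (hK2 : Set.range c ⊆ (aM K).closure ((⋃ i : Fin n, Set.range (f i.castSucc)) ∪ {l1, l2}))
    (hrk : finrank (Ecl K T) (Submodule.span (Ecl K T) (Set.range c)) = b + 1) :
    (aM K).eRk T + ((∑ i, (d i + 1) + 1 : ℕ) : ℕ∞) ≤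
      ((∑ i, Fintype.card (Mon (n + 1) (d i)) + 2 * n : ℕ) : ℕ∞) := by
  classical
  set M := aM K (F := F) with hM
  obtain ⟨κ, a, ha, hspan, hli⟩ := exists_linearIndependent' (Ecl K T) c
  have : Finite κ := Finite.of_injective a ha
  have := Fintype.ofFinite κ
  have hcard : Fintype.card κ = b + 1 := by
    rw [← hrk, ← hspan]; exact (finrank_span_eq_card hli).symm
  have hc : ∀ k, ∃ g : κ → Ecl K T, ∑ j, g j • c (a j) = c k := by
    intro k
    have : c k ∈ Submodule.span (Ecl K T) (Set.range (c ∘ a)) := by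
      rw [hspan]; exact Submodule.subset_span ⟨k, rfl⟩
    exact (Submodule.mem_span_range_iff_exists_fun _).1 this
  choose g hg using hc
  have hbn : b ≤ n + 1 := by
    have := Fintype.card_le_of_injective a ha
    rw [hcard, Fintype.card_fin] at this
    omega
  let Λ : Set F := (fun p : Fin (n + 1 + 1) × κ => (g p.1 p.2 : F)) ''
    (((Finset.univ.image a)ᶜ ×ˢ Finset.univ : Finset (Fin (n + 1 + 1) × κ)) : Set _)
  have hΛcard : Λ.encard ≤ (((n + 1 - b) * (b + 1) : ℕ) : ℕ∞) := by
    refine (Set.encard_image_le _ _).trans ?_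
    rw [Set.encard_coe_eq_coe_finsetCard, Finset.card_product, Finset.card_compl,
      Finset.card_image_of_injective _ ha, Finset.card_univ, hcard,
      Fintype.card_fin]
    have : n + 1 + 1 - (b + 1) = n + 1 - b := by omega
    rw [this]
  have hΛT : Λ ⊆ M.closure T := by
    rintro _ ⟨p, _, rfl⟩
    exact (mem_Ecl K T _).1 (g p.1 p.2).2
  let S : ℕ → Set F := fun j => Λ ∪ ⋃ i : Fin (n + 1), ⋃ _ : i.1 < j, Set.range (f i)
  have hS1 : ∀ j : Fin (n + 1), S (j.1 + 1) = S j.1 ∪ Set.range (f j) := by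
    intro j
    simp only [S, Set.union_assoc]
    congr 1
    ext x
    simp only [Set.mem_iUnion, Set.mem_union]
    constructor
    · rintro ⟨i, hi, hx⟩
      rcases Nat.lt_succ_iff_lt_or_eq.1 hi with h | h
      · exact Or.inl ⟨i, h, hx⟩
      · have : i = j := Fin.ext h
        subst this; exact Or.inr hx
    · rintro (⟨i, hi, hx⟩ | hx)
      · exact ⟨i, by omega, hx⟩
      · exact ⟨j, by omega, hx⟩
  have hST : ∀ j, S j ⊆ M.closure T := by
    intro j
    refine Set.union_subset hΛT ?_
    refine Set.iUnion_subset fun i => Set.iUnion_subset fun _ => ?_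
    refine subset_trans ?_ (M.subset_closure T)
    rw [hT]; exact Set.subset_iUnion (fun i => Set.range (f i)) i
  have hSfin : ∀ j, (S j).Finite := by
    intro j
    refine (Set.Finite.image _ (Finset.finite_toSet _)).union ?_
    refine Set.finite_iUnion fun i => Set.finite_iUnion fun _ => Set.finite_range _
  have hrkfin : ∀ U : Set F, U.Finite → ∃ k : ℕ, M.eRk U = k := by
    intro U hU
    have h1 : M.eRk U ≠ ⊤ := ne_top_of_le_ne_top hU.encard_lt_top.ne (M.eRk_le_encard U)
    exact ⟨_, (ENat.natCast_toNat h1).symm⟩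
  have hSr : ∀ j, ∃ k : ℕ, M.eRk (S j) = k := fun j => hrkfin _ (hSfin j)
  have hSc : ∀ j, ∃ k : ℕ, M.eRk (S j ∪ Set.range c) = k := fun j =>
    hrkfin _ ((hSfin j).union (Set.finite_range c))
  choose ρ hρ using hSr
  choose γ hγ using hSc
  have hTr : M.eRk T = ρ (n + 1) := by
    rw [← hρ]
    apply le_antisymm
    · apply M.eRk_mono
      rw [hT]
      refine Set.iUnion_subset fun i => ?_
      refine subset_trans ?_ Set.subset_union_right
      intro x hx
      simp only [Set.mem_iUnion]
      exact ⟨i, i.2, hx⟩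
    · rw [← M.eRk_closure_eq T]; exact M.eRk_mono (hST _)
  let dd : ℕ → ℤ := fun j => if h : j < n + 1 then d ⟨j, h⟩ else 0
  let ww : ℕ → ℤ := fun j => if h : j < n + 1 then Fintype.card (Mon (n + 1) (d ⟨j, h⟩)) else 0
  have hmono1 : ∀ j ≤ n, S j ⊆ S (j + 1) := by
    intro j hj
    rw [hS1 ⟨j, by omega⟩]; exact Set.subset_union_left
  have hsub : ∀ j ≤ n, γ (j + 1) + ρ j ≤ γ j + ρ (j + 1) := by
    intro j hj
    have h1 := M.eRk_inter_add_eRk_union_le (S j ∪ Set.range c) (S (j + 1))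
    have h2 : M.eRk (S j) ≤ M.eRk ((S j ∪ Set.range c) ∩ S (j + 1)) :=
      M.eRk_mono (Set.subset_inter Set.subset_union_left (hmono1 j hj))
    have h3 : M.eRk (S (j + 1) ∪ Set.range c) ≤ M.eRk ((S j ∪ Set.range c) ∪ S (j + 1)) := by
      apply M.eRk_mono
      rintro x (hx | hx)
      · exact Or.inr hx
      · exact Or.inl (Or.inr hx)
    have h4 := (add_le_add h2 h3).trans h1
    rw [hρ, hγ, hγ, hρ] at h4
    have : ρ j + γ (j + 1) ≤ γ j + ρ (j + 1) := by exact_mod_cast h4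
    omega
  have hργ : ∀ j, ρ j ≤ γ j := by
    intro j
    have : M.eRk (S j) ≤ M.eRk (S j ∪ Set.range c) := M.eRk_mono Set.subset_union_left
    rw [hρ, hγ] at this
    exact_mod_cast this
  have key := arith_core n b hb hbn dd ww (fun j => ρ j) (fun j => (γ j : ℤ) - ρ j) ?_ ?_ ?_ ?_ ?_ ?_ ?_ ?_
  · rw [hTr]
    have e1 : ∑ j ∈ Finset.range (n + 1), (dd j + 1) = ((∑ i, (d i + 1) : ℕ) : ℤ) := by
      rw [Finset.sum_range]; push_cast
      refine Finset.sum_congr rfl fun i _ => ?_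
      simp only [dd, i.2, dif_pos]
    have e2 : ∑ j ∈ Finset.range (n + 1), ww j = ((∑ i, Fintype.card (Mon (n + 1) (d i)) : ℕ) : ℤ) := by
      rw [Finset.sum_range]; push_cast
      refine Finset.sum_congr rfl fun i _ => ?_
      simp only [ww, i.2, dif_pos]
    rw [e1, e2] at key
    have : ρ (n + 1) + (∑ i, (d i + 1) + 1) ≤ ∑ i, Fintype.card (Mon (n + 1) (d i)) + 2 * n := by
      zify; push_cast at key ⊢; linarith
    exact_mod_cast this
  · intro j hj
    have h1 : j < n + 1 := by omega
    have h2 : n < n + 1 := by omega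
    simp only [dd, h1, h2, dif_pos]
    exact ⟨by exact_mod_cast hd1 _, by exact_mod_cast hmono (Fin.mk_le_mk.2 hj)⟩
  · intro j hj
    have h1 : j < n + 1 := by omega
    simp only [ww, h1, dif_pos]
    have h2 := M.eRk_union_le_eRk_add_encard (S j) (Set.range (f ⟨j, h1⟩))
    have h3 : (Set.range (f ⟨j, h1⟩)).encard ≤ (Fintype.card (Mon (n + 1) (d ⟨j, h1⟩)) : ℕ∞) := by
      rw [← Set.image_univ]
      refine (Set.encard_image_le _ _).trans ?_
      rw [Set.encard_univ, ENat.card_eq_coe_fintype_card]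
    have h4 := h2.trans (add_le_add_right h3 _)
    rw [← hS1 ⟨j, h1⟩, hρ, hρ] at h4
    exact_mod_cast h4
  · intro j hj
    have := hsub j hj
    omega
  · intro j hj he
    have h1 : j < n + 1 := by omega
    simp only [dd, ww, h1, dif_pos]
    have hj1 := hργ j
    have hj2 := hργ (j + 1)
    have k1 := K1 K (S j) (Set.range c) (f ⟨j, h1⟩) (fun α => mval c α.1) (ρ j) (ρ (j + 1))
      (γ j - ρ j) (hρ j) (by rw [← hM, hγ]; congr 1; omega) (by rw [← hM, ← hS1 ⟨j, h1⟩, hρ])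
      (by rw [← hM, ← hS1 ⟨j, h1⟩, hγ]; simp only; congr 1; omega) (fun α => mval_mem_adjoin c _) (hf0 _)
    have hle : Ecl K (S j) ≤ Ecl K T := by
      intro x hx
      rw [mem_Ecl] at hx ⊢
      exact M.closure_subset_closure_of_subset_closure (hST j) hx
    have hli' : LinearIndependent (Ecl K (S j)) (c ∘ a) := li_of_le _ _ hle _ hli
    have : FiniteDimensional (Ecl K (S j)) (Submodule.span (Ecl K (S j)) (Set.range c)) :=
      FiniteDimensional.span_of_finite _ (Set.finite_range c)
    have h5 : b + 1 ≤ finrank (Ecl K (S j)) (Submodule.span (Ecl K (S j)) (Set.range c)) := by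
      rw [← hcard, ← finrank_span_eq_card hli']
      apply Submodule.finrank_mono
      apply Submodule.span_mono
      exact Set.range_comp_subset_range a c
    have h6 := finrank_pow_ge _ b h5 (d ⟨j, h1⟩)
    have : FiniteDimensional (Ecl K (S j)) (Submodule.span (Ecl K (S j))
        (Set.range (fun α : Mon (n + 1) (d ⟨j, h1⟩) => mval c α.1))) :=
      FiniteDimensional.span_of_finite _ (Set.finite_range _)
    have h7 := Submodule.finrank_mono (span_pow_le (E := Ecl K (S j)) c (d ⟨j, h1⟩))
    have h8 := h6.trans h7
    have h9 : ρ (j + 1) + (b * d ⟨j, h1⟩ + 1) ≤ ρ j + Fintype.card (Mon (n + 1) (d ⟨j, h1⟩)) := by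
      omega
    exact_mod_cast h9
  · have h1 : S 0 = Λ := by simp [S]
    have h2 := (M.eRk_le_encard (S 0))
    rw [hρ, h1] at h2
    have h3 : ρ 0 ≤ (n + 1 - b) * (b + 1) := by exact_mod_cast h2.trans hΛcard
    zify [hbn] at h3
    exact_mod_cast h3
  · have h1 : S 0 = Λ := by simp [S]
    have h2 : S 0 ∪ Set.range c ⊆ M.closure (S 0 ∪ Set.range (c ∘ a)) := by
      refine Set.union_subset (Set.subset_union_left.trans (M.subset_closure _)) ?_
      rintro _ ⟨k, rfl⟩
      by_cases hk : k ∈ Finset.univ.image a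
      · obtain ⟨j, _, rfl⟩ := Finset.mem_image.1 hk
        exact M.subset_closure _ (by simp [hM]) (Or.inr ⟨j, rfl⟩)
      · rw [← hg k, ← mem_Ecl]
        refine sum_mem fun j _ => ?_
        refine mul_mem ((mem_Ecl _ _ _).2 ?_) ((mem_Ecl _ _ _).2 ?_)
        · apply M.subset_closure _ (by simp [hM])
          left; rw [h1]
          refine ⟨(k, j), ?_, rfl⟩
          simp only [Finset.coe_product, Set.mem_prod]
          exact ⟨by simpa using hk, by simp⟩
        · exact M.subset_closure _ (by simp [hM]) (Or.inr ⟨j, rfl⟩)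
    have h3 := M.eRk_mono h2
    rw [M.eRk_closure_eq, hγ] at h3
    have h4 := h3.trans (M.eRk_union_le_eRk_add_encard _ _)
    rw [hρ] at h4
    have h5 : (Set.range (c ∘ a)).encard ≤ ((b + 1 : ℕ) : ℕ∞) := by
      rw [← Set.image_univ]
      refine (Set.encard_image_le _ _).trans ?_
      rw [Set.encard_univ, ENat.card_eq_coe_fintype_card, hcard]
    have h6 := h4.trans (add_le_add_right h5 _)
    have h7 : γ 0 ≤ ρ 0 + (b + 1) := by exact_mod_cast h6
    omega
  · have h2 : S n ∪ Set.range c ⊆ M.closure (S n ∪ {l1, l2}) := by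
      refine Set.union_subset (Set.subset_union_left.trans (M.subset_closure _)) ?_
      refine hK2.trans (M.closure_subset_closure ?_)
      refine Set.union_subset_union_left _ ?_
      refine subset_trans ?_ Set.subset_union_right
      intro x hx
      simp only [Set.mem_iUnion] at hx ⊢
      obtain ⟨i, hx⟩ := hx
      exact ⟨i.castSucc, i.2, hx⟩
    have h3 := M.eRk_mono h2
    rw [M.eRk_closure_eq, hγ] at h3
    have h4 := h3.trans (M.eRk_union_le_eRk_add_encard _ _)
    rw [hρ] at h4
    have h5 : ({l1, l2} : Set F).encard ≤ ((2 : ℕ) : ℕ∞) := by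
      refine (Set.encard_insert_le _ _).trans ?_
      rw [Set.encard_singleton]; norm_num
    have h6 := h4.trans (add_le_add_right h5 _)
    have h7 : γ n ≤ ρ n + 2 := by exact_mod_cast h6
    omega
  · have h1 : T ∪ Set.range c ⊆ S (n + 1) ∪ Set.range c := by
      refine Set.union_subset_union_left _ ?_
      rw [hT]
      refine Set.iUnion_subset fun i => ?_
      refine subset_trans ?_ Set.subset_union_right
      intro x hx
      simp only [Set.mem_iUnion]
      exact ⟨i, i.2, hx⟩
    have h2 := hlast.trans (M.eRk_mono h1)
    rw [hγ, hTr] at h2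
    have h7 : ρ (n + 1) + 2 ≤ γ (n + 1) := by exact_mod_cast h2
    omega

section P5
open MvPolynomial

attribute [local instance] MvPolynomial.gradedAlgebra

theorem irr_le_iff {r : ℕ} {κ : Type*} [Field κ] (P : Ideal (MvPolynomial (Fin (r + 1)) κ))
    (hP : P ≠ ⊤) (h : ∀ i, (X i : MvPolynomial (Fin (r + 1)) κ) ∈ P) :
    ∀ p, p ∈ P ↔ coeff 0 p = 0 := by
  have h1 : ∀ p : MvPolynomial (Fin (r + 1)) κ, p - C (coeff 0 p) ∈ P := by
    intro p
    induction p using MvPolynomial.induction_on with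
    | C a => simp
    | add p q hp hq =>
      have := P.add_mem hp hq
      simp only [coeff_add, map_add]; convert this using 1; ring
    | mul_X p i hp => simpa [← constantCoeff_eq] using P.mul_mem_left p (h i)
  intro p
  constructor
  · intro hp
    by_contra h0
    apply hP
    have : C (coeff 0 p) ∈ P := by
      have := P.sub_mem hp (h1 p); simpa using this
    exact P.eq_top_of_isUnit_mem this ((isUnit_iff_ne_zero.2 h0).map C)
  · intro h0; simpa [h0] using h1 p

theorem normA_base {r : ℕ} {κ : Type*} [Field κ] (I : Ideal (MvPolynomial (Fin (r + 1)) κ))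
    (hI : I.IsHomogeneous (homogeneousSubmodule (Fin (r + 1)) κ))
    (hd : ringKrullDim (MvPolynomial (Fin (r + 1)) κ ⧸ I) ≤ 0) :
    ∃ N, ∀ α : Fin (r + 1) →₀ ℕ, α.degree = N → monomial α 1 ∈ I := by
  classical
  have hx : ∀ i, (X i : MvPolynomial (Fin (r + 1)) κ) ∈ I.radical := by
    intro i
    rw [Ideal.radical_eq_sInf, Ideal.mem_sInf]
    rintro P ⟨hIP, hP⟩
    let Q := (P.homogeneousCore (homogeneousSubmodule (Fin (r + 1)) κ)).toIdeal
    have hQ : Q.IsPrime := Ideal.IsPrime.homogeneousCore hP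
    have hQP : Q ≤ P := Ideal.toIdeal_homogeneousCore_le _ _
    have hIQ : I ≤ Q := by
      rw [← hI.toIdeal_homogeneousCore_eq_self]
      exact Ideal.homogeneousCore_mono _ hIP
    have hQh : Q.IsHomogeneous (homogeneousSubmodule (Fin (r + 1)) κ) := HomogeneousIdeal.isHomogeneous _
    let 𝔪 : Ideal (MvPolynomial (Fin (r + 1)) κ) := RingHom.ker (constantCoeff (σ := Fin (r+1)) (R := κ))
    have h𝔪 : 𝔪.IsPrime := RingHom.ker_isPrime _
    have hQm : Q ≤ 𝔪 := by
      intro p hp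
      rw [RingHom.mem_ker, constantCoeff_eq]
      by_contra h0
      have := homogeneousComponent_mem_of_mem hQh hp 0
      rw [homogeneousComponent_zero] at this
      exact hQ.ne_top (Q.eq_top_of_isUnit_mem this ((isUnit_iff_ne_zero.2 h0).map C))
    have hQeq : Q = 𝔪 := by
      by_contra hne
      rw [ringKrullDim_quotient] at hd
      let a : PrimeSpectrum.zeroLocus (I : Set (MvPolynomial (Fin (r + 1)) κ)) := ⟨⟨Q, hQ⟩, hIQ⟩
      let b : PrimeSpectrum.zeroLocus (I : Set (MvPolynomial (Fin (r + 1)) κ)) := ⟨⟨𝔪, h𝔪⟩, hIQ.trans hQm⟩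
      have hab : a < b := lt_of_le_of_ne (show Q ≤ 𝔪 from hQm) (by
        intro h; exact hne (congrArg (fun x => x.1.asIdeal) h))
      have := (Order.one_le_krullDim_iff.2 ⟨a, b, hab⟩).trans hd
      exact absurd this (by decide)
    apply hQP
    rw [hQeq, RingHom.mem_ker]; simp
  obtain ⟨N, hN⟩ := Ideal.exists_pow_le_of_le_radical_of_fg
    (I := Ideal.span (Set.range (X : Fin (r+1) → MvPolynomial (Fin (r + 1)) κ)))
    (J := I) (by rw [Ideal.span_le]; rintro _ ⟨i, rfl⟩; exact hx i) (IsNoetherian.noetherian _)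
  refine ⟨N, fun α hα => hN ?_⟩
  rw [monomial_eq, C_1, one_mul, ← hα, Finsupp.degree_eq_sum, Finsupp.prod_fintype _ _ (by simp),
    ← Finset.prod_pow_eq_pow_sum]
  exact Ideal.prod_mem_prod fun i _ => Ideal.pow_mem_pow (Ideal.subset_span (Set.mem_range_self i)) _

/-- linear form -/
noncomputable def lin {r : ℕ} {R : Type*} [CommSemiring R] (v : Fin (r + 1) → R) :
    MvPolynomial (Fin (r + 1)) R := ∑ i, C (v i) * X i

theorem lin_hom {r : ℕ} {R : Type*} [CommSemiring R] (v : Fin (r + 1) → R) :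
    (lin v).IsHomogeneous 1 := by
  refine IsHomogeneous.sum _ _ _ fun i _ => ?_
  simpa using (isHomogeneous_C _ (v i)).mul (isHomogeneous_X R i)

theorem lin_map {r : ℕ} {R S : Type*} [CommSemiring R] [CommSemiring S] (φ : R →+* S) (v : Fin (r + 1) → R) :
    MvPolynomial.map φ (lin v) = lin (fun i => φ (v i)) := by
  simp [lin]

theorem dim_step {R : Type*} [CommRing R] (I : Ideal R) (l : R) (m : ℕ) 
    (hl : ∀ P ∈ I.minimalPrimes, l ∈ P → P.IsMaximal)
    (hd : ringKrullDim (R ⧸ I) ≤ (m + 1 : ℕ)) : ringKrullDim (R ⧸ (I ⊔ Ideal.span {l})) ≤ m := by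
  rw [ringKrullDim_quotient] at hd ⊢
  refine iSup_le fun p => ?_
  obtain ⟨P, hPm, hP⟩ := Ideal.exists_minimalPrimes_le (I := I) (J := p.head.1.asIdeal)
    (le_sup_left.trans p.head.2)
  have hlp : l ∈ p.head.1.asIdeal := p.head.2 (Ideal.mem_sup_right (Ideal.mem_span_singleton_self l))
  by_cases h : l ∈ P
  · have hmax := hl P hPm h
    have : p.length = 0 := by
      by_contra h0
      have h1 : p 0 < p (Fin.last _) := p.strictMono (by
        rw [Fin.lt_def]; simp; omega)
      have h2 : P < (p (Fin.last _)).1.asIdeal := lt_of_le_of_lt hP h1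
      exact (p (Fin.last _)).1.isPrime.ne_top (hmax.1.2 _ h2)
    simp [this]
  · let f : PrimeSpectrum.zeroLocus ((I ⊔ Ideal.span {l} : Ideal R) : Set R) → PrimeSpectrum.zeroLocus (I : Set R) :=
      fun q => ⟨q.1, (SetLike.coe_subset_coe.2 le_sup_left).trans q.2⟩
    have hf : StrictMono f := fun a b hab => hab
    let q : LTSeries (PrimeSpectrum.zeroLocus (I : Set R)) := (p.map f hf)
    let q' := q.cons ⟨⟨P, hPm.1.1⟩, hPm.1.2⟩ (by
      refine lt_of_le_of_ne (show P ≤ p.head.1.asIdeal from hP) ?_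
      intro h'
      have : P = p.head.1.asIdeal := h'
      exact h (this ▸ hlp))
    have := (Order.LTSeries.length_le_krullDim q').trans hd
    have h2 : q'.length = p.length + 1 := RelSeries.cons_length _ _ _
    rw [h2] at this
    have h3 : p.length + 1 ≤ m + 1 := by exact_mod_cast this
    have : p.length ≤ m := by omega
    exact_mod_cast this

theorem normA {r : ℕ} {K κ : Type*} [Field K] [Infinite K] [Field κ] [Algebra K κ] (m : ℕ) :
    ∀ I : Ideal (MvPolynomial (Fin (r + 1)) κ), I.IsHomogeneous (homogeneousSubmodule (Fin (r + 1)) κ) →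
      ringKrullDim (MvPolynomial (Fin (r + 1)) κ ⧸ I) ≤ m →
      ∃ (l : Fin m → Fin (r + 1) → K) (N : ℕ), ∀ α : Fin (r + 1) →₀ ℕ, α.degree = N →
        monomial α 1 ∈ I ⊔ Ideal.span (Set.range fun j => lin (fun i => algebraMap K κ (l j i))) := by
  induction m with
  | zero =>
    intro I hI hd
    obtain ⟨N, hN⟩ := normA_base I hI (by simpa using hd)
    exact ⟨Fin.elim0, N, fun α hα => Ideal.mem_sup_left (hN α hα)⟩
  | succ m ih =>
    intro I hI hd
    let Lf : (Fin (r + 1) → K) →ₗ[K] MvPolynomial (Fin (r + 1)) κ :=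
      { toFun := fun v => lin (fun i => algebraMap K κ (v i))
        map_add' := by intro v w; simp [lin, add_mul, Finset.sum_add_distrib]
        map_smul' := by
          intro a v
          simp only [lin, Pi.smul_apply, smul_eq_mul, map_mul, Finset.smul_sum, RingHom.id_apply, mul_assoc]
          refine Finset.sum_congr rfl fun i _ => ?_
          rw [Algebra.smul_def]; rfl }
    have hfin : (I.minimalPrimes).Finite := Ideal.finite_minimalPrimes_of_isNoetherianRing _ I
    have hfin2 : (I.minimalPrimes \ {P | P.IsMaximal}).Finite := hfin.subset Set.sdiff_subset
    let s : Finset (Subspace K (Fin (r + 1) → K)) := by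
      classical
      exact hfin2.toFinset.image (fun P => (P.restrictScalars K).comap Lf)
    have hs : ⊤ ∉ s := by
      classical
      intro h
      obtain ⟨P, hP, hPt⟩ := Finset.mem_image.1 h
      rw [Set.Finite.mem_toFinset] at hP
      apply hP.2
      have hX : ∀ i, (X i : MvPolynomial (Fin (r + 1)) κ) ∈ P := by
        intro i
        have h1 : (Pi.single i 1 : Fin (r + 1) → K) ∈ (P.restrictScalars K).comap Lf := by rw [hPt]; trivial
        have h2 : Lf (Pi.single i 1) ∈ P := h1
        have h3 : Lf (Pi.single i 1) = X i := by
          show lin _ = _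
          rw [lin, Finset.sum_eq_single i]
          · simp
          · intro j _ hj; simp [hj]
          · simp
        rwa [h3] at h2
      have h4 := irr_le_iff P hP.1.1.1.ne_top hX
      have h5 : P = RingHom.ker (constantCoeff (σ := Fin (r+1)) (R := κ)) := by
        ext p; rw [h4, RingHom.mem_ker, constantCoeff_eq]
      show P.IsMaximal
      rw [h5]
      exact RingHom.ker_isMaximal_of_surjective _ (fun a => ⟨C a, by simp⟩)
    have hne := Subspace.biUnion_ne_univ_of_top_notMem hs
    obtain ⟨v, hv⟩ := (Set.ne_univ_iff_exists_notMem _).1 hne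
    have hv' : ∀ P ∈ I.minimalPrimes, Lf v ∈ P → P.IsMaximal := by
      classical
      intro P hP hl
      by_contra hmax
      apply hv
      simp only [Set.mem_iUnion]
      exact ⟨_, Finset.mem_image.2 ⟨P, by rw [Set.Finite.mem_toFinset]; exact ⟨hP, hmax⟩, rfl⟩, hl⟩
    have hd' := dim_step I (Lf v) m hv' hd
    obtain ⟨l, N, hN⟩ := ih (I ⊔ Ideal.span {Lf v}) (hI.sup (Ideal.homogeneous_span _ _ (by
      rintro _ rfl; exact ⟨1, lin_hom _⟩))) hd'
    refine ⟨Fin.cons v l, N, fun α hα => ?_⟩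
    have := hN α hα
    rw [sup_assoc, ← Ideal.span_union] at this
    refine (sup_le_sup_left (Ideal.span_mono ?_) I) this
    rintro _ (rfl | ⟨j, rfl⟩)
    · exact ⟨0, by simp [Lf]⟩
    · exact ⟨j.succ, by simp⟩

end P5

section P6
open MvPolynomial

theorem int_dim_le (A B : Type*) [CommRing A] [CommRing B] [Algebra A B] [Algebra.IsIntegral A B] :
    ringKrullDim B ≤ ringKrullDim A := by
  refine Order.krullDim_le_of_strictMono (PrimeSpectrum.comap (algebraMap A B)) ?_
  intro a b hab
  exact Ideal.IsIntegral.comap_lt_comap (R := A) (I := a.asIdeal) (J := b.asIdeal) hab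

theorem int_dim_ge (A B : Type*) [CommRing A] [CommRing B] [Algebra A B] [Algebra.IsIntegral A B]
    (hinj : Function.Injective (algebraMap A B)) :
    ringKrullDim A ≤ ringKrullDim B := by
  refine iSup_le fun p => ?_
  have : FaithfulSMul A B := (faithfulSMul_iff_algebraMap_injective A B).2 hinj
  obtain ⟨⟨P, hP⟩⟩ := Ideal.nonempty_primesOver (S := B) (p.head.asIdeal)
  have := hP.1
  have := hP.2
  obtain ⟨q, hq, h⟩ := Ideal.exists_ltSeries_of_hasGoingUp (S := B) p P
  rw [← hq]
  exact Order.LTSeries.length_le_krullDim q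

theorem dim_trdeg (k B : Type*) [Field k] [CommRing B] [IsDomain B] [Algebra k B]
    [Algebra.FiniteType k B] :
    ∃ s : ℕ, ringKrullDim B = s ∧ ∃ x : Fin s → B, IsTranscendenceBasis k x := by
  obtain ⟨s, g, hg, hi⟩ := exists_integral_inj_algHom_of_fg k B
  refine ⟨s, ?_, fun i => g (X i), ?_⟩
  · let _ : Algebra (MvPolynomial (Fin s) k) B := g.toRingHom.toAlgebra
    have : Algebra.IsIntegral (MvPolynomial (Fin s) k) B := ⟨hi⟩
    rw [le_antisymm (int_dim_le (MvPolynomial (Fin s) k) B) (int_dim_ge _ B hg)]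
    rw [MvPolynomial.ringKrullDim_of_isNoetherianRing]
    simp
  · have hgx : g = aeval (fun i => g (X i)) := by ext i; simp
    have hai : AlgebraicIndependent k (fun i => g (X i)) := by
      rw [AlgebraicIndependent, ← hgx]; exact hg
    rw [hai.isTranscendenceBasis_iff_isAlgebraic]
    refine ⟨fun b => ?_⟩
    obtain ⟨p, hp, hpb⟩ := hi b
    have hmem : ∀ y, g y ∈ Algebra.adjoin k (Set.range fun i => g (X i)) := by
      intro y
      rw [Algebra.adjoin_range_eq_range_aeval, ← hgx]; exact ⟨y, rfl⟩
    let g' : MvPolynomial (Fin s) k →+* Algebra.adjoin k (Set.range fun i => g (X i)) :=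
      (g : MvPolynomial (Fin s) k →+* B).codRestrict _ hmem
    apply IsIntegral.isAlgebraic
    refine ⟨p.map g', hp.map _, ?_⟩
    rw [Polynomial.eval₂_map]; exact hpb

theorem dim_ge_of_indep {k B : Type*} [Field k] [CommRing B] [IsDomain B] [Algebra k B]
    [Algebra.FiniteType k B] {n : ℕ} (x : Fin n → B) (hx : AlgebraicIndependent k x) :
    (n : WithBot ℕ∞) ≤ ringKrullDim B := by
  obtain ⟨s, hs, y, hy⟩ := dim_trdeg k B
  rw [hs]
  have h1 := hx.lift_cardinalMk_le_trdeg
  have h2 := hy.lift_cardinalMk_eq_trdeg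
  simp only [Cardinal.mk_fin, Cardinal.lift_natCast] at h1 h2
  have h3 : Algebra.trdeg k B = s := Cardinal.lift_injective (by rw [← h2]; simp)
  rw [h3] at h1
  have : n ≤ s := by simpa using h1
  exact_mod_cast this

/-- dimension upper bound from rank -/
theorem dim_le_of_rk {k B F : Type*} [Field k] [CommRing B] [IsDomain B] [Algebra k B]
    [Algebra.FiniteType k B] [Field F] [Algebra k F] (φ : B →ₐ[k] F) (hφ : Function.Injective φ)
    (T : Set F) (hT : ∀ b, φ b ∈ Algebra.adjoin k T) (n : ℕ) (hn : (aM k).eRk T ≤ n) :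
    ringKrullDim B ≤ n := by
  obtain ⟨s, hs, y, hy⟩ := dim_trdeg k B
  rw [hs]
  have h1 : AlgebraicIndependent k (fun i => φ (y i)) := hy.1.map' hφ
  have h2 : (aM k (F := F)).Indep (Set.range fun i => φ (y i)) := by
    exact h1.to_subtype_range
  have h3 : Set.range (fun i => φ (y i)) ⊆ (aM k).closure T := by
    rintro _ ⟨i, rfl⟩
    exact adjoin_subset_closure k T (hT _)
  have h4 := h2.eRk_eq_encard
  have h5 := (aM k).eRk_mono h3
  rw [Matroid.eRk_closure_eq, h4, ← Set.image_univ, h1.injective.encard_image, Set.encard_univ] at h5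
  have := h5.trans hn
  simp only [ENat.card_eq_coe_fintype_card, Fintype.card_fin] at this
  have : s ≤ n := by exact_mod_cast this
  exact_mod_cast this

end P6

section P7
open MvPolynomial

attribute [local instance] MvPolynomial.gradedAlgebra

theorem aeval_monomial_mval {r : ℕ} {κ R : Type*} [CommRing κ] [CommRing R] [Algebra κ R]
    (c : Fin (r + 1) → R) (α : Fin (r + 1) →₀ ℕ) (a : κ) :
    aeval c (monomial α a) = algebraMap κ R a * mval c α := by
  rw [aeval_monomial, mval, Finsupp.prod_fintype _ _ (by simp)]

theorem irr_succ {r : ℕ} {R : Type*} [CommRing R] (J : Ideal (MvPolynomial (Fin (r + 1)) R)) (N : ℕ)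
    (h : ∀ α : Fin (r + 1) →₀ ℕ, α.degree = N → monomial α 1 ∈ J) (e : ℕ) (he : N ≤ e) :
    ∀ α : Fin (r + 1) →₀ ℕ, α.degree = e → monomial α 1 ∈ J := by
  induction e, he using Nat.le_induction with
  | base => exact h
  | succ e he ih =>
    intro α hα
    have h0 : α ≠ 0 := by rintro rfl; simp at hα
    obtain ⟨i, hi⟩ := Finsupp.ne_iff.1 h0
    have hle : Finsupp.single i 1 ≤ α := by
      rw [Finsupp.single_le_iff]; simp at hi; omega
    have h1 : α = (α - Finsupp.single i 1) + Finsupp.single i 1 := (tsub_add_cancel_of_le hle).symm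
    have h2 : (α - Finsupp.single i 1).degree = e := by
      rw [h1, map_add, Finsupp.degree_single] at hα; omega
    rw [h1, ← mul_one (1 : R), ← monomial_mul]
    exact J.mul_mem_right _ (ih _ h2)

theorem homComp_mul_lin {r : ℕ} {R : Type*} [CommRing R] (h : MvPolynomial (Fin (r + 1)) R)
    (v : Fin (r + 1) → R) (e : ℕ) :
    homogeneousComponent (e + 1) (h * lin v) = homogeneousComponent e h * lin v := by
  have := DirectSum.coe_decompose_mul_of_right_mem_of_le (homogeneousSubmodule (Fin (r + 1)) R)
    (a := h) (b := lin v) (i := 1) (n := e + 1) (lin_hom v) (by omega)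
  have hd : ∀ (p : MvPolynomial (Fin (r + 1)) R) n,
      (DirectSum.decompose (homogeneousSubmodule (Fin (r + 1)) R) p n : MvPolynomial (Fin (r + 1)) R) =
        homogeneousComponent n p := fun p n => decomposition.decompose'_apply p n
  rw [hd, hd] at this
  exact this

theorem integ {r m : ℕ} {κ R : Type*} [Field κ] [CommRing R] [Algebra κ R]
    (I : Ideal (MvPolynomial (Fin (r + 1)) κ))
    (hI : I.IsHomogeneous (homogeneousSubmodule (Fin (r + 1)) κ)) (l : Fin m → Fin (r + 1) → κ) (N : ℕ)
    (hN : ∀ α : Fin (r + 1) →₀ ℕ, α.degree = N → monomial α 1 ∈ I ⊔ Ideal.span (Set.range fun j => lin (l j)))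
    (c : Fin (r + 1) → R) (hc : ∀ p ∈ I, aeval c p = 0) (i : Fin (r + 1)) :
    IsIntegral (Algebra.adjoin κ (Set.range fun j => aeval c (lin (l j)))) (c i) := by
  classical
  set T := Algebra.adjoin κ (Set.range fun j => aeval c (lin (l j))) with hT
  let s : Set R := (mval c) '' {α | α.degree ≤ N}
  have hsfin : s.Finite := (Finsupp.finite_of_degree_le N).image _
  let M : Submodule T R := Submodule.span T s
  have hM : ∀ e, ∀ α : Fin (r + 1) →₀ ℕ, α.degree = e → mval c α ∈ M := by
    intro e
    induction e using Nat.strong_induction_on with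
    | _ e ih =>
      intro α hα
      by_cases he : e ≤ N
      · exact Submodule.subset_span ⟨α, by simpa [hα] using he, rfl⟩
      · obtain ⟨e, rfl⟩ : ∃ e', e = e' + 1 := ⟨e - 1, by omega⟩
        have h1 := irr_succ _ N hN (e + 1) (by omega) α hα
        obtain ⟨q, hq, t, ht, hqt⟩ := Submodule.mem_sup.1 h1
        obtain ⟨h, rfl⟩ := (Ideal.mem_span_range_iff_exists_fun).1 ht
        have h2 := congrArg (fun p => aeval c (homogeneousComponent (e + 1) p)) hqt
        simp only [map_add, map_sum, homComp_mul_lin, map_mul] at h2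
        rw [hc _ (homogeneousComponent_mem_of_mem hI hq _), zero_add,
          homogeneousComponent_eq_self (isHomogeneous_monomial _ hα), aeval_monomial_mval, map_one,
          one_mul] at h2
        rw [← h2]
        refine M.sum_mem fun j _ => ?_
        rw [mul_comm]
        have h3 : aeval c (homogeneousComponent e (h j)) ∈ M := by
          rw [(homogeneousComponent e (h j)).as_sum, map_sum]
          refine M.sum_mem fun β hβ => ?_
          rw [aeval_monomial_mval]
          have hβ' : β.degree = e := by
            rw [mem_support_iff, coeff_homogeneousComponent] at hβ
            by_contra hne; simp [hne] at hβ
          exact M.smul_mem (algebraMap κ T _) (ih e (by omega) β hβ')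
        exact M.smul_mem (⟨aeval c (lin (l j)), Algebra.subset_adjoin ⟨j, rfl⟩⟩ : T) h3
  let S : Subalgebra T R := M.toSubalgebra (by rw [← mval_zero c]; exact hM _ 0 rfl) (by
    intro x y hx hy
    have : M * M ≤ M := by
      show Submodule.span T s * Submodule.span T s ≤ M
      rw [Submodule.span_mul_span, Submodule.span_le]
      rintro _ ⟨_, ⟨α, _, rfl⟩, _, ⟨β, _, rfl⟩, rfl⟩
      show mval c α * mval c β ∈ M
      rw [← mval_add]; exact hM _ _ rfl
    exact this (Submodule.mul_mem_mul hx hy))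
  have hS : S.toSubmodule.FG := ⟨hsfin.toFinset, by
    rw [Set.Finite.coe_toFinset]; rfl⟩
  refine IsIntegral.of_mem_of_fg S hS _ ?_
  show c i ∈ M
  rw [← mval_single c i]; exact hM _ _ rfl

theorem dimB {r m : ℕ} {κ : Type*} [Field κ]
    (I : Ideal (MvPolynomial (Fin (r + 1)) κ))
    (hI : I.IsHomogeneous (homogeneousSubmodule (Fin (r + 1)) κ)) (l : Fin m → Fin (r + 1) → κ) (N : ℕ)
    (hN : ∀ α : Fin (r + 1) →₀ ℕ, α.degree = N → monomial α 1 ∈ I ⊔ Ideal.span (Set.range fun j => lin (l j))) :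
    ringKrullDim (MvPolynomial (Fin (r + 1)) κ ⧸ I) ≤ m := by
  let c : Fin (r + 1) → MvPolynomial (Fin (r + 1)) κ ⧸ I := fun i => Ideal.Quotient.mk I (X i)
  have hcm : (aeval c : MvPolynomial (Fin (r + 1)) κ →ₐ[κ] _) = Ideal.Quotient.mkₐ κ I := by
    ext i; simp [c]
  have h1 := integ I hI l N hN c (by intro p hp; rw [hcm]; exact Ideal.Quotient.eq_zero_iff_mem.2 hp)
  set T := Algebra.adjoin κ (Set.range fun j => aeval c (lin (l j))) with hT
  have hint : Algebra.IsIntegral T (MvPolynomial (Fin (r + 1)) κ ⧸ I) := by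
    refine ⟨fun x => ?_⟩
    obtain ⟨p, rfl⟩ := Ideal.Quotient.mk_surjective x
    have : Ideal.Quotient.mk I p = aeval c p := by rw [hcm]; rfl
    rw [this]
    induction p using MvPolynomial.induction_on with
    | C a => rw [aeval_C]; exact isIntegral_algebraMap (R := T) (x := algebraMap κ T a)
    | add p q hp hq =>
      rw [map_add]; exact (hp (by rw [hcm]; rfl)).add (hq (by rw [hcm]; rfl))
    | mul_X p i hp => rw [map_mul, aeval_X]; exact (hp (by rw [hcm]; rfl)).mul (h1 i)
  refine (int_dim_le T _).trans ?_
  have hsurj : Function.Surjective ((aeval (R := κ) fun j => aeval c (lin (l j))).rangeRestrict) :=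
    AlgHom.rangeRestrict_surjective _
  have h2 := ringKrullDim_le_of_surjective _ hsurj
  rw [MvPolynomial.ringKrullDim_of_isNoetherianRing] at h2
  rw [hT, Algebra.adjoin_range_eq_range_aeval]
  refine h2.trans ?_
  simp

/-- the form with given coefficients -/
noncomputable def frm {r d : ℕ} {R : Type*} [CommSemiring R] (x : Mon r d → R) :
    MvPolynomial (Fin (r + 1)) R := ∑ α, monomial α.1 (x α)

theorem frm_hom {r d : ℕ} {R : Type*} [CommSemiring R] (x : Mon r d → R) :
    (frm x).IsHomogeneous d :=
  IsHomogeneous.sum _ _ _ fun α _ => isHomogeneous_monomial _ α.2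

theorem frm_map {r d : ℕ} {R S : Type*} [CommSemiring R] [CommSemiring S] (φ : R →+* S) (x : Mon r d → R) :
    MvPolynomial.map φ (frm x) = frm (fun α => φ (x α)) := by
  simp [frm]

/-- ideal generated by forms -/
noncomputable def FI {r n : ℕ} {d : Fin n → ℕ} {R : Type*} [CommRing R] (x : (i : Fin n) → Mon r (d i) → R) :
    Ideal (MvPolynomial (Fin (r + 1)) R) := Ideal.span (Set.range fun i => frm (x i))

/-- ideal generated by linear forms -/
noncomputable def LI {r m : ℕ} {R : Type*} [CommRing R] (l : Fin m → Fin (r + 1) → R) :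
    Ideal (MvPolynomial (Fin (r + 1)) R) := Ideal.span (Set.range fun j => lin (l j))

theorem FI_hom {r n : ℕ} {d : Fin n → ℕ} {R : Type*} [CommRing R] (x : (i : Fin n) → Mon r (d i) → R) :
    (FI x).IsHomogeneous (homogeneousSubmodule (Fin (r + 1)) R) :=
  Ideal.homogeneous_span _ _ (by rintro _ ⟨i, rfl⟩; exact ⟨d i, frm_hom _⟩)

theorem LI_hom {r m : ℕ} {R : Type*} [CommRing R] (l : Fin m → Fin (r + 1) → R) :
    (LI l).IsHomogeneous (homogeneousSubmodule (Fin (r + 1)) R) :=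
  Ideal.homogeneous_span _ _ (by rintro _ ⟨i, rfl⟩; exact ⟨1, lin_hom _⟩)

theorem FI_map {r n : ℕ} {d : Fin n → ℕ} {R S : Type*} [CommRing R] [CommRing S] (φ : R →+* S)
    (x : (i : Fin n) → Mon r (d i) → R) :
    (FI x).map (MvPolynomial.map φ) = FI (fun i α => φ (x i α)) := by
  rw [FI, FI, Ideal.map_span, ← Set.range_comp]
  congr 2; ext1 i; exact frm_map _ _

theorem LI_map {r m : ℕ} {R S : Type*} [CommRing R] [CommRing S] (φ : R →+* S)
    (l : Fin m → Fin (r + 1) → R) :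
    (LI l).map (MvPolynomial.map φ) = LI (fun j i => φ (l j i)) := by
  rw [LI, LI, Ideal.map_span, ← Set.range_comp]
  congr 2; ext1 i; exact lin_map _ _

/-- Direction 2: clear denominators -/
theorem clear_den {r : ℕ} {B κ : Type*} [CommRing B] [IsDomain B] [Field κ] [Algebra B κ] [IsFractionRing B κ]
    (J : Ideal (MvPolynomial (Fin (r + 1)) B)) (N : ℕ)
    (h : ∀ α : Fin (r + 1) →₀ ℕ, α.degree = N →
      monomial α 1 ∈ J.map (MvPolynomial.map (algebraMap B κ))) :
    ∃ a : B, a ≠ 0 ∧ ∀ α : Fin (r + 1) →₀ ℕ, α.degree = N → monomial α a ∈ J := by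
  classical
  have key : ∀ α : Mon r N, ∃ a : B, a ≠ 0 ∧ monomial α.1 a ∈ J := by
    intro α
    have h1 := h α.1 α.2
    let _ : Algebra (MvPolynomial (Fin (r + 1)) B) (MvPolynomial (Fin (r + 1)) κ) :=
      algebraMvPolynomial
    have : IsLocalization ((nonZeroDivisors B).map (C (σ := Fin (r + 1)))) (MvPolynomial (Fin (r + 1)) κ) :=
      MvPolynomial.isLocalization _ _
    obtain ⟨⟨y, ⟨_, ⟨a, ha, rfl⟩⟩⟩, hy⟩ := (IsLocalization.mem_map_algebraMap_iff
      ((nonZeroDivisors B).map (C (σ := Fin (r + 1)))) (MvPolynomial (Fin (r + 1)) κ)).1 h1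
    refine ⟨a, nonZeroDivisors.ne_zero ha, ?_⟩
    have hinj : Function.Injective (MvPolynomial.map (σ := Fin (r + 1)) (algebraMap B κ)) :=
      MvPolynomial.map_injective _ (IsFractionRing.injective B κ)
    have : monomial α.1 a = y.1 := by
      apply hinj
      rw [← show _ = MvPolynomial.map (algebraMap B κ) y.1 from hy]
      simp [RingHom.algebraMap_toAlgebra, mul_comm, C_mul_monomial]
    rw [this]; exact y.2
  choose a ha ha' using key
  refine ⟨∏ α, a α, Finset.prod_ne_zero_iff.2 fun α _ => ha α, fun α hα => ?_⟩
  rw [← Finset.mul_prod_erase _ _ (Finset.mem_univ (⟨α, hα⟩ : Mon r N)), mul_comm, ← C_mul_monomial]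
  exact J.mul_mem_left _ (ha' ⟨α, hα⟩)

/-- Lemma C' : open condition -/
theorem open_cond {r : ℕ} {A K : Type*} [CommRing A] [Field K] (ε : A →+* K) (hε : Function.Surjective ε)
    (J : Ideal (MvPolynomial (Fin (r + 1)) A))
    (hJ : J.IsHomogeneous (homogeneousSubmodule (Fin (r + 1)) A)) (N : ℕ)
    (h : ∀ α : Fin (r + 1) →₀ ℕ, α.degree = N → monomial α 1 ∈ J.map (MvPolynomial.map ε)) :
    ∃ a : A, ε a ≠ 0 ∧ ∀ α : Fin (r + 1) →₀ ℕ, α.degree = N → monomial α a ∈ J := by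
  classical
  let 𝔞 := RingHom.ker ε
  let Q := MvPolynomial (Fin (r + 1)) A ⧸ J
  let g : Mon r N → Q := fun α => Ideal.Quotient.mk J (monomial α.1 1)
  let M : Submodule A Q := Submodule.span A (Set.range g)
  have hfg : M.FG := ⟨(Set.finite_range g).toFinset, by simp [M]⟩
  have hle : M ≤ 𝔞 • M := by
    rw [Submodule.span_le]
    rintro _ ⟨α, rfl⟩
    have hs : Function.Surjective (MvPolynomial.map (σ := Fin (r + 1)) ε) := MvPolynomial.map_surjective _ hε
    obtain ⟨q, hq, hqe⟩ := (Ideal.mem_map_iff_of_surjective _ hs).1 (h α.1 α.2)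
    have hq' := homogeneousComponent_mem_of_mem hJ hq N
    let p := monomial α.1 (1 : A) - homogeneousComponent N q
    have hp : Ideal.Quotient.mk J p = g α := by
      simp only [p, map_sub, Ideal.Quotient.eq_zero_iff_mem.2 hq', sub_zero, g]
    have hpc : ∀ β, coeff β p ∈ 𝔞 := by
      intro β
      have h1 : ε (coeff β q) = coeff β (monomial α.1 1) := by rw [← coeff_map, hqe]
      rw [RingHom.mem_ker]
      simp only [p, coeff_sub, map_sub, coeff_homogeneousComponent]
      split_ifs with hβ
      · rw [h1]; simp only [coeff_monomial]; split_ifs <;> simp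
      · have : α.1 ≠ β := by rintro rfl; exact hβ α.2
        simp [coeff_monomial, this]
    have hph : p.IsHomogeneous N := (isHomogeneous_monomial _ α.2).sub (homogeneousComponent_isHomogeneous _ _)
    show g α ∈ 𝔞 • M
    rw [← hp, p.as_sum, map_sum]
    refine Submodule.sum_mem _ fun β hβ => ?_
    have hβ' : β.degree = N := by
      have := hph (mem_support_iff.1 hβ)
      rw [Finsupp.degree_eq_weight_one]; exact this
    have : Ideal.Quotient.mk J (monomial β (coeff β p)) = coeff β p • g ⟨β, hβ'⟩ := by
      show _ = Ideal.Quotient.mk J (coeff β p • monomial β 1)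
      rw [smul_monomial, smul_eq_mul, mul_one]
    rw [this]
    exact Submodule.smul_mem_smul (hpc β) (Submodule.subset_span ⟨_, rfl⟩)
  obtain ⟨a, ha, ha'⟩ := Submodule.exists_sub_one_mem_and_smul_eq_zero_of_fg_of_le_smul 𝔞 M hfg hle
  refine ⟨a, ?_, fun α hα => ?_⟩
  · have : ε (a - 1) = 0 := ha
    rw [map_sub, map_one, sub_eq_zero] at this
    rw [this]; exact one_ne_zero
  · have := ha' _ (Submodule.subset_span ⟨⟨α, hα⟩, rfl⟩)
    have h2 : Ideal.Quotient.mk J (a • monomial α 1) = 0 := this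
    rw [smul_monomial, smul_eq_mul, mul_one] at h2
    exact Ideal.Quotient.eq_zero_iff_mem.1 h2

/-- specialization -/
theorem spec_irr {r : ℕ} {A κ : Type*} [CommRing A] [Field κ] (φ : A →+* κ)
    (J : Ideal (MvPolynomial (Fin (r + 1)) A)) (N : ℕ) (a : A) (ha : φ a ≠ 0)
    (h : ∀ α : Fin (r + 1) →₀ ℕ, α.degree = N → monomial α a ∈ J) :
    ∀ α : Fin (r + 1) →₀ ℕ, α.degree = N → monomial α 1 ∈ J.map (MvPolynomial.map φ) := by
  intro α hα
  have h1 := Ideal.mem_map_of_mem (MvPolynomial.map φ) (h α hα)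
  rw [map_monomial] at h1
  have := (J.map (MvPolynomial.map φ)).mul_mem_left (C (φ a)⁻¹) h1
  rwa [C_mul_monomial, inv_mul_cancel₀ ha] at this

end P7

section P8
open MvPolynomial

/-- a Zariski chart -/
def ZarCh {X ι K : Type*} [Field K] [TopologicalSpace X] (ev : X ≃ (ι → K)) : Prop :=
  ∀ s : Set X, IsClosed s ↔ ∃ S : Set (MvPolynomial ι K), s = {v | ∀ p ∈ S, aeval (ev v) p = 0}

/-- vanishing ideal -/
noncomputable def VI {X ι K : Type*} [Field K] (ev : X ≃ (ι → K)) (s : Set X) :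
    Ideal (MvPolynomial ι K) :=
  MvPolynomial.vanishingIdeal K (ev '' s)

variable {X ι K : Type*} [Field K] [TopologicalSpace X] {ev : X ≃ (ι → K)}

theorem mem_VI (s : Set X) (p : MvPolynomial ι K) : p ∈ VI ev s ↔ ∀ v ∈ s, aeval (ev v) p = 0 := by
  rw [VI, mem_vanishingIdeal_iff]
  exact Set.forall_mem_image

theorem VI_mono {s t : Set X} (h : s ⊆ t) : VI ev t ≤ VI ev s := fun p hp => by
  rw [mem_VI] at *; exact fun v hv => hp v (h hv)

theorem ZarCh.closed_zero (h : ZarCh ev) (S : Set (MvPolynomial ι K)) :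
    IsClosed {v | ∀ p ∈ S, aeval (ev v) p = 0} := (h _).2 ⟨S, rfl⟩

theorem ZarCh.mem_closure (h : ZarCh ev) (s : Set X) (v : X) :
    v ∈ closure s ↔ ∀ p ∈ VI ev s, aeval (ev v) p = 0 := by
  constructor
  · intro hv p hp
    have h1 : s ⊆ {v | ∀ p ∈ (VI ev s : Set (MvPolynomial ι K)), aeval (ev v) p = 0} :=
      fun w hw p hp => (mem_VI s p).1 hp w hw
    exact closure_minimal h1 (h.closed_zero _) hv p hp
  · intro hv
    obtain ⟨S, hS⟩ := (h (closure s)).1 isClosed_closure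
    rw [hS]
    intro p hp
    refine hv p ((mem_VI s p).2 fun w hw => ?_)
    have := subset_closure hw
    rw [hS] at this
    exact this p hp

theorem ZarCh.VI_closure (h : ZarCh ev) (s : Set X) : VI ev (closure s) = VI ev s := by
  apply le_antisymm (VI_mono subset_closure)
  intro p hp
  rw [mem_VI]
  exact fun v hv => (h.mem_closure s v).1 hv p hp

theorem ZarCh.irr_iff (h : ZarCh ev) (s : Set X) : IsIrreducible s ↔ (VI ev s).IsPrime := by
  constructor
  · rintro ⟨⟨v, hv⟩, hs⟩
    refine ⟨?_, ?_⟩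
    · rw [Ideal.ne_top_iff_one, mem_VI]
      intro h1
      simpa using h1 v hv
    · intro p q hpq
      rw [mem_VI] at hpq
      have h1 := isPreirreducible_iff_isClosed_union_isClosed.1 hs _ _ (h.closed_zero {p}) (h.closed_zero {q}) (by
        intro w hw
        have := hpq w hw
        rw [map_mul, mul_eq_zero] at this
        simpa using this)
      rw [mem_VI, mem_VI]
      refine h1.imp (fun h2 w hw => h2 hw p rfl) (fun h2 w hw => h2 hw q rfl)
  · intro hp
    refine ⟨?_, ?_⟩
    · by_contra hne
      rw [Set.not_nonempty_iff_eq_empty] at hne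
      refine hp.ne_top ?_
      rw [Ideal.eq_top_iff_one, mem_VI, hne]; simp
    · rw [isPreirreducible_iff_isClosed_union_isClosed]
      intro z₁ z₂ h1 h2 h12
      obtain ⟨S, rfl⟩ := (h z₁).1 h1
      obtain ⟨S', rfl⟩ := (h z₂).1 h2
      by_contra hc
      push Not at hc
      obtain ⟨hc1, hc2⟩ := hc
      simp only [Set.not_subset, Set.mem_ofPred_eq, not_forall] at hc1 hc2
      obtain ⟨a, ha, p, hp', hpa⟩ := hc1
      obtain ⟨b, hb, q, hq', hqb⟩ := hc2
      have : p * q ∈ VI ev s := by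
        rw [mem_VI]
        intro v hv
        rw [map_mul, mul_eq_zero]
        exact (h12 hv).imp (fun h3 => h3 p hp') (fun h3 => h3 q hq')
      rcases hp.mem_or_mem this with h3 | h3
      · exact hpa ((mem_VI _ _).1 h3 a ha)
      · exact hqb ((mem_VI _ _).1 h3 b hb)

theorem ZarCh.noeth [Finite ι] (h : ZarCh ev) : TopologicalSpace.NoetherianSpace X := by
  have : Topology.IsInducing (fun v : X => (pointToPoint (k := K) (ev v) : PrimeSpectrum (MvPolynomial ι K))) := by
    constructor
    refine TopologicalSpace.ext_iff_isClosed.2 fun s => ?_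
    rw [isClosed_induced_iff, h]
    constructor
    · rintro ⟨S, rfl⟩
      refine ⟨PrimeSpectrum.zeroLocus S, PrimeSpectrum.isClosed_zeroLocus S, ?_⟩
      ext v
      exact forall₂_congr fun p _ => mem_vanishingIdeal_singleton_iff _ _
    · rintro ⟨t, ht, rfl⟩
      obtain ⟨S, rfl⟩ := (PrimeSpectrum.isClosed_iff_zeroLocus t).1 ht
      refine ⟨S, ?_⟩
      ext v
      exact forall₂_congr fun p _ => mem_vanishingIdeal_singleton_iff _ _
  exact this.noetherianSpace

theorem max_facts [TopologicalSpace.NoetherianSpace X] (S C : Set X)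
    (hC : Maximal (fun t => t ⊆ closure S ∧ IsIrreducible t) C) :
    IsClosed C ∧ C ⊆ closure (C ∩ S) := by
  have hcl : IsClosed C := by
    have : closure C ⊆ C := hC.2 ⟨closure_minimal hC.prop.1 isClosed_closure,
      isIrreducible_iff_closure.2 hC.prop.2⟩ subset_closure
    exact isClosed_of_closure_subset this
  refine ⟨hcl, ?_⟩
  obtain ⟨T, hTf, hTc, hTi, hTU⟩ := TopologicalSpace.NoetherianSpace.exists_finite_set_isClosed_irreducible
    (isClosed_closure (s := S))
  classical
  have h1 := isIrreducible_iff_sUnion_isClosed.1 hC.prop.2 (hTf.toFinset.image fun t => closure (t ∩ S)) (by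
    simp only [Finset.mem_image]; rintro _ ⟨t, _, rfl⟩; exact isClosed_closure) (by
    refine hC.prop.1.trans ?_
    refine closure_minimal ?_ ?_
    · intro v hv
      have := subset_closure hv
      rw [hTU] at this
      obtain ⟨t, ht, hvt⟩ := this
      exact ⟨closure (t ∩ S), by simpa using ⟨t, ht, rfl⟩, subset_closure ⟨hvt, hv⟩⟩
    · rw [Set.sUnion_eq_biUnion]
      refine Set.Finite.isClosed_biUnion (Finset.finite_toSet _) ?_
      simp only [Finset.coe_image]; rintro _ ⟨t, _, rfl⟩; exact isClosed_closure)
  obtain ⟨z, hz, hCz⟩ := h1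
  obtain ⟨t, ht, rfl⟩ := Finset.mem_image.1 hz
  rw [Set.Finite.mem_toFinset] at ht
  have h2 : C ⊆ t := hCz.trans (closure_minimal Set.inter_subset_left (hTc t ht))
  have h3 : t ⊆ C := hC.2 ⟨by rw [hTU]; exact Set.subset_sUnion_of_mem ht, hTi t ht⟩ h2
  rwa [h3.antisymm h2] at hCz

theorem exists_max [TopologicalSpace.NoetherianSpace X] (S t : Set X)
    (ht : t ⊆ closure S) (hti : IsIrreducible t) :
    ∃ C, t ⊆ C ∧ Maximal (fun t => t ⊆ closure S ∧ IsIrreducible t) C := by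
  obtain ⟨T, hTf, hTc, hTi, hTU⟩ := TopologicalSpace.NoetherianSpace.exists_finite_set_isClosed_irreducible
    (isClosed_closure (s := S))
  have key : ∀ u, u ⊆ closure S → IsIrreducible u → ∃ z ∈ T, u ⊆ z := by
    intro u hu hui
    have := isIrreducible_iff_sUnion_isClosed.1 hui hTf.toFinset (by simpa using hTc) (by simpa [← hTU] using hu)
    simpa using this
  obtain ⟨z, hz, htz⟩ := key t ht hti
  obtain ⟨C, hzC, hC⟩ := hTf.exists_le_maximal hz
  refine ⟨C, htz.trans hzC, ⟨by rw [hTU]; exact Set.subset_sUnion_of_mem hC.prop, hTi _ hC.prop⟩, ?_⟩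
  rintro u ⟨hu, hui⟩ hCu
  obtain ⟨z', hz', huz⟩ := key u hu hui
  exact huz.trans (hC.2 hz' (hCu.trans huz))

theorem ZarCh.zl_irr [Finite ι] [IsAlgClosed K] (_ : ZarCh ev) (P : Ideal (MvPolynomial ι K)) [P.IsPrime] :
    VI ev {v | ∀ p ∈ P, aeval (ev v) p = 0} = P := by
  rw [VI]
  have : ev '' {v | ∀ p ∈ P, aeval (ev v) p = 0} = zeroLocus K P := by
    ext x
    constructor
    · rintro ⟨v, hv, rfl⟩; exact hv
    · intro hx; exact ⟨ev.symm x, by simpa using hx, by simp⟩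
  rw [this, IsPrime.vanishingIdeal_zeroLocus]

theorem irr_sub (s : Set X) (T : Set s) (h : IsIrreducible (Subtype.val '' T)) : IsIrreducible T := by
  refine ⟨by simpa using h.1, ?_⟩
  rintro _ _ ⟨u, hu, rfl⟩ ⟨v, hv, rfl⟩ ⟨a, ha, hau⟩ ⟨b, hb, hbv⟩
  obtain ⟨_, ⟨c, hc, rfl⟩, hcu⟩ := h.2 u v hu hv ⟨a, ⟨a, ha, rfl⟩, hau⟩ ⟨b, ⟨b, hb, rfl⟩, hbv⟩
  exact ⟨c, hc, hcu⟩

theorem ZarCh.dim [Finite ι] [IsAlgClosed K] (h : ZarCh ev) (s : Set X) :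
    dimSet s = ringKrullDim (MvPolynomial ι K ⧸ VI ev s) := by
  rw [dimSet, topologicalKrullDim, ringKrullDim_quotient]
  apply le_antisymm
  · rw [← Order.krullDim_orderDual (α := PrimeSpectrum.zeroLocus _)]
    have him : ∀ T : TopologicalSpace.IrreducibleCloseds (closure s),
        IsClosed (Subtype.val '' (T : Set (closure s))) ∧ IsIrreducible (Subtype.val '' (T : Set (closure s))) :=
      fun T => ⟨(isClosed_closure.isClosedMap_subtype_val) _ T.isClosed',
        T.isIrreducible'.image _ continuous_subtype_val.continuousOn⟩
    refine Order.krullDim_le_of_strictMono (fun T => OrderDual.toDual ⟨⟨VI ev (Subtype.val '' (T : Set (closure s))),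
      (h.irr_iff _).1 (him T).2⟩, ?_⟩) ?_
    · show VI ev s ≤ VI ev _
      rw [← h.VI_closure s]
      exact VI_mono (by rintro _ ⟨x, _, rfl⟩; exact x.2)
    · intro T T' hT
      have hle : Subtype.val '' (T : Set (closure s)) ⊆ Subtype.val '' (T' : Set (closure s)) :=
        Set.image_mono hT.le
      refine lt_of_le_not_ge (show VI ev _ ≤ VI ev _ from VI_mono hle) fun hge => ?_
      have hge' : VI ev (Subtype.val '' (T : Set (closure s))) ≤ VI ev (Subtype.val '' (T' : Set (closure s))) := hge
      refine hT.not_ge ?_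
      have h2 : Subtype.val '' (T' : Set (closure s)) ⊆ Subtype.val '' (T : Set (closure s)) := by
        rw [← (him T).1.closure_eq, ← (him T').1.closure_eq]
        intro v hv
        rw [h.mem_closure] at *
        exact fun p hp => hv p (hge' hp)
      exact (Set.image_subset_image_iff Subtype.val_injective).1 h2
  · rw [← Order.krullDim_orderDual (α := TopologicalSpace.IrreducibleCloseds (closure s))]
    have hsub : ∀ P : PrimeSpectrum.zeroLocus (VI ev s : Set (MvPolynomial ι K)),
        {v | ∀ p ∈ P.1.asIdeal, aeval (ev v) p = 0} ⊆ closure s := by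
      intro P v hv
      rw [h.mem_closure]
      exact fun p hp => hv p (P.2 hp)
    have hval : ∀ P : PrimeSpectrum.zeroLocus (VI ev s : Set (MvPolynomial ι K)),
        Subtype.val '' {v : closure s | ∀ p ∈ P.1.asIdeal, aeval (ev v) p = 0} = {v | ∀ p ∈ P.1.asIdeal, aeval (ev v) p = 0} := by
      intro P
      ext v
      constructor
      · rintro ⟨w, hw, rfl⟩; exact hw
      · intro hv; exact ⟨⟨v, hsub P hv⟩, hv, rfl⟩
    refine Order.krullDim_le_of_strictMono (fun P => OrderDual.toDual
      ⟨{v : closure s | ∀ p ∈ P.1.asIdeal, aeval (ev v) p = 0}, ?_, ?_⟩) ?_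
    · apply irr_sub
      rw [hval, h.irr_iff, h.zl_irr]
      exact P.1.2
    · exact (h.closed_zero P.1.asIdeal).preimage continuous_subtype_val
    · intro P Q hPQ
      have hle : P.1.asIdeal ≤ Q.1.asIdeal := hPQ.le
      refine lt_of_le_not_ge ?_ fun hge => ?_
      · intro v hv p hp
        exact hv p (hle hp)
      · refine hPQ.not_ge ?_
        have hge' : {v : closure s | ∀ p ∈ P.1.asIdeal, aeval (ev v) p = 0} ⊆ {v : closure s | ∀ p ∈ Q.1.asIdeal, aeval (ev v) p = 0} := hge
        have h1 := Set.image_mono (f := Subtype.val) hge'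
        rw [hval, hval] at h1
        have h2 := VI_mono (ev := ev) h1
        rw [h.zl_irr, h.zl_irr] at h2
        exact h2

theorem ZarCh.dim_mono [Finite ι] [IsAlgClosed K] (h : ZarCh ev) {s t : Set X} (hst : s ⊆ t) :
    dimSet s ≤ dimSet t := by
  rw [h.dim, h.dim]
  exact ringKrullDim_le_of_surjective _ (Ideal.Quotient.factor_surjective (VI_mono hst))
end P8

section P9
open MvPolynomial

theorem zar_chart {K M ι : Type*} [Field K] [AddCommGroup M] [Module K M] [Fintype ι] (e : M ≃ₗ[K] (ι → K)) :
    @ZarCh M ι K _ (zariskiTopology K M) e.toEquiv := by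
  classical
  intro s
  have h0 : @IsClosed M (zariskiTopology K M) s ↔ s ∈ zariskiCloseds K M := by
    rw [← @isOpen_compl_iff _ _ (zariskiTopology K M)]
    show sᶜᶜ ∈ _ ↔ _
    rw [compl_compl]
  rw [h0]
  constructor
  · rintro ⟨S, rfl⟩
    let g : MvPolynomial (M →ₗ[K] K) K →ₐ[K] MvPolynomial ι K :=
      aeval fun φ => ∑ j, C (φ (e.symm (Pi.single j 1))) * X j
    have hg : ∀ v p, aeval (e v) (g p) = polyEval K M p v := by
      intro v p
      have : (aeval (e v)).comp g = aeval (fun φ : M →ₗ[K] K => φ v) := by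
        ext φ
        simp only [g, AlgHom.comp_apply, aeval_X, map_sum, map_mul, aeval_C]
        conv_rhs => rw [← e.symm_apply_apply v, pi_eq_sum_univ' (e v), map_sum, map_sum]
        simp [mul_comm]
      exact DFunLike.congr_fun this p
    refine ⟨g '' S, ?_⟩
    ext v
    simp only [Set.mem_ofPred_eq, Set.forall_mem_image, LinearEquiv.coe_toEquiv, hg]
  · rintro ⟨S, rfl⟩
    let g : MvPolynomial ι K →ₐ[K] MvPolynomial (M →ₗ[K] K) K :=
      rename fun j => (LinearMap.proj j).comp e.toLinearMap
    have hg : ∀ v p, polyEval K M (g p) v = aeval (e v) p := by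
      intro v p
      simp only [polyEval, g, eval_rename]
      rfl
    refine ⟨g '' S, ?_⟩
    ext v
    simp only [Set.mem_ofPred_eq, Set.forall_mem_image, LinearEquiv.coe_toEquiv, hg]

theorem coeff_frm {r d : ℕ} {R : Type*} [CommSemiring R] (x : Mon r d → R) (α : Mon r d) :
    coeff α.1 (frm x) = x α := by
  classical
  rw [frm, coeff_sum, Finset.sum_eq_single α]
  · simp
  · intro β _ h; rw [coeff_monomial, if_neg]; exact fun h' => h (Subtype.ext h')
  · simp

theorem frm_coeff {r d : ℕ} {R : Type*} [CommSemiring R] (p : MvPolynomial (Fin (r + 1)) R)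
    (hp : p.IsHomogeneous d) : frm (fun α : Mon r d => coeff α.1 p) = p := by
  classical
  ext β
  by_cases h : β.degree = d
  · exact coeff_frm _ (⟨β, h⟩ : Mon r d)
  · rw [hp.coeff_eq_zero h, (frm_hom _).coeff_eq_zero h]

/-- coordinate index -/
abbrev Idx (r n : ℕ) (d : Fin n → ℕ) := Σ i : Fin n, Mon r (d i)

noncomputable def tEq (K : Type*) [Field K] (r n : ℕ) (d : Fin n → ℕ) :
    tupleSpace K r n d ≃ₗ[K] (Idx r n d → K) where
  toFun F x := coeff x.2.1 (F x.1 : MvPolynomial (Fin (r + 1)) K)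
  map_add' F G := by ext x; simp
  map_smul' a F := by ext x; simp
  invFun x i := ⟨frm fun α => x ⟨i, α⟩, frm_hom _⟩
  left_inv F := by ext1 i; exact Subtype.ext (frm_coeff _ (F i).2)
  right_inv x := by ext ⟨i, α⟩; exact coeff_frm _ α

theorem tChart (K : Type*) [Field K] (r n : ℕ) (d : Fin n → ℕ) : ZarCh (tEq K r n d).toEquiv :=
  zar_chart _

theorem tEq_frm {K : Type*} [Field K] {r n : ℕ} {d : Fin n → ℕ} (F : tupleSpace K r n d) (i : Fin n) :
    (F i : MvPolynomial (Fin (r + 1)) K) = frm (fun α => tEq K r n d F ⟨i, α⟩) :=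
  (frm_coeff _ (F i).2).symm

/-- evaluation of the form with given coefficients -/
noncomputable def fe {r d : ℕ} {R : Type*} [CommSemiring R] (x : Mon r d → R) (c : Fin (r + 1) → R) : R :=
  ∑ α, x α * mval c α.1

theorem eval_frm {r d : ℕ} {R : Type*} [CommRing R] (x : Mon r d → R) (c : Fin (r + 1) → R) :
    eval c (frm x) = fe x c := by
  rw [frm, map_sum, fe]
  refine Finset.sum_congr rfl fun α _ => ?_
  rw [eval_monomial, mval, Finsupp.prod_fintype _ _ (by simp)]

theorem aeval_frm {r d : ℕ} {R S : Type*} [CommRing R] [CommRing S] [Algebra R S] (x : Mon r d → R) (c : Fin (r + 1) → S) :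
    aeval c (frm x) = fe (fun α => algebraMap R S (x α)) c := by
  rw [frm, map_sum, fe]
  exact Finset.sum_congr rfl fun α _ => aeval_monomial_mval _ _ _

theorem map_fe {r d : ℕ} {R S : Type*} [CommSemiring R] [CommSemiring S] (φ : R →+* S) (x : Mon r d → R) (c : Fin (r + 1) → R) :
    φ (fe x c) = fe (fun α => φ (x α)) (fun j => φ (c j)) := by
  simp [fe, mval]

/-- forms over `R` vanish on a line -/
def VL {r n : ℕ} {d : Fin n → ℕ} {R : Type*} [CommSemiring R] (f : Idx r n d → R) (v w : Fin (r + 1) → R) : Prop :=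
  ∀ i s t, fe (fun α => f ⟨i, α⟩) (fun j => s * v j + t * w j) = 0

theorem vol_iff {K : Type*} [Field K] {r n : ℕ} {d : Fin n → ℕ} (F : tupleSpace K r n d) :
    vanishOnCommonLine K F ↔ ∃ v w, LinearIndependent K ![v, w] ∧ VL (tEq K r n d F) v w := by
  simp only [vanishOnCommonLine, VL, tEq_frm F, eval_frm]

/-! composition with linear maps -/
/-- composition of a polynomial with a matrix -/
noncomputable def cmpo {r : ℕ} {R : Type*} [CommRing R] (h : Matrix (Fin (r + 1)) (Fin (r + 1)) R) :
    MvPolynomial (Fin (r + 1)) R →ₐ[R] MvPolynomial (Fin (r + 1)) R := aeval fun j => lin (h j)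

theorem cmp_map {r : ℕ} {R S : Type*} [CommRing R] [CommRing S] (φ : R →+* S)
    (h : Matrix (Fin (r + 1)) (Fin (r + 1)) R) (p : MvPolynomial (Fin (r + 1)) R) :
    MvPolynomial.map φ (cmpo h p) = cmpo (h.map φ) (MvPolynomial.map φ p) := by
  induction p using MvPolynomial.induction_on with
  | C a => simp [cmpo]
  | add p q hp hq => simp [hp, hq]
  | mul_X p j hp =>
    rw [map_mul, map_mul, hp, map_mul, map_mul, map_X]
    simp only [cmpo, aeval_X]
    rw [lin_map]; rfl

theorem eval_lin {r : ℕ} {R : Type*} [CommRing R] (v c : Fin (r + 1) → R) :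
    eval c (lin v) = v ⬝ᵥ c := by
  simp [lin, dotProduct]

theorem cmp_eval {r : ℕ} {R : Type*} [CommRing R] 
    (h : Matrix (Fin (r + 1)) (Fin (r + 1)) R) (p : MvPolynomial (Fin (r + 1)) R) (c : Fin (r + 1) → R) :
    eval c (cmpo h p) = eval (h.mulVec c) p := by
  induction p using MvPolynomial.induction_on with
  | C a => simp [cmpo]
  | add p q hp hq => simp [hp, hq]
  | mul_X p j hp =>
    rw [map_mul, map_mul, hp, map_mul, eval_X]
    simp only [cmpo, aeval_X]
    rw [eval_lin]; rfl

theorem cmp_hom {r d : ℕ} {R : Type*} [CommRing R] 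
    (h : Matrix (Fin (r + 1)) (Fin (r + 1)) R) (p : MvPolynomial (Fin (r + 1)) R) (hp : p.IsHomogeneous d) :
    (cmpo h p).IsHomogeneous d := by
  have := hp.aeval (fun j => lin (h j)) (n := 1) (fun j => lin_hom _)
  simpa [cmpo] using this

/-- coefficient is pure in the first two variables -/
def PureM {n : ℕ} (α : Fin (n + 1 + 1) →₀ ℕ) : Prop := ∀ j : Fin n, α j.succ.succ = 0

open Classical in
/-- generic form vanishing on the standard line -/
noncomputable def G0 {n m : ℕ} {d : Fin m → ℕ} {R : Type*} [CommRing R] (g : Idx (n + 1) m d → R) (i : Fin m) :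
    MvPolynomial (Fin (n + 1 + 1)) R := frm fun α => if PureM α.1 then 0 else g ⟨i, α⟩

/-- coefficients of the composed tuple -/
noncomputable def PF {n m : ℕ} {d : Fin m → ℕ} {R : Type*} [CommRing R]
    (h : Matrix (Fin (n + 1 + 1)) (Fin (n + 1 + 1)) R) (g : Idx (n + 1) m d → R) : Idx (n + 1) m d → R :=
  fun x => coeff x.2.1 (cmpo h (G0 g x.1))

theorem G0_map {n m : ℕ} {d : Fin m → ℕ} {R S : Type*} [CommRing R] [CommRing S] (φ : R →+* S)
    (g : Idx (n + 1) m d → R) (i : Fin m) : MvPolynomial.map φ (G0 g i) = G0 (fun x => φ (g x)) i := by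
  rw [G0, frm_map, G0]
  congr 1; ext α; split_ifs <;> simp

theorem PF_map {n m : ℕ} {d : Fin m → ℕ} {R S : Type*} [CommRing R] [CommRing S] (φ : R →+* S)
    (h : Matrix (Fin (n + 1 + 1)) (Fin (n + 1 + 1)) R) (g : Idx (n + 1) m d → R) (x) :
    φ (PF h g x) = PF (h.map φ) (fun x => φ (g x)) x := by
  rw [PF, PF, ← G0_map, ← cmp_map, coeff_map]

theorem G0_hom {n m : ℕ} {d : Fin m → ℕ} {R : Type*} [CommRing R] (g : Idx (n + 1) m d → R) (i : Fin m) : (G0 g i).IsHomogeneous (d i) := by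
  unfold G0
  exact frm_hom _

theorem PF_frm {n m : ℕ} {d : Fin m → ℕ} {R : Type*} [CommRing R]
    (h : Matrix (Fin (n + 1 + 1)) (Fin (n + 1 + 1)) R) (g : Idx (n + 1) m d → R) (i : Fin m) :
    frm (r := n + 1) (d := d i) (fun α : Mon (n + 1) (d i) => PF h g ⟨i, α⟩) = cmpo h (G0 g i) := by
  have h2 := cmp_hom h _ (G0_hom g i)
  rw [← frm_coeff _ h2]
  rfl

theorem G0_eval {n m : ℕ} {d : Fin m → ℕ} {R : Type*} [CommRing R] (g : Idx (n + 1) m d → R) (i : Fin m)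
    (c : Fin (n + 1 + 1) → R) (hc : ∀ j : Fin n, c j.succ.succ = 0) : eval c (G0 g i) = 0 := by
  rw [G0, eval_frm, fe]
  refine Finset.sum_eq_zero fun α _ => ?_
  split_ifs with h
  · simp
  · rw [PureM] at h
    push Not at h
    obtain ⟨j, hj⟩ := h
    rw [mval, Finset.prod_eq_zero (Finset.mem_univ j.succ.succ), mul_zero]
    rw [hc, zero_pow hj]
end P9

section P10
open MvPolynomial

theorem VL_change {r m : ℕ} {d : Fin m → ℕ} {R : Type*} [CommRing R] (f : Idx r m d → R)
    (v w : Fin (r + 1) → R) (h : VL f v w) (a b c e : R) :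
    VL f (fun j => a * v j + b * w j) (fun j => c * v j + e * w j) := by
  intro i s t
  have := h i (s * a + t * c) (s * b + t * e)
  rw [← this]; congr 1; ext j; ring

theorem VL_PF {n m : ℕ} {d : Fin m → ℕ} {Q : Type*} [Field Q]
    (h : Matrix (Fin (n + 1 + 1)) (Fin (n + 1 + 1)) Q) (hdet : h.det ≠ 0) (g : Idx (n + 1) m d → Q) :
    ∃ v w, LinearIndependent Q ![v, w] ∧ VL (PF h g) v w := by
  classical
  let v := h⁻¹.mulVec (Pi.single 0 1)
  let w := h⁻¹.mulVec (Pi.single 1 1)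
  have hu : IsUnit h.det := hdet.isUnit
  have hv : h.mulVec v = Pi.single 0 1 := by
    show h.mulVec (h⁻¹.mulVec _) = _
    rw [Matrix.mulVec_mulVec, Matrix.mul_nonsing_inv _ hu, Matrix.one_mulVec]
  have hw : h.mulVec w = Pi.single 1 1 := by
    show h.mulVec (h⁻¹.mulVec _) = _
    rw [Matrix.mulVec_mulVec, Matrix.mul_nonsing_inv _ hu, Matrix.one_mulVec]
  refine ⟨v, w, ?_, ?_⟩
  · rw [LinearIndependent.pair_iff]
    intro s t hst
    have := congrArg h.mulVec hst
    rw [Matrix.mulVec_add, Matrix.mulVec_smul, Matrix.mulVec_smul, hv, hw, Matrix.mulVec_zero] at this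
    have h0 := congrFun this 0
    have h1 := congrFun this 1
    simp at h0 h1
    exact ⟨h0, h1⟩
  · intro i s t
    rw [← eval_frm, PF_frm, cmp_eval]
    apply G0_eval
    intro j
    have : (fun j => s * v j + t * w j) = s • v + t • w := by ext; simp
    rw [this, Matrix.mulVec_add, Matrix.mulVec_smul, Matrix.mulVec_smul, hv, hw]
    have e1 : (j.succ.succ : Fin (n + 1 + 1)) ≠ 0 := Fin.succ_ne_zero _
    have e2 : (j.succ.succ : Fin (n + 1 + 1)) ≠ 1 := by
      intro h; have := congrArg Fin.val h; simp at this
    simp [Pi.single_apply, e1, e2]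

theorem exists_ext_basis {n : ℕ} {Q : Type*} [Field Q] (v w : Fin (n + 1 + 1) → Q)
    (h : LinearIndependent Q ![v, w]) :
    ∃ g k : Matrix (Fin (n + 1 + 1)) (Fin (n + 1 + 1)) Q, g * k = 1 ∧ (∀ j, g j 0 = v j) ∧ (∀ j, g j 1 = w j) := by
  classical
  let b := Module.Basis.sumExtend h
  have : Finite (Fin 2 ⊕ Module.Basis.sumExtendIndex h) := Module.Finite.finite_basis b
  have : Finite (Module.Basis.sumExtendIndex h) := Finite.of_injective (Sum.inr : _ → Fin 2 ⊕ _) Sum.inr_injective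
  have := Fintype.ofFinite (Module.Basis.sumExtendIndex h)
  have hc : Fintype.card (Module.Basis.sumExtendIndex h) = n := by
    have := Module.finrank_eq_card_basis b
    rw [Fintype.card_sum, Module.finrank_fin_fun, Fintype.card_fin] at this; omega
  let e := Fintype.equivFinOfCardEq hc
  let T : Fin 2 ⊕ Module.Basis.sumExtendIndex h ≃ Fin (n + 1 + 1) :=
    ((Equiv.refl _).sumCongr e).trans (finSumFinEquiv.trans (finCongr (by omega)))
  have hT0 : T (Sum.inl 0) = 0 := rfl
  have hT1 : T (Sum.inl 1) = 1 := by ext; rfl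
  let b' := b.reindex T
  have hb : ∀ i, b (Sum.inl i) = ![v, w] i := by
    intro i
    simp [b, Module.Basis.sumExtend]
    rfl
  have h0 : b' 0 = v := by
    rw [← hT0, Module.Basis.reindex_apply, Equiv.symm_apply_apply, hb]; rfl
  have h1 : b' 1 = w := by
    rw [← hT1, Module.Basis.reindex_apply, Equiv.symm_apply_apply, hb]; rfl
  refine ⟨(Pi.basisFun Q _).toMatrix b', b'.toMatrix (Pi.basisFun Q _), Module.Basis.toMatrix_mul_toMatrix_flip _ _, ?_, ?_⟩
  · intro j; rw [Module.Basis.toMatrix_apply, h0]; rfl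
  · intro j; rw [Module.Basis.toMatrix_apply, h1]; rfl

theorem line_param {n m : ℕ} {d : Fin m → ℕ} {Q : Type*} [Field Q] [Infinite Q] (f : Idx (n + 1) m d → Q)
    (v w : Fin (n + 1 + 1) → Q) (hli : LinearIndependent Q ![v, w]) (hf : VL f v w) :
    ∃ h g, f = PF h g := by
  classical
  obtain ⟨gm, k, hgk, hg0, hg1⟩ := exists_ext_basis v w hli
  let G : Fin m → MvPolynomial (Fin (n + 1 + 1)) Q := fun i => cmpo gm (frm fun α : Mon (n + 1) (d i) => f ⟨i, α⟩)
  have hGh : ∀ i, (G i).IsHomogeneous (d i) := fun i => cmp_hom _ _ (frm_hom _)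
  refine ⟨k, fun x => coeff x.2.1 (G x.1), ?_⟩
  have key : ∀ i (α : Mon (n + 1) (d i)), PureM α.1 → coeff α.1 (G i) = 0 := by
    intro i
    let a : Mon (n + 1) (d i) → Q := fun α => if PureM α.1 then coeff α.1 (G i) else 0
    have hQ : frm a = 0 := by
      apply MvPolynomial.funext
      intro c
      let c' : Fin (n + 1 + 1) → Q := Fin.cases (c 0) (Fin.cases (c 1) fun _ => 0)
      have hc'0 : c' 0 = c 0 := rfl
      have hc'1 : c' 1 = c 1 := rfl
      have hc's : ∀ j : Fin n, c' j.succ.succ = 0 := fun j => rfl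
      have h1 : eval c (frm a) = eval c' (G i) := by
        rw [← frm_coeff (G i) (hGh i), eval_frm, eval_frm, fe, fe]
        refine Finset.sum_congr rfl fun α _ => ?_
        simp only [a]
        split_ifs with hp
        · congr 1
          refine Finset.prod_congr rfl fun j _ => ?_
          refine Fin.cases rfl (fun j => Fin.cases rfl (fun j => ?_) j) j
          rw [hp j, pow_zero, pow_zero]
        · rw [PureM] at hp
          push Not at hp
          obtain ⟨j, hj⟩ := hp
          have : mval c' α.1 = 0 := Finset.prod_eq_zero (Finset.mem_univ j.succ.succ) (by rw [hc's, zero_pow hj])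
          rw [this]; simp
      rw [h1]
      simp only [G]
      rw [cmp_eval, eval_frm, map_zero, ← hf i (c 0) (c 1)]
      congr 1
      ext j
      rw [Matrix.mulVec, dotProduct, Fin.sum_univ_succ, Fin.sum_univ_succ, Finset.sum_eq_zero (fun j _ => by rw [hc's, mul_zero])]
      rw [hg0, show (Fin.succ 0 : Fin (n + 1 + 1)) = 1 from rfl, hg1, hc'0, hc'1]; ring
    intro α hα
    have := congrArg (coeff α.1) hQ
    rw [coeff_frm, coeff_zero] at this
    simpa [a, hα] using this
  ext ⟨i, α⟩
  have h1 : G0 (fun x : Idx (n + 1) m d => coeff x.2.1 (G x.1)) i = G i := by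
    rw [G0]
    conv_rhs => rw [← frm_coeff (G i) (hGh i)]
    congr 1; ext α
    split_ifs with h
    · exact (key i α h).symm
    · rfl
  rw [PF, h1]
  have h2 : cmpo k (G i) = frm fun α : Mon (n + 1) (d i) => f ⟨i, α⟩ := by
    apply MvPolynomial.funext
    intro c
    rw [cmp_eval, cmp_eval, Matrix.mulVec_mulVec, hgk, Matrix.one_mulVec]
  rw [h2, coeff_frm]

/-- parameter ring -/
abbrev PB (K : Type*) [Field K] (n m : ℕ) (d : Fin m → ℕ) :=
  MvPolynomial ((Fin (n + 1 + 1) × Fin (n + 1 + 1)) ⊕ Idx (n + 1) m d) K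

noncomputable def hX (K : Type*) [Field K] (n m : ℕ) (d : Fin m → ℕ) :
    Matrix (Fin (n + 1 + 1)) (Fin (n + 1 + 1)) (PB K n m d) := fun i j => X (Sum.inl (i, j))

noncomputable def gX (K : Type*) [Field K] (n m : ℕ) (d : Fin m → ℕ) :
    Idx (n + 1) m d → PB K n m d := fun x => X (Sum.inr x)

noncomputable def Psi (K : Type*) [Field K] (n m : ℕ) (d : Fin m → ℕ) :
    MvPolynomial (Idx (n + 1) m d) K →ₐ[K] PB K n m d := aeval (PF (hX K n m d) (gX K n m d))

theorem Psi_spec {K : Type*} [Field K] {n m : ℕ} {d : Fin m → ℕ} {R : Type*} [CommRing R] [Algebra K R]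
    (h : Matrix (Fin (n + 1 + 1)) (Fin (n + 1 + 1)) R) (g : Idx (n + 1) m d → R) (p) :
    aeval (PF h g) p = aeval (Sum.elim (fun ij => h ij.1 ij.2) g) (Psi K n m d p) := by
  let φ : PB K n m d →ₐ[K] R := aeval (Sum.elim (fun ij => h ij.1 ij.2) g)
  have : (aeval (PF h g) : MvPolynomial (Idx (n + 1) m d) K →ₐ[K] R) = φ.comp (Psi K n m d) := by
    apply MvPolynomial.algHom_ext
    intro x
    rw [AlgHom.comp_apply, Psi, aeval_X, aeval_X]
    have := PF_map φ.toRingHom (hX K n m d) (gX K n m d) x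
    refine Eq.trans ?_ this.symm
    congr 1
    · ext i j; simp [φ, hX]
    · ext y; simp [φ, gX]
  exact DFunLike.congr_fun this p

/-- the line locus -/
def LL (K : Type*) [Field K] (n m : ℕ) (d : Fin m → ℕ) : Set (tupleSpace K (n + 1) m d) :=
  {F | vanishOnCommonLine K F}

theorem det_hX_ne (K : Type*) [Field K] (n m : ℕ) (d : Fin m → ℕ) : (hX K n m d).det ≠ 0 := by
  intro h
  let φ : PB K n m d →ₐ[K] K := aeval (Sum.elim (fun ij => (1 : Matrix _ _ K) ij.1 ij.2) 0)
  have h1 := congrArg φ h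
  rw [AlgHom.map_det, map_zero] at h1
  have : φ.mapMatrix (hX K n m d) = 1 := by
    ext i j; simp [φ, hX]
  rw [this, Matrix.det_one] at h1
  exact one_ne_zero h1

theorem VI_LL (K : Type*) [Field K] [Infinite K] (n m : ℕ) (d : Fin m → ℕ) :
    VI (tEq K (n + 1) m d).toEquiv (LL K n m d) = RingHom.ker (Psi K n m d) := by
  apply le_antisymm
  · intro p hp
    rw [mem_VI] at hp
    rw [RingHom.mem_ker]
    have : (hX K n m d).det * Psi K n m d p = 0 := by
      apply MvPolynomial.funext
      intro c
      rw [map_mul, map_zero]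
      let h : Matrix (Fin (n + 1 + 1)) (Fin (n + 1 + 1)) K := fun i j => c (Sum.inl (i, j))
      let g : Idx (n + 1) m d → K := fun x => c (Sum.inr x)
      have h1 : eval c (hX K n m d).det = h.det := by
        rw [RingHom.map_det]; congr 1; ext i j; simp [hX, h]
      have h2 : eval c (Psi K n m d p) = aeval (PF h g) p := by
        rw [Psi_spec]
        have : (Sum.elim (fun ij => h ij.1 ij.2) g) = c := by ext (x | x) <;> rfl
        rw [this]; rfl
      rw [h1, h2]
      by_cases hd : h.det = 0
      · rw [hd, zero_mul]
      · have := hp ((tEq K (n + 1) m d).symm (PF h g)) (by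
          refine (vol_iff _).2 ?_
          rw [LinearEquiv.apply_symm_apply]; exact VL_PF h hd g)
        rw [LinearEquiv.coe_toEquiv, LinearEquiv.apply_symm_apply] at this
        rw [this, mul_zero]
    exact (mul_eq_zero.1 this).resolve_left (det_hX_ne K n m d)
  · intro p hp
    rw [mem_VI]
    intro F hF
    obtain ⟨v, w, hli, hvl⟩ := (vol_iff F).1 hF
    obtain ⟨h, g, hfg⟩ := line_param _ v w hli hvl
    rw [LinearEquiv.coe_toEquiv, hfg, Psi_spec, (RingHom.mem_ker).1 hp, map_zero]

theorem LL_irr (K : Type*) [Field K] [Infinite K] (n m : ℕ) (d : Fin m → ℕ) : IsIrreducible (LL K n m d) := by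
  rw [(tChart K (n + 1) m d).irr_iff, VI_LL]
  exact RingHom.ker_isPrime _

theorem LL_over {K : Type*} [Field K] [Infinite K] {n m : ℕ} {d : Fin m → ℕ} {Q : Type*} [Field Q] [Algebra K Q]
    (f : Idx (n + 1) m d → Q)
    (v w : Fin (n + 1 + 1) → Q) (hli : LinearIndependent Q ![v, w]) (hf : VL f v w) (p)
    (hp : p ∈ VI (tEq K (n + 1) m d).toEquiv (LL K n m d)) : aeval f p = 0 := by
  have : Infinite Q := Infinite.of_injective _ (algebraMap K Q).injective
  obtain ⟨h, g, hfg⟩ := line_param _ v w hli hf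
  rw [VI_LL] at hp
  rw [hfg, Psi_spec, (RingHom.mem_ker).1 hp, map_zero]
end P10

section P11
open MvPolynomial

theorem scale_val {N : ℕ} {Q : Type*} [Field Q] (V : ValuationSubring Q) (v : Fin (N + 1) → Q) (hv : v ≠ 0) :
    ∃ i, v i ≠ 0 ∧ ∀ j, (v i)⁻¹ * v j ∈ V := by
  obtain ⟨i, hi⟩ := Finite.exists_max (fun i => V.valuation (v i))
  have h0 : v i ≠ 0 := by
    intro h
    apply hv
    ext j
    have := hi j
    rw [h, map_zero, le_zero_iff, map_eq_zero] at this
    exact this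
  refine ⟨i, h0, fun j => ?_⟩
  rw [← V.valuation_le_one_iff, map_mul, map_inv₀, mul_comm, ← div_eq_mul_inv]
  exact div_le_one_of_le₀ (hi j) zero_le

theorem norm_line {N m : ℕ} {d : Fin m → ℕ} {Q : Type*} [Field Q] (V : ValuationSubring Q) (f : Idx N m d → Q)
    (v w : Fin (N + 1) → Q) (hli : LinearIndependent Q ![v, w]) (hf : VL f v w) :
    ∃ (v' w' : Fin (N + 1) → V) (i j : Fin (N + 1)), v' i = 1 ∧ w' i = 0 ∧ w' j = 1 ∧
      VL f (fun k => (v' k : Q)) (fun k => (w' k : Q)) := by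
  rw [LinearIndependent.pair_iff] at hli
  obtain ⟨i, hi, hiV⟩ := scale_val V v (by
    rintro rfl; exact one_ne_zero (hli 1 0 (by simp)).1)
  let u : Fin (N + 1) → Q := fun k => w k - w i * (v i)⁻¹ * v k
  have hu : u ≠ 0 := by
    intro h
    refine one_ne_zero (hli (- (w i * (v i)⁻¹)) 1 ?_).2
    rw [← h]; ext k; simp [u]; ring
  obtain ⟨j, hj, hjV⟩ := scale_val V u hu
  refine ⟨fun k => ⟨_, hiV k⟩, fun k => ⟨_, hjV k⟩, i, j, ?_, ?_, ?_, ?_⟩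
  · ext; simp [hi]
  · ext; simp [u, hi]
  · ext; simp [hj]
  · have := VL_change f v w hf (v i)⁻¹ 0 (-(u j)⁻¹ * (w i * (v i)⁻¹)) (u j)⁻¹
    have h1 : (fun k => (v i)⁻¹ * v k) = fun j => (v i)⁻¹ * v j + 0 * w j := by funext k; ring
    have h2 : (fun k => (u j)⁻¹ * u k) = fun k => -(u j)⁻¹ * (w i * (v i)⁻¹) * v k + (u j)⁻¹ * w k := by
      funext k; show (u j)⁻¹ * (w k - w i * (v i)⁻¹ * v k) = _; ring
    show VL f (fun k => (v i)⁻¹ * v k) (fun k => (u j)⁻¹ * u k)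
    rw [h1, h2]; exact this

theorem VL_push {N m : ℕ} {d : Fin m → ℕ} {A B : Type*} [CommRing A] [CommRing B] (π : A →+* B)
    (hπ : Function.Surjective π) (f : Idx N m d → A) (v w : Fin (N + 1) → A) (hf : VL f v w) :
    VL (fun x => π (f x)) (fun k => π (v k)) (fun k => π (w k)) := by
  intro a s t
  obtain ⟨s, rfl⟩ := hπ s
  obtain ⟨t, rfl⟩ := hπ t
  have h2 := congrArg π (hf a s t)
  rw [map_fe, map_zero] at h2
  rw [← h2]
  have : (fun j => π s * π (v j) + π t * π (w j)) = fun j => π (s * v j + t * w j) := by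
    funext j; simp
  rw [this]

theorem VL_pull {N m : ℕ} {d : Fin m → ℕ} {A B : Type*} [CommRing A] [CommRing B] (σ : A →+* B)
    (hσ : Function.Injective σ) (f : Idx N m d → A) (v w : Fin (N + 1) → A)
    (hf : VL (fun x => σ (f x)) (fun k => σ (v k)) (fun k => σ (w k))) : VL f v w := by
  intro a s t
  apply hσ
  rw [map_fe, map_zero, ← hf a (σ s) (σ t)]
  have : (fun j => σ s * σ (v j) + σ t * σ (w j)) = fun j => σ (s * v j + t * w j) := by
    funext j; simp
  rw [this]

theorem VL_point {N m : ℕ} {d : Fin m → ℕ} {K k : Type*} [Field K] [IsAlgClosed K] [Field k] [Algebra K k]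
    (f : Idx N m d → K) (vb wb : Fin (N + 1) → k) (i j) (hvi : vb i = 1) (hwi : wb i = 0) (hwj : wb j = 1)
    (hk : VL (fun x => algebraMap K k (f x)) vb wb) : ∃ v w, LinearIndependent K ![v, w] ∧ VL f v w := by
  let R := Algebra.adjoin K (Set.range vb ∪ Set.range wb)
  have : Algebra.FiniteType K R := by
    refine (Subalgebra.fg_iff_finiteType _).1 (Subalgebra.fg_def.2 ⟨_, ?_, rfl⟩)
    exact (Set.finite_range _).union (Set.finite_range _)
  obtain ⟨ε, -⟩ := exists_point (E := K) (R := R) 1 one_ne_zero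
  let vR : Fin (N + 1) → R := fun l => ⟨vb l, Algebra.subset_adjoin (Or.inl ⟨l, rfl⟩)⟩
  let wR : Fin (N + 1) → R := fun l => ⟨wb l, Algebra.subset_adjoin (Or.inr ⟨l, rfl⟩)⟩
  have hvR : vR i = 1 := by ext; simp [vR, hvi]
  have hwR : wR i = 0 := by ext; simp [wR, hwi]
  have hwR' : wR j = 1 := by ext; simp [wR, hwj]
  have h1 : VL (fun x => algebraMap K R (f x)) vR wR := VL_pull R.val.toRingHom Subtype.val_injective _ _ _ hk
  have h2 := VL_push ε.toRingHom (fun x => ⟨algebraMap K R x, ε.commutes x⟩) _ _ _ h1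
  have h3 : (fun x => ε.toRingHom (algebraMap K R (f x))) = f := by
    funext x; exact ε.commutes _
  rw [h3] at h2
  refine ⟨fun l => ε (vR l), fun l => ε (wR l), ?_, h2⟩
  rw [LinearIndependent.pair_iff]
  intro s t hst
  have h1 := congrFun hst i
  have h2 := congrFun hst j
  simp [hvR, hwR] at h1
  simp [h1, hwR'] at h2
  exact ⟨h1, h2⟩

theorem VL_place {N m : ℕ} {d : Fin m → ℕ} {K Q : Type*} [Field K] [IsAlgClosed K] [Field Q]
    (φ : MvPolynomial (Idx N m d) K →+* Q) (f : Idx N m d → K)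
    (h : ∀ b, φ b = 0 → aeval f b = 0) (v w : Fin (N + 1) → Q) (hli : LinearIndependent Q ![v, w])
    (hf : VL (fun x => φ (X x)) v w) : ∃ v w, LinearIndependent K ![v, w] ∧ VL f v w := by
  let ψ : MvPolynomial (Idx N m d) K →+* K := (aeval f).toRingHom
  obtain ⟨V, hV⟩ := exists_place φ ψ (fun b hb hφ => hb (h b hφ))
  obtain ⟨v', w', i, j, hvi, hwi, hwj, hvl'⟩ := norm_line V _ v w hli hf
  let φV : MvPolynomial (Idx N m d) K →+* V := φ.codRestrict V.toSubring (fun b => (hV b).1)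
  let k := IsLocalRing.ResidueField V
  let π : V →+* k := IsLocalRing.residue V
  let _ : Algebra K k := (π.comp (φV.comp C)).toAlgebra
  have hπ : ∀ b, π (φV b) = algebraMap K k (ψ b) := by
    intro b
    have h1 : ψ (b - C (ψ b)) = 0 := by
      rw [map_sub]
      show ψ b - aeval _ (C (ψ b)) = 0
      rw [aeval_C]; simp
    have h2 := (hV _).2.1 h1
    have h3 : φV (b - C (ψ b)) ∈ IsLocalRing.maximalIdeal V := by
      rw [← ValuationSubring.coe_mem_nonunits_iff]; exact h2
    have h4 := (IsLocalRing.residue_eq_zero_iff _).2 h3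
    rw [map_sub, map_sub, sub_eq_zero] at h4
    exact h4
  have h1 : VL (fun x => φV (X x)) v' w' := VL_pull V.subtype Subtype.val_injective _ _ _ hvl'
  have h2 := VL_push π IsLocalRing.residue_surjective _ _ _ h1
  have h3 : (fun x => π (φV (X x))) = fun x => algebraMap K k (f x) := by
    funext x; rw [hπ]; congr 1; exact aeval_X _ _
  rw [h3] at h2
  exact VL_point f _ _ i j (by rw [hvi, map_one]) (by rw [hwi, map_zero]) (by rw [hwj, map_one]) h2

theorem LL_closed (K : Type*) [Field K] [IsAlgClosed K] (n m : ℕ) (d : Fin m → ℕ) : IsClosed (LL K n m d) := by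
  have : Infinite K := IsAlgClosed.instInfinite
  refine isClosed_of_closure_subset fun F hF => ?_
  rw [(tChart K (n + 1) m d).mem_closure, VI_LL] at hF
  let Q := FractionRing (PB K n m d)
  let φ : MvPolynomial (Idx (n + 1) m d) K →+* Q := (algebraMap (PB K n m d) Q).comp (Psi K n m d).toRingHom
  have hfPF : (fun x => φ (X x)) = PF ((hX K n m d).map (algebraMap (PB K n m d) Q)) (fun x => algebraMap _ Q (gX K n m d x)) := by
    ext x
    rw [← PF_map]
    show algebraMap _ _ (Psi K n m d (X x)) = _
    rw [Psi, aeval_X]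
  obtain ⟨v, w, hli, hvl⟩ := VL_PF ((hX K n m d).map (algebraMap (PB K n m d) Q)) (by
    have := RingHom.map_det (algebraMap (PB K n m d) Q) (hX K n m d)
    rw [RingHom.mapMatrix_apply] at this
    rw [← this]
    exact (map_ne_zero_iff _ (IsFractionRing.injective (PB K n m d) Q)).2 (det_hX_ne K n m d))
    (fun x => algebraMap _ Q (gX K n m d x))
  rw [← hfPF] at hvl
  refine (vol_iff F).2 (VL_place φ _ (fun b hb => ?_) v w hli hvl)
  have h1 : Psi K n m d b = 0 := (map_eq_zero_iff _ (IsFractionRing.injective (PB K n m d) Q)).1 hb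
  exact hF b h1
end P11

section P12
open MvPolynomial

theorem indep_of_tangent {J K : Type*} [Field K] (q : J → MvPolynomial J K)
    (hq : ∀ y, q y - X y ∈ idealOfVars J K ^ 2) : AlgebraicIndependent K q := by
  classical
  have hX : ∀ y, (X y : MvPolynomial J K) ∈ idealOfVars J K := fun y => Ideal.subset_span ⟨y, rfl⟩
  have hqm : ∀ y, q y ∈ idealOfVars J K := fun y => by
    have := Ideal.add_mem _ (Ideal.pow_le_self two_ne_zero (hq y)) (hX y)
    simpa using this
  have key : ∀ α : J →₀ ℕ, aeval q (monomial α (1 : K)) - monomial α 1 ∈ idealOfVars J K ^ (α.degree + 1) := by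
    intro α
    induction α using Finsupp.induction_linear with
    | zero => simp
    | add f g hf hg =>
      have e : (monomial (f + g) (1 : K)) = monomial f 1 * monomial g 1 := by rw [monomial_mul, one_mul]
      have hmf : ∀ f : J →₀ ℕ, (monomial f (1 : K)) ∈ idealOfVars J K ^ f.degree := fun f => by
        rw [monomial_mem_pow_idealOfVars_iff _ _ one_ne_zero]
      have hqg : aeval q (monomial g (1 : K)) ∈ idealOfVars J K ^ g.degree := by
        have := Ideal.add_mem _ (Ideal.pow_le_pow_right (Nat.le_succ _) hg) (hmf g)
        simpa using this
      rw [e, map_mul, map_add]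
      have e2 : aeval q (monomial f (1 : K)) * aeval q (monomial g (1 : K)) - monomial f 1 * monomial g 1
        = (aeval q (monomial f (1 : K)) - monomial f 1) * aeval q (monomial g (1 : K)) +
          monomial f 1 * (aeval q (monomial g (1 : K)) - monomial g 1) := by ring
      rw [e2]
      refine Ideal.add_mem _ ?_ ?_
      · rw [show f.degree + g.degree + 1 = (f.degree + 1) + g.degree by ring, pow_add]
        exact Ideal.mul_mem_mul hf hqg
      · rw [add_assoc, pow_add]
        exact Ideal.mul_mem_mul (hmf f) hg
    | single y k =>
      have e : (monomial (Finsupp.single y k) (1 : K)) = X y ^ k := by rw [X_pow_eq_monomial]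
      rw [e, map_pow, aeval_X, Finsupp.degree_single]
      induction k with
      | zero => simp
      | succ k ih =>
        have e2 : q y ^ (k + 1) - X y ^ (k + 1) = (q y ^ k - X y ^ k) * q y + X y ^ k * (q y - X y) := by ring
        rw [e2]
        refine Ideal.add_mem _ ?_ ?_
        · rw [pow_succ]; exact Ideal.mul_mem_mul (ih (by rw [X_pow_eq_monomial])) (hqm y)
        · rw [add_assoc, pow_add]
          exact Ideal.mul_mem_mul (Ideal.pow_mem_pow (hX y) k) (hq y)
  rw [algebraicIndependent_iff]
  intro p hp
  by_contra hne
  obtain ⟨α, hα, hmin⟩ := Finset.exists_min_image p.support Finsupp.degree (by rwa [support_nonempty])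
  have h1 : aeval q p - p ∈ idealOfVars J K ^ (α.degree + 1) := by
    conv => enter [2]; rw [p.as_sum]
    rw [map_sum, ← Finset.sum_sub_distrib]
    refine Ideal.sum_mem _ fun β hβ => ?_
    have e : monomial β (coeff β p) = C (coeff β p) * monomial β 1 := by rw [C_mul_monomial, mul_one]
    rw [e, map_mul, aeval_C, algebraMap_eq, ← mul_sub]
    exact Ideal.mul_mem_left _ _ (Ideal.pow_le_pow_right (Nat.succ_le_succ (hmin β hβ)) (key β))
  rw [hp, zero_sub, neg_mem_iff, mem_pow_idealOfVars_iff] at h1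
  have := h1 α hα
  omega

theorem cmpo_one {r : ℕ} {R : Type*} [CommRing R] (p : MvPolynomial (Fin (r + 1)) R) : cmpo 1 p = p := by
  have : (cmpo 1 : MvPolynomial (Fin (r + 1)) R →ₐ[R] _) = AlgHom.id R _ := by
    apply MvPolynomial.algHom_ext
    intro j
    simp only [cmpo, aeval_X, lin, AlgHom.id_apply]
    rw [Finset.sum_eq_single j]
    · simp
    · intro b _ hb; rw [Matrix.one_apply_ne hb.symm]; simp
    · simp
  rw [this]; rfl

theorem cmpo_mod {r : ℕ} {R : Type*} [CommRing R] (I : Ideal R) (h : Matrix (Fin (r + 1)) (Fin (r + 1)) R)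
    (hh : ∀ a b, h a b - (1 : Matrix _ _ R) a b ∈ I) (p : MvPolynomial (Fin (r + 1)) R) (β) :
    coeff β (cmpo h p) - coeff β p ∈ I := by
  rw [← Ideal.Quotient.eq, ← coeff_map, ← coeff_map, cmp_map]
  have : h.map (Ideal.Quotient.mk I) = 1 := by
    ext a b
    rw [Matrix.map_apply, Ideal.Quotient.eq.2 (hh a b)]
    by_cases hab : a = b
    · subst hab; simp
    · simp [Matrix.one_apply_ne hab]
  rw [this, cmpo_one]

theorem cmpo_mod2 {r : ℕ} {R : Type*} [CommRing R] (I : Ideal R) (h : Matrix (Fin (r + 1)) (Fin (r + 1)) R)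
    (hh : ∀ a b, h a b - (1 : Matrix _ _ R) a b ∈ I) (p : MvPolynomial (Fin (r + 1)) R)
    (hp : ∀ β, coeff β p ∈ I) (β) :
    coeff β (cmpo h p) - coeff β p ∈ I ^ 2 := by
  have : coeff β (cmpo h p) - coeff β p = ∑ γ ∈ p.support, coeff γ p * (coeff β (cmpo h (monomial γ 1)) - coeff β (monomial γ 1)) := by
    conv_lhs => rw [p.as_sum]
    rw [map_sum, coeff_sum, coeff_sum, ← Finset.sum_sub_distrib]
    refine Finset.sum_congr rfl fun γ _ => ?_
    have e : monomial γ (coeff γ p) = C (coeff γ p) * monomial γ 1 := by rw [C_mul_monomial, mul_one]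
    rw [e, map_mul, cmpo, aeval_C, algebraMap_eq, coeff_C_mul, coeff_C_mul, mul_sub]
  rw [this, pow_two]
  exact Ideal.sum_mem _ fun γ _ => Ideal.mul_mem_mul (hp γ) (cmpo_mod I h hh _ _)

theorem G0_add {n m : ℕ} {d : Fin m → ℕ} {R : Type*} [CommRing R] (g g' : Idx (n + 1) m d → R) (i : Fin m) :
    G0 (fun x => g x + g' x) i = G0 g i + G0 g' i := by
  rw [G0, G0, G0, frm, frm, frm, ← Finset.sum_add_distrib]
  refine Finset.sum_congr rfl fun α _ => ?_
  split_ifs <;> simp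

open Classical in
theorem coeff_G0 {n m : ℕ} {d : Fin m → ℕ} {R : Type*} [CommRing R] (g : Idx (n + 1) m d → R) (x : Idx (n + 1) m d) :
    coeff x.2.1 (G0 g x.1) = if PureM x.2.1 then 0 else g x := by
  rw [G0, coeff_frm]

theorem G0_of_poly {n m : ℕ} {d : Fin m → ℕ} {R : Type*} [CommRing R] (i : Fin m) (B : MvPolynomial (Fin (n + 1 + 1)) R)
    (hB : B.IsHomogeneous (d i)) (hp : ∀ α, PureM α → coeff α B = 0) (g : Idx (n + 1) m d → R)
    (hg : ∀ α : Mon (n + 1) (d i), g ⟨i, α⟩ = coeff α.1 B) : G0 g i = B := by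
  rw [← frm_coeff B hB, G0]
  congr 1; ext α
  split_ifs with h
  · exact (hp _ h).symm
  · exact hg α

/-- unipotent matrix -/
def hU {n : ℕ} {R : Type*} [CommRing R] (u w : Fin n → R) : Matrix (Fin (n + 1 + 1)) (Fin (n + 1 + 1)) R :=
  fun a b => (1 : Matrix _ _ R) a b - (Fin.cases 0 (Fin.cases 0 fun j => Fin.cases (u j) (Fin.cases (w j) fun _ => 0) b) a : R)

theorem lin_one {r : ℕ} {R : Type*} [CommRing R] (a : Fin (r + 1)) : lin (fun b => (1 : Matrix _ _ R) a b) = X a := by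
  have := cmpo_one (X a : MvPolynomial (Fin (r + 1)) R)
  rwa [cmpo, aeval_X] at this

theorem lin_hU0 {n : ℕ} {R : Type*} [CommRing R] (u w : Fin n → R) : lin (hU u w 0) = X 0 := by
  rw [← lin_one]; congr 1; ext b; exact sub_zero _

theorem lin_hU2 {n : ℕ} {R : Type*} [CommRing R] (u w : Fin n → R) (j : Fin n) :
    lin (hU u w j.succ.succ) = X j.succ.succ - C (u j) * X 0 - C (w j) * X 1 := by
  have : lin (hU u w j.succ.succ) = lin (fun b => (1 : Matrix _ _ R) j.succ.succ b) - 
     lin (r := n + 1) (Fin.cases (u j) (Fin.cases (w j) fun _ => 0)) := by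
    rw [lin, lin, lin, ← Finset.sum_sub_distrib]
    refine Finset.sum_congr rfl fun b _ => ?_
    rw [hU, C_sub, sub_mul]; rfl
  rw [this, lin_one, lin, Fin.sum_univ_succ, Fin.sum_univ_succ, Finset.sum_eq_zero (fun b _ => by simp)]
  show X j.succ.succ - (C (u j) * X 0 + (C (w j) * X 1 + 0)) = _
  ring

theorem card_pure (n d : ℕ) : Nat.card {α : Mon (n + 1) d // PureM α.1} ≤ d + 1 := by
  classical
  have : Function.Injective (fun α : {α : Mon (n + 1) d // PureM α.1} => (⟨α.1.1 0, by
      have h1 := α.1.2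
      have := Finsupp.le_degree 0 α.1.1
      omega⟩ : Fin (d + 1))) := by
    rintro ⟨⟨α, hα⟩, hp⟩ ⟨⟨β, hβ⟩, hq⟩ h
    simp only [Fin.mk.injEq] at h
    have hs : ∀ γ : Fin (n + 1 + 1) →₀ ℕ, PureM γ → γ.degree = γ 0 + γ 1 := by
      intro γ hγ
      rw [Finsupp.degree_eq_sum, Fin.sum_univ_succ, Fin.sum_univ_succ, Finset.sum_eq_zero (fun b _ => hγ b)]
      rfl
    have h1 := hs α hp
    have h2 := hs β hq
    congr 2
    ext a
    refine Fin.cases h (fun a => Fin.cases ?_ (fun a => ?_) a) a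
    · show α 1 = β 1; omega
    · rw [hp, hq]
  have h2 := Nat.card_le_card_of_injective _ this
  simpa using h2

abbrev JJ (n : ℕ) (d : Fin (n + 1) → ℕ) := {x : Idx (n + 1) (n + 1) d // ¬ PureM x.2.1} ⊕ (Fin n ⊕ Fin n)

/-- base point -/
noncomputable def Bp {n : ℕ} (d : Fin (n + 1) → ℕ) (R : Type*) [CommRing R] (i : Fin (n + 1)) : MvPolynomial (Fin (n + 1 + 1)) R :=
  Fin.lastCases 0 (fun j => X 0 ^ (d j.castSucc - 1) * X j.succ.succ) i

theorem Bp_cs {n : ℕ} (d : Fin (n + 1) → ℕ) (R : Type*) [CommRing R] (j : Fin n) :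
   Bp d R j.castSucc = X 0 ^ (d j.castSucc - 1) * X j.succ.succ := by
  rw [Bp, Fin.lastCases_castSucc]

theorem Bp_last {n : ℕ} (d : Fin (n + 1) → ℕ) (R : Type*) [CommRing R] :
   Bp d R (Fin.last n) = 0 := by
  rw [Bp, Fin.lastCases_last]

theorem Bp_map {n : ℕ} (d : Fin (n + 1) → ℕ) {R S : Type*} [CommRing R] [CommRing S] (φ : R →+* S) (i) :
    MvPolynomial.map φ (Bp d R i) = Bp d S i := by
  refine Fin.lastCases ?_ (fun j => ?_) i
  · simp [Bp_last]
  · simp [Bp_cs]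

theorem Bp_hom {n : ℕ} (d : Fin (n + 1) → ℕ) (hd : ∀ i, 1 ≤ d i) (R : Type*) [CommRing R] (i) :
    (Bp d R i).IsHomogeneous (d i) := by
  refine Fin.lastCases ?_ (fun j => ?_) i
  · rw [Bp_last]; exact isHomogeneous_zero _ _ _
  · rw [Bp_cs]
    have := ((isHomogeneous_X R (0 : Fin (n + 1 + 1))).pow (d j.castSucc - 1)).mul (isHomogeneous_X R j.succ.succ)
    have hd := hd j.castSucc
    convert this using 1
    omega

theorem Bp_pure {n : ℕ} (d : Fin (n + 1) → ℕ) (R : Type*) [CommRing R] (i) (α) (hα : PureM α) :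
    coeff α (Bp d R i) = 0 := by
  classical
  refine Fin.lastCases ?_ (fun j => ?_) i
  · rw [Bp_last, coeff_zero]
  · rw [Bp_cs, coeff_mul_X', if_neg]
    rw [Finsupp.mem_support_iff, hα j]; simp

theorem cmp_Bp {n : ℕ} (d : Fin (n + 1) → ℕ) (hd : ∀ i, 1 ≤ d i) {R : Type*} [CommRing R] (u w : Fin n → R) (j : Fin n) :
    cmpo (hU u w) (Bp d R j.castSucc) = Bp d R j.castSucc - monomial (Finsupp.single 0 (d j.castSucc)) (u j)
      - monomial (Finsupp.single 0 (d j.castSucc - 1) + Finsupp.single 1 1) (w j) := by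
  have e1 : monomial (Finsupp.single 0 (d j.castSucc)) (u j) = C (u j) * (X 0 ^ (d j.castSucc - 1) * X (0 : Fin (n + 1 + 1))) := by
    rw [← pow_succ, Nat.sub_add_cancel (hd _), X_pow_eq_monomial, C_mul_monomial, mul_one]
  have e2 : monomial (Finsupp.single 0 (d j.castSucc - 1) + Finsupp.single 1 1) (w j)
     = C (w j) * (X 0 ^ (d j.castSucc - 1) * X (1 : Fin (n + 1 + 1))) := by
    rw [X_pow_eq_monomial, X, monomial_mul, C_mul_monomial, mul_one, mul_one]
  rw [e1, e2, Bp_cs, map_mul, map_pow, cmpo, aeval_X, aeval_X, lin_hU0, lin_hU2]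
  ring

theorem tangent {n : ℕ} (d : Fin (n + 1) → ℕ) (hd : ∀ i, 1 ≤ d i) {R : Type*} [CommRing R] (I : Ideal R)
    (u w : Fin n → R) (hu : ∀ j, u j ∈ I) (hw : ∀ j, w j ∈ I) (δ : Idx (n + 1) (n + 1) d → R) (hδ : ∀ x, δ x ∈ I) 
    (f : Idx (n + 1) (n + 1) d → R) (hf : f = PF (hU u w) (fun x => coeff x.2.1 (Bp d R x.1) + δ x)) :
    (∀ x, ¬ PureM x.2.1 → f x - coeff x.2.1 (Bp d R x.1) - δ x ∈ I ^ 2) ∧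
    (∀ x, PureM x.2.1 → f x - coeff x.2.1 (cmpo (hU u w) (Bp d R x.1)) ∈ I ^ 2) := by
  have hG : ∀ i, G0 (fun x : Idx (n + 1) (n + 1) d => coeff x.2.1 (Bp d R x.1)) i = Bp d R i := fun i => 
    G0_of_poly i _ (Bp_hom d hd R i) (Bp_pure d R i) _ (fun _ => rfl)
  have hf' : ∀ x, f x = coeff x.2.1 (cmpo (hU u w) (Bp d R x.1)) + coeff x.2.1 (cmpo (hU u w) (G0 δ x.1)) := by
    intro x
    rw [hf, PF, G0_add, map_add, coeff_add, hG]
  have hh : ∀ a b, hU u w a b - (1 : Matrix _ _ R) a b ∈ I := by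
    intro a b
    rw [hU, sub_sub_cancel_left, neg_mem_iff]
    refine Fin.cases (I.zero_mem) (fun a => Fin.cases (I.zero_mem) (fun a => ?_) a) a
    refine Fin.cases (hu _) (fun b => Fin.cases (hw _) (fun b => I.zero_mem) b) b
  have hc : ∀ i β, coeff β (G0 δ i) ∈ I := by
    intro i β
    rw [G0, frm, coeff_sum]
    refine Ideal.sum_mem _ fun α _ => ?_
    classical
    rw [coeff_monomial]
    split_ifs
    exacts [I.zero_mem, hδ _, I.zero_mem]
  have h2 := fun x : Idx (n + 1) (n + 1) d => cmpo_mod2 I _ hh (G0 δ x.1) (hc x.1) x.2.1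
  refine ⟨fun x hx => ?_, fun x hx => ?_⟩
  · have h3 := h2 x
    rw [coeff_G0, if_neg hx] at h3
    have h4 : coeff x.2.1 (cmpo (hU u w) (Bp d R x.1)) = coeff x.2.1 (Bp d R x.1) := by
      obtain ⟨i, α⟩ := x
      revert α
      refine Fin.lastCases ?_ (fun j => ?_) i
      · intro α _ _; simp only [Bp_last, map_zero]
      · intro α hx _
        classical
        simp only [cmp_Bp d hd, coeff_sub, coeff_monomial]
        rw [if_neg, if_neg, sub_zero, sub_zero]
        · intro h; apply hx; show PureM α.1; rw [← h]; intro k; simp [Fin.ext_iff]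
        · intro h; apply hx; show PureM α.1; rw [← h]; intro k; simp [Fin.ext_iff]
    rw [hf', h4]
    convert h3 using 1; ring
  · have h3 := h2 x
    rw [coeff_G0, if_pos hx] at h3
    rw [hf']
    convert h3 using 1; ring
end P12

section P13
open MvPolynomial

theorem card_JJ (n : ℕ) (d : Fin (n + 1) → ℕ) :
    ∑ i, Fintype.card (Mon (n + 1) (d i)) + 2 * n ≤ Nat.card (JJ n d) + ∑ i, (d i + 1) := by
  classical
  have h1 : Nat.card (JJ n d) = Nat.card {x : Idx (n + 1) (n + 1) d // ¬ PureM x.2.1} + 2 * n := by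
    rw [Nat.card_sum, Nat.card_sum]; simp; ring
  have h2 : Nat.card {x : Idx (n + 1) (n + 1) d // PureM x.2.1} ≤ ∑ i, (d i + 1) := by
    let e : {x : Idx (n + 1) (n + 1) d // PureM x.2.1} ≃ Σ i : Fin (n + 1), {α : Mon (n + 1) (d i) // PureM α.1} :=
      { toFun := fun x => ⟨x.1.1, ⟨x.1.2, x.2⟩⟩
        invFun := fun x => ⟨⟨x.1, x.2.1⟩, x.2.2⟩
        left_inv := fun _ => rfl
        right_inv := fun _ => rfl }
    rw [Nat.card_congr e, Nat.card_sigma]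
    exact Finset.sum_le_sum fun i _ => card_pure n (d i)
  have h3 : Nat.card {x : Idx (n + 1) (n + 1) d // PureM x.2.1} + Nat.card {x : Idx (n + 1) (n + 1) d // ¬ PureM x.2.1}
      = ∑ i, Fintype.card (Mon (n + 1) (d i)) := by
    rw [← Nat.card_sum, Nat.card_congr (Equiv.sumCompl _), Nat.card_sigma]
    simp
  omega

theorem LL_dim (K : Type*) [Field K] [IsAlgClosed K] (n : ℕ) (d : Fin (n + 1) → ℕ) (hd : ∀ i, 1 ≤ d i) :
    ((Nat.card (JJ n d) : ℕ) : WithBot ℕ∞) ≤ dimSet (LL K n (n + 1) d) := by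
  classical
  have : Infinite K := IsAlgClosed.instInfinite
  rw [(tChart K (n + 1) (n + 1) d).dim]
  let S := MvPolynomial (JJ n d) K
  let I : Ideal S := idealOfVars (JJ n d) K
  have hX : ∀ y, (X y : S) ∈ I := fun y => Ideal.subset_span ⟨y, rfl⟩
  let u : Fin n → S := fun j => X (Sum.inr (Sum.inl j))
  let w : Fin n → S := fun j => X (Sum.inr (Sum.inr j))
  let δ : Idx (n + 1) (n + 1) d → S := fun x => if h : PureM x.2.1 then 0 else X (Sum.inl ⟨x, h⟩)
  have hδ : ∀ x, δ x ∈ I := by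
    intro x; simp only [δ]; split_ifs
    exacts [I.zero_mem, hX _]
  let f := PF (hU u w) (fun x => coeff x.2.1 (Bp d S x.1) + δ x)
  obtain ⟨t1, t2⟩ := tangent d hd I u w (fun _ => hX _) (fun _ => hX _) δ hδ f rfl
  let P := VI (tEq K (n + 1) (n + 1) d).toEquiv (LL K n (n + 1) d)
  have hP : P.IsPrime := ((tChart K (n + 1) (n + 1) d).irr_iff _).1 (LL_irr K n (n + 1) d)
  let A := MvPolynomial (Idx (n + 1) (n + 1) d) K
  let θ : (A ⧸ P) →ₐ[K] S := Ideal.Quotient.liftₐ P (aeval f) (by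
    intro p hp
    rw [show P = _ from VI_LL K n (n + 1) d] at hp
    show aeval (PF _ _) p = 0
    rw [Psi_spec, (RingHom.mem_ker).1 hp, map_zero])
  have hθ : ∀ p, θ (Ideal.Quotient.mk P p) = aeval f p := fun p => rfl
  let a : JJ n d → A ⧸ P := fun y => Ideal.Quotient.mk P (Sum.elim (fun x => X x.1 - C (coeff x.1.2.1 (Bp d K x.1.1)))
    (Sum.elim (fun j => - X ⟨j.castSucc, ⟨Finsupp.single 0 (d j.castSucc), by simp⟩⟩)
      (fun j => - X ⟨j.castSucc, ⟨Finsupp.single 0 (d j.castSucc - 1) + Finsupp.single 1 1, by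
        have := hd j.castSucc
        rw [map_add, Finsupp.degree_single, Finsupp.degree_single]; omega⟩⟩)) y)
  have hq : AlgebraicIndependent K (fun y => θ (a y)) := by
    apply indep_of_tangent
    rintro (⟨x, hx⟩ | j | j)
    · have := t1 x hx
      simp only [δ, dif_neg hx] at this
      simp only [a, hθ, Sum.elim_inl, map_sub, aeval_X, aeval_C]
      rw [algebraMap_eq, ← coeff_map, Bp_map]
      exact this
    · have hp : PureM (Finsupp.single (0 : Fin (n + 1 + 1)) (d j.castSucc)) := by intro k; simp
      have := t2 ⟨j.castSucc, ⟨Finsupp.single 0 (d j.castSucc), by simp⟩⟩ hp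
      simp only [a, hθ, Sum.elim_inl, Sum.elim_inr, map_neg, aeval_X]
      simp only [cmp_Bp d hd, coeff_sub, Bp_pure d S _ _ hp, coeff_monomial] at this
      rw [if_pos trivial, if_neg] at this
      · rw [← neg_mem_iff]
        convert this using 1
        simp only [u]; ring
      · intro h
        have := DFunLike.congr_fun h 1
        simp at this
    · have hp : PureM (Finsupp.single (0 : Fin (n + 1 + 1)) (d j.castSucc - 1) + Finsupp.single 1 1) := by
        intro k; simp [Fin.ext_iff]
      have := t2 ⟨j.castSucc, ⟨Finsupp.single 0 (d j.castSucc - 1) + Finsupp.single 1 1, by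
        have := hd j.castSucc
        rw [map_add, Finsupp.degree_single, Finsupp.degree_single]; omega⟩⟩ hp
      simp only [a, hθ, Sum.elim_inr, map_neg, aeval_X]
      simp only [cmp_Bp d hd, coeff_sub, Bp_pure d S _ _ hp, coeff_monomial] at this
      rw [if_pos trivial, if_neg] at this
      · rw [← neg_mem_iff]
        convert this using 1
        simp only [w]; ring
      · intro h
        have := DFunLike.congr_fun h 1
        simp at this
  have ha : AlgebraicIndependent K a := AlgebraicIndependent.of_comp θ hq
  have e : Fin (Nat.card (JJ n d)) ≃ JJ n d := (Finite.equivFin _).symm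
  exact dim_ge_of_indep (k := K) (B := A ⧸ P) (fun i => a (e i)) (ha.comp e e.injective)
end P13

section P14
open MvPolynomial
attribute [local instance] MvPolynomial.gradedAlgebra

/-- generic ideal of a subtuple -/
noncomputable def gI (K : Type*) [Field K] {r m k : ℕ} (d : Fin m → ℕ) (ι : Fin k → Fin m) :
    Ideal (MvPolynomial (Fin (r + 1)) (MvPolynomial (Idx r m d) K)) :=
  FI (d := fun i => d (ι i)) fun i α => X ⟨ι i, α⟩

/-- specialised ideal of a subtuple -/
noncomputable def sI {r m k : ℕ} {d : Fin m → ℕ} {κ : Type*} [Field κ] (f : Idx r m d → κ) (ι : Fin k → Fin m) :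
    Ideal (MvPolynomial (Fin (r + 1)) κ) :=
  FI (d := fun i => d (ι i)) fun i α => f ⟨ι i, α⟩

theorem sI_hom {r m k : ℕ} {d : Fin m → ℕ} {κ : Type*} [Field κ] (f : Idx r m d → κ) (ι : Fin k → Fin m) :
    (sI f ι).IsHomogeneous (homogeneousSubmodule (Fin (r + 1)) κ) := FI_hom _

theorem sI_eq {K : Type*} [Field K] {r m k : ℕ} {d : Fin m → ℕ} (F : tupleSpace K r m d) (ι : Fin k → Fin m) :
    Ideal.span (Set.range fun i => (F (ι i) : MvPolynomial (Fin (r + 1)) K)) = sI (tEq K r m d F) ι := by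
  rw [sI, FI]
  congr 2; ext1 i; exact tEq_frm F (ι i)

theorem gI_map {K κ : Type*} [Field K] [Field κ] [Algebra K κ] {r m k s : ℕ} {d : Fin m → ℕ} (ι : Fin k → Fin m)
    (l : Fin s → Fin (r + 1) → K) (φ : MvPolynomial (Idx r m d) K →ₐ[K] κ) :
    (gI K d ι ⊔ LI (fun j i => C (l j i))).map (MvPolynomial.map φ.toRingHom) =
      sI (fun x => φ (X x)) ι ⊔ LI (fun j i => algebraMap K κ (l j i)) := by
  rw [Ideal.map_sup, gI, FI_map, LI_map, sI]
  congr 2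
  ext j i; exact φ.commutes _

/-- the open condition -/
def OC {K : Type*} [Field K] {r m k s : ℕ} {d : Fin m → ℕ} (ι : Fin k → Fin m)
    (l : Fin s → Fin (r + 1) → K) (N : ℕ) (a : MvPolynomial (Idx r m d) K) : Prop :=
  ∀ α : Fin (r + 1) →₀ ℕ, α.degree = N → monomial α a ∈ gI K d ι ⊔ LI (fun j i => C (l j i))

theorem small_open {K : Type*} [Field K] [Infinite K] {r m k s : ℕ} {d : Fin m → ℕ} (ι : Fin k → Fin m) (f : Idx r m d → K)
    (h : ringKrullDim (MvPolynomial (Fin (r + 1)) K ⧸ sI f ι) ≤ s) :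
    ∃ (l : Fin s → Fin (r + 1) → K) (N : ℕ) (a : MvPolynomial (Idx r m d) K), aeval f a ≠ 0 ∧ OC ι l N a := by
  obtain ⟨l, N, hN⟩ := normA (K := K) s _ (sI_hom f ι) h
  have h1 := gI_map (d := d) ι l (aeval f)
  have h2 : (fun x => aeval f (X x : MvPolynomial (Idx r m d) K)) = f := by funext x; exact aeval_X _ _
  rw [h2] at h1
  obtain ⟨a, ha, hao⟩ := open_cond (aeval f : MvPolynomial (Idx r m d) K →ₐ[K] K).toRingHom
    (fun x => ⟨C x, by simp⟩) (gI K d ι ⊔ LI (fun j i => C (l j i))) (Ideal.IsHomogeneous.sup (FI_hom _) (LI_hom _)) N (by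
      rw [h1]; exact hN)
  exact ⟨l, N, a, ha, hao⟩

theorem small_spec {K κ : Type*} [Field K] [Field κ] [Algebra K κ] {r m k s : ℕ} {d : Fin m → ℕ} (ι : Fin k → Fin m)
    (l : Fin s → Fin (r + 1) → K) (N : ℕ) (a : MvPolynomial (Idx r m d) K) (h : OC ι l N a) (f : Idx r m d → κ)
    (hf : aeval f a ≠ 0) (α : Fin (r + 1) →₀ ℕ) (hα : α.degree = N) :
    monomial α 1 ∈ sI f ι ⊔ Ideal.span (Set.range fun j => lin (fun i => algebraMap K κ (l j i))) := by
  have h1 := spec_irr (aeval f : MvPolynomial (Idx r m d) K →ₐ[K] κ).toRingHom _ N a hf h α hα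
  rw [gI_map] at h1
  have h2 : (fun x => aeval f (X x : MvPolynomial (Idx r m d) K)) = f := by funext x; exact aeval_X _ _
  rw [h2] at h1
  exact h1

theorem small_dim {K κ : Type*} [Field K] [Field κ] [Algebra K κ] {r m k s : ℕ} {d : Fin m → ℕ} (ι : Fin k → Fin m)
    (l : Fin s → Fin (r + 1) → K) (N : ℕ) (a : MvPolynomial (Idx r m d) K) (h : OC ι l N a) (f : Idx r m d → κ)
    (hf : aeval f a ≠ 0) : ringKrullDim (MvPolynomial (Fin (r + 1)) κ ⧸ sI f ι) ≤ s :=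
  dimB _ (sI_hom f ι) _ N (small_spec ι l N a h f hf)

theorem gen_small {K κ : Type*} [Field K] [Infinite K] [Field κ] [Algebra K κ] {r m k s : ℕ} {d : Fin m → ℕ} (ι : Fin k → Fin m)
    (f : Idx r m d → κ) (P : Ideal (MvPolynomial (Idx r m d) K)) [P.IsPrime]
    [Algebra (MvPolynomial (Idx r m d) K ⧸ P) κ] [IsFractionRing (MvPolynomial (Idx r m d) K ⧸ P) κ] 
    [IsScalarTower K (MvPolynomial (Idx r m d) K ⧸ P) κ] 
    (hf : ∀ x, f x = algebraMap _ κ (Ideal.Quotient.mk P (X x)))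
    (h : ringKrullDim (MvPolynomial (Fin (r + 1)) κ ⧸ sI f ι) ≤ s) :
    ∃ a ∉ P, ∀ g : Idx r m d → K, (∀ p ∈ P, aeval g p = 0) → aeval g a ≠ 0 → 
      ringKrullDim (MvPolynomial (Fin (r + 1)) K ⧸ sI g ι) ≤ s := by
  obtain ⟨l, N, hN⟩ := normA (K := K) s _ (sI_hom f ι) h
  let B := MvPolynomial (Idx r m d) K ⧸ P
  let J : Ideal (MvPolynomial (Fin (r + 1)) B) := FI (d := fun i => d (ι i)) (fun i α => Ideal.Quotient.mk P (X ⟨ι i, α⟩)) ⊔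
    LI (fun j i => algebraMap K B (l j i))
  obtain ⟨a, ha, haJ⟩ := clear_den (κ := κ) J N (by
    intro α hα
    rw [Ideal.map_sup, FI_map, LI_map]
    have := hN α hα
    rw [sI] at this
    simp only [hf] at this
    simp only [← IsScalarTower.algebraMap_apply]
    exact this)
  obtain ⟨a, rfl⟩ := Ideal.Quotient.mk_surjective a
  refine ⟨a, fun h => ha (Ideal.Quotient.eq_zero_iff_mem.2 h), fun g hg hga => ?_⟩
  let θ : B →ₐ[K] K := Ideal.Quotient.liftₐ P (aeval g) hg
  have h1 := spec_irr θ.toRingHom J N _ hga haJ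
  rw [Ideal.map_sup, FI_map, LI_map] at h1
  have e1 : (fun j i => θ.toRingHom (algebraMap K B (l j i))) = l := by
    funext j i; exact θ.commutes _
  have e2 : (fun (i : Fin k) (α : Mon r (d (ι i))) => θ.toRingHom (Ideal.Quotient.mk P (X ⟨ι i, α⟩))) = fun i α => g ⟨ι i, α⟩ := by
    funext i α; exact aeval_X _ _
  rw [e1, e2] at h1
  exact dimB _ (sI_hom g ι) l N h1

theorem dim_lt {s : ℕ} {x : WithBot ℕ∞} (h : ¬ ((s + 1 : ℕ) : WithBot ℕ∞) ≤ x) : x ≤ (s : WithBot ℕ∞) := by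
  rw [not_le] at h
  exact ENat.WithBot.lt_add_one_iff.1 (by exact_mod_cast h)

theorem not_dim_le {s : ℕ} {x : WithBot ℕ∞} (h : ((s + 1 : ℕ) : WithBot ℕ∞) ≤ x) : ¬ x ≤ (s : WithBot ℕ∞) := by
  intro h2
  have := h.trans h2
  have h3 : s + 1 ≤ s := by exact_mod_cast this
  omega

theorem line_dim {K : Type*} [Field K] [Infinite K] {r m : ℕ} {d : Fin m → ℕ} (f : Idx r m d → K) (v w : Fin (r + 1) → K)
    (hli : LinearIndependent K ![v, w]) (hf : VL f v w) :
    ((1 + 1 : ℕ) : WithBot ℕ∞) ≤ ringKrullDim (MvPolynomial (Fin (r + 1)) K ⧸ sI f id) := by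
  by_contra hc
  obtain ⟨l, N, hN⟩ := normA (K := K) 1 _ (sI_hom f id) (dim_lt hc)
  rw [LinearIndependent.pair_iff] at hli
  obtain ⟨s, t, hst, hl⟩ : ∃ s t : K, ¬ (s = 0 ∧ t = 0) ∧ l 0 ⬝ᵥ (s • v + t • w) = 0 := by
    by_cases h0 : l 0 ⬝ᵥ v = 0
    · exact ⟨1, 0, by simp, by simp [h0]⟩
    · refine ⟨l 0 ⬝ᵥ w, - (l 0 ⬝ᵥ v), by simp [h0], ?_⟩
      rw [dotProduct_add, dotProduct_smul, dotProduct_smul]; simp; ring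
  let c := s • v + t • w
  have hc0 : c ≠ 0 := fun h => hst (hli s t h)
  obtain ⟨i, hi⟩ := Function.ne_iff.1 hc0
  have h1 := hN (Finsupp.single i N) (by simp)
  have h2 : sI f id ⊔ Ideal.span (Set.range fun j => lin (fun i => algebraMap K K (l j i))) ≤ RingHom.ker (eval c) := by
    refine sup_le ?_ ?_
    · rw [sI, FI, Ideal.span_le]
      rintro _ ⟨i, rfl⟩
      show eval c _ = 0
      rw [eval_frm]
      exact hf i s t
    · rw [Ideal.span_le]
      rintro _ ⟨j, rfl⟩
      show eval c _ = 0
      rw [eval_lin, Subsingleton.elim j 0]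
      exact hl
  have h3 := h2 h1
  rw [RingHom.mem_ker, eval_monomial, one_mul, Finsupp.prod_fintype _ _ (by simp)] at h3
  obtain ⟨j, -, hj⟩ := Finset.prod_eq_zero_iff.1 h3
  by_cases hij : j = i
  · subst hij; exact hi (eq_zero_of_pow_eq_zero hj)
  · rw [Finsupp.single_apply, if_neg (Ne.symm hij), pow_zero] at hj
    exact one_ne_zero hj

/-- explicit tuple -/
noncomputable def F0 (K : Type*) [Field K] (n : ℕ) (d : Fin (n + 1) → ℕ) : tupleSpace K (n + 1) (n + 1) d :=
  fun i => ⟨Fin.lastCases (motive := fun _ => MvPolynomial (Fin (n + 1 + 1)) K) 0 (fun j => X j.succ.succ ^ d j.castSucc) i, by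
    rw [mem_homogeneousSubmodule]
    refine Fin.lastCases ?_ (fun j => ?_) i
    · rw [Fin.lastCases_last]; exact isHomogeneous_zero _ _ _
    · rw [Fin.lastCases_castSucc]
      simpa using (isHomogeneous_X K j.succ.succ).pow (d j.castSucc)⟩

theorem F0_cs (K : Type*) [Field K] (n : ℕ) (d : Fin (n + 1) → ℕ) (j : Fin n) :
    (F0 K n d j.castSucc : MvPolynomial (Fin (n + 1 + 1)) K) = X j.succ.succ ^ d j.castSucc := by
  show Fin.lastCases (motive := fun _ => MvPolynomial (Fin (n + 1 + 1)) K) _ _ _ = _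
  rw [Fin.lastCases_castSucc]

theorem F0_last (K : Type*) [Field K] (n : ℕ) (d : Fin (n + 1) → ℕ) :
    (F0 K n d (Fin.last n) : MvPolynomial (Fin (n + 1 + 1)) K) = 0 := by
  show Fin.lastCases (motive := fun _ => MvPolynomial (Fin (n + 1 + 1)) K) _ _ _ = _
  rw [Fin.lastCases_last]

theorem F0_LL (K : Type*) [Field K] (n : ℕ) (d : Fin (n + 1) → ℕ) (hd : ∀ i, 1 ≤ d i) : F0 K n d ∈ LL K n (n + 1) d := by
  refine ⟨Pi.single 0 1, Pi.single 1 1, ?_, fun i s t => ?_⟩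
  · rw [LinearIndependent.pair_iff]
    intro s t hst
    have h0 := congrFun hst 0
    have h1 := congrFun hst 1
    simp at h0 h1
    exact ⟨h0, h1⟩
  · refine Fin.lastCases ?_ (fun j => ?_) i
    · rw [F0_last, map_zero]
    · rw [F0_cs, map_pow, eval_X]
      have e1 : (j.succ.succ : Fin (n + 1 + 1)) ≠ 0 := Fin.succ_ne_zero _
      have e2 : (j.succ.succ : Fin (n + 1 + 1)) ≠ 1 := by rw [Ne, Fin.ext_iff]; simp
      rw [Pi.single_eq_of_ne e1, Pi.single_eq_of_ne e2]
      have := hd j.castSucc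
      simp; omega

theorem F0_dim (K : Type*) [Field K] (n : ℕ) (d : Fin (n + 1) → ℕ) :
    ringKrullDim (MvPolynomial (Fin (n + 1 + 1)) K ⧸ sI (tEq K (n + 1) (n + 1) d (F0 K n d)) (Fin.castSucc : Fin n → _)) ≤ (2 : ℕ) := by
  classical
  refine dimB _ (sI_hom _ _) (fun j : Fin 2 => Pi.single (Fin.castLE (by omega) j : Fin (n + 1 + 1)) 1) (∑ j : Fin n, d j.castSucc + 1) ?_
  intro α hα
  have hdvd : ∀ (β : Fin (n + 1 + 1) →₀ ℕ), β ≤ α → ∀ I : Ideal (MvPolynomial (Fin (n + 1 + 1)) K),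
      monomial β 1 ∈ I → monomial α 1 ∈ I := by
    intro β hβ I hI
    have : monomial α (1 : K) = monomial (α - β) 1 * monomial β 1 := by
      rw [monomial_mul, tsub_add_cancel_of_le hβ, one_mul]
    rw [this]; exact I.mul_mem_left _ hI
  have hlin : ∀ j : Fin 2, α (Fin.castLE (by omega) j : Fin (n + 1 + 1)) ≠ 0 → monomial α (1 : K) ∈ sI (tEq K (n + 1) (n + 1) d (F0 K n d)) (Fin.castSucc : Fin n → _) ⊔
      Ideal.span (Set.range fun j : Fin 2 => lin (Pi.single (Fin.castLE (by omega) j : Fin (n + 1 + 1)) 1)) := by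
    intro j hj
    apply hdvd (Finsupp.single (Fin.castLE (by omega) j) 1)
    · rw [Finsupp.single_le_iff]; omega
    · apply Ideal.mem_sup_right
      apply Ideal.subset_span
      refine ⟨j, ?_⟩
      show lin _ = X _
      rw [lin, Finset.sum_eq_single (Fin.castLE (by omega) j)]
      · simp
      · intro b _ hb; rw [Pi.single_eq_of_ne hb]; simp
      · simp
  by_cases h0 : α 0 = 0
  · by_cases h1 : α 1 = 0
    · obtain ⟨j, hj⟩ : ∃ j : Fin n, d j.castSucc ≤ α j.succ.succ := by
        by_contra! hcon
        have : α.degree ≤ ∑ j : Fin n, d j.castSucc := by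
          rw [Finsupp.degree_eq_sum, Fin.sum_univ_succ, Fin.sum_univ_succ, h0, Fin.succ_zero_eq_one, h1, zero_add, zero_add]
          exact Finset.sum_le_sum fun j _ => (hcon j).le
        omega
      apply hdvd (Finsupp.single j.succ.succ (d j.castSucc))
      · rw [Finsupp.single_le_iff]; exact hj
      · apply Ideal.mem_sup_left
        rw [← sI_eq]
        apply Ideal.subset_span
        refine ⟨j, ?_⟩
        simp only [F0_cs, X_pow_eq_monomial]
    · exact hlin 1 h1
  · exact hlin 0 h0

theorem LL_sub (K : Type*) [Field K] [IsAlgClosed K] (n : ℕ) (d : Fin (n + 1) → ℕ) (hd : ∀ i, 1 ≤ d i)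
    (S : Set (tupleSpace K (n + 1) (n + 1) d))
    (hS : ∀ F : tupleSpace K (n + 1) (n + 1) d, 
      ((1 + 1 : ℕ) : WithBot ℕ∞) ≤ ringKrullDim (MvPolynomial (Fin (n + 1 + 1)) K ⧸ sI (tEq K (n + 1) (n + 1) d F) id) →
      ringKrullDim (MvPolynomial (Fin (n + 1 + 1)) K ⧸ sI (tEq K (n + 1) (n + 1) d F) (Fin.castSucc : Fin n → _)) ≤ (2 : ℕ) → F ∈ S) :
    LL K n (n + 1) d ⊆ closure S := by
  have : Infinite K := IsAlgClosed.instInfinite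
  obtain ⟨l, N, a, ha, hO⟩ := small_open _ _ (F0_dim K n d)
  have hP : (VI (tEq K (n + 1) (n + 1) d).toEquiv (LL K n (n + 1) d)).IsPrime :=
    ((tChart K (n + 1) (n + 1) d).irr_iff _).1 (LL_irr K n (n + 1) d)
  intro F hF
  rw [(tChart K (n + 1) (n + 1) d).mem_closure]
  intro p hp
  have h1 : p * a ∈ VI (tEq K (n + 1) (n + 1) d).toEquiv (LL K n (n + 1) d) := by
    rw [mem_VI]
    intro G hG
    rw [map_mul]
    by_cases hGa : aeval ((tEq K (n + 1) (n + 1) d).toEquiv G) a = 0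
    · rw [hGa, mul_zero]
    · obtain ⟨v, w, hli, hvl⟩ := (vol_iff G).1 hG
      have : G ∈ S := hS G (line_dim _ v w hli hvl) (small_dim _ l N a hO _ hGa)
      rw [(mem_VI _ _).1 hp G this, zero_mul]
  rcases hP.mem_or_mem h1 with h | h
  · exact (mem_VI _ _).1 h F hF
  · exact absurd ((mem_VI _ _).1 h _ (F0_LL K n d hd)) ha
end P14

section P15
open MvPolynomial

theorem exists_gen_pt {κ : Type*} [Field κ] {r : ℕ} (I : Ideal (MvPolynomial (Fin (r + 1)) κ))
    (h : ((1 + 1 : ℕ) : WithBot ℕ∞) ≤ ringKrullDim (MvPolynomial (Fin (r + 1)) κ ⧸ I)) :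
    ∃ Q : Ideal (MvPolynomial (Fin (r + 1)) κ), Q.IsPrime ∧ I ≤ Q ∧
      ∃ y : Fin 2 → MvPolynomial (Fin (r + 1)) κ ⧸ Q, AlgebraicIndependent κ y := by
  rw [ringKrullDim_quotient] at h
  obtain ⟨l, hl⟩ := Order.le_krullDim_iff.1 h
  let q0 := l 0
  have hq := q0.1.isPrime
  refine ⟨q0.1.asIdeal, hq, q0.2, ?_⟩
  have h2 : ((1 + 1 : ℕ) : WithBot ℕ∞) ≤ ringKrullDim (MvPolynomial (Fin (r + 1)) κ ⧸ q0.1.asIdeal) := by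
    rw [ringKrullDim_quotient, Order.le_krullDim_iff]
    refine ⟨⟨l.length, fun i => ⟨(l i).1, ?_⟩, fun i => l.step i⟩, hl⟩
    exact (l.monotone (Fin.zero_le i) : l 0 ≤ l i)
  obtain ⟨s, hs, x, hx⟩ := dim_trdeg κ (MvPolynomial (Fin (r + 1)) κ ⧸ q0.1.asIdeal)
  rw [hs] at h2
  have h3 : 2 ≤ s := by exact_mod_cast h2
  exact ⟨fun i => x (Fin.castLE h3 i), hx.1.comp _ (Fin.castLE_injective h3)⟩

/-- rank bound from adding one element -/
theorem no_small {K F : Type*} [Field K] [Field F] [Algebra K F] (T C : Set F) (hT : T.Finite)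
    (hlast : (aM K).eRk T + 2 ≤ (aM K).eRk (T ∪ C)) (u : F) (h : C ⊆ (aM K).closure (insert u T)) : False := by
  have h1 : (aM K).eRk (T ∪ C) ≤ (aM K).eRk T + 1 := by
    refine le_trans ?_ ((aM K).eRk_insert_le_add_one u T)
    rw [← (aM K).eRk_closure_eq (insert u T)]
    refine (aM K).eRk_mono (Set.union_subset ?_ h)
    exact (Set.subset_insert u T).trans ((aM K).subset_closure _ (Set.subset_univ _))
  have h2 := hlast.trans h1
  have h3 : (aM K).eRk T ≠ ⊤ := by
    intro h
    have := (aM K).eRk_le_encard T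
    rw [h, top_le_iff, Set.encard_eq_top_iff] at this
    exact this hT
  lift (aM K).eRk T to ℕ using h3 with t
  have : t + 2 ≤ t + 1 := by exact_mod_cast h2
  omega

/-- the relative closure of an `Ecl` plus finitely many elements -/
theorem mem_cl_of_alg {K F : Type*} [Field K] [Field F] [Algebra K F] [IsAlgClosed F] (T Y : Set F) (x : F)
    (h : IsAlgebraic (Algebra.adjoin (Ecl K T) Y) x) : x ∈ (aM K).closure (T ∪ Y) := by
  rw [← mem_Ecl]
  have h1 : IsAlgebraic (Ecl K (T ∪ Y)) x := by
    refine isAlg_of_range (F := F) (R := Algebra.adjoin (Ecl K T) Y) (S := Ecl K (T ∪ Y)) Subtype.val_injective ?_ h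
    rintro ⟨z, hz⟩
    suffices z ∈ Ecl K (T ∪ Y) from ⟨⟨z, this⟩, rfl⟩
    induction hz using Algebra.adjoin_induction with
    | mem z hz =>
      exact (mem_Ecl K _ z).2 ((aM K).mem_closure_of_mem (Or.inr hz) (Set.subset_univ _))
    | algebraMap z =>
      exact (mem_Ecl K _ _).2 ((aM K).closure_subset_closure Set.subset_union_left ((mem_Ecl K _ _).1 z.2))
    | add a b _ _ ha hb => exact add_mem ha hb
    | mul a b _ _ ha hb => exact mul_mem ha hb
  obtain ⟨z, rfl⟩ := mem_range_of_isIntegral_isAlgClosed h1.isIntegral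
  exact z.2

end P15

section P16
open MvPolynomial

theorem mem_cl_lin {K F : Type*} [Field K] [Field F] [Algebra K F] (T : Set F) (u : F) (z : Ecl K T) :
    (z : F) * u ∈ (aM K).closure (insert u T) := by
  rw [← mem_Ecl]
  refine mul_mem ?_ ?_
  · exact (mem_Ecl K _ _).2 ((aM K).closure_subset_closure (Set.subset_insert _ _) ((mem_Ecl K _ _).1 z.2))
  · exact (mem_Ecl K _ _).2 ((aM K).mem_closure_of_mem (Set.mem_insert _ _) (Set.subset_univ _))

theorem pair_algIndep {K F : Type*} [Field K] [Field F] [Algebra K F] (T : Set F) (s t : F)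
    (hs : s ∉ (aM K).closure T) (ht : t ∉ (aM K).closure (insert s T)) :
    AlgebraicIndependent (Ecl K T) ![s, t] := by
  obtain ⟨B, hB⟩ := (aM K).exists_isBasis T (Set.subset_univ _)
  have h1 : (aM K).closure B = (aM K).closure T := hB.closure_eq_closure
  have hBT := hB.subset
  have hsB : s ∉ (aM K).closure B := by rw [h1]; exact hs
  have h2 : (aM K).Indep (insert s B) := (hB.indep.notMem_closure_iff (Set.mem_univ s)).1 hsB |>.1
  have htB : t ∉ (aM K).closure (insert s B) := fun h =>
    ht ((aM K).closure_subset_closure (Set.insert_subset_insert hBT) h)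
  have h3 : (aM K).Indep (insert t (insert s B)) := (h2.notMem_closure_iff (Set.mem_univ t)).1 htB |>.1
  have hst : s ≠ t := by
    rintro rfl
    exact ht ((aM K).mem_closure_of_mem (Set.mem_insert _ _) (Set.subset_univ _))
  have h4 := algIndep_of_indep (I := {s, t}) K hB (by
    rw [Set.disjoint_left]
    rintro x hx (rfl | rfl)
    · exact hsB ((aM K).mem_closure_of_mem hx (Set.subset_univ _))
    · exact htB ((aM K).mem_closure_of_mem (Or.inr hx) (Set.subset_univ _)))
    (by
      convert h3 using 1
      ext x; simp; tauto) (Ecl K T).toSubfield.toSubring (fun x hx => (mem_Ecl K T x).1 hx)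
  have h5 := h4.comp ![⟨s, by simp⟩, ⟨t, by simp⟩] (by
    intro i j hij
    fin_cases i <;> fin_cases j <;> simp_all)
  have h6 : AlgebraicIndependent (Ecl K T) (((↑) : ({s, t} : Set F) → F) ∘ ![⟨s, by simp⟩, ⟨t, by simp⟩]) := h5
  convert h6 using 1
  funext i; fin_cases i <;> rfl

theorem line_of_small {K F : Type*} [Field K] [Field F] [Algebra K F] {r m : ℕ} {d : Fin m → ℕ}
    (T : Set F) (hT : T.Finite) (c : Fin (r + 1) → F)
    (hlast : (aM K).eRk T + 2 ≤ (aM K).eRk (T ∪ Set.range c))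
    (s t : F) (v w : Fin (r + 1) → Ecl K T) (hc : ∀ j, c j = v j * s + w j * t)
    (f : Idx r m d → Ecl K T) (hf0 : ∀ i, fe (fun α => (f ⟨i, α⟩ : F)) c = 0) :
    LinearIndependent (Ecl K T) ![v, w] ∧ VL f v w := by
  have R1 := no_small T (Set.range c) hT hlast
  have hs : s ∉ (aM K).closure T := by
    intro hs
    refine R1 t ?_
    rintro _ ⟨j, rfl⟩
    rw [hc, ← mem_Ecl]
    refine add_mem (mul_mem ?_ ?_) ((mem_Ecl K _ _).2 (mem_cl_lin T t (w j)))
    · exact (mem_Ecl K _ _).2 ((aM K).closure_subset_closure (Set.subset_insert _ _) ((mem_Ecl K _ _).1 (v j).2))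
    · exact (mem_Ecl K _ _).2 ((aM K).closure_subset_closure (Set.subset_insert _ _) hs)
  have ht : t ∉ (aM K).closure (insert s T) := by
    intro ht
    refine R1 s ?_
    rintro _ ⟨j, rfl⟩
    rw [hc, ← mem_Ecl]
    refine add_mem ((mem_Ecl K _ _).2 (mem_cl_lin T s (v j))) (mul_mem ?_ ?_)
    · exact (mem_Ecl K _ _).2 ((aM K).closure_subset_closure (Set.subset_insert _ _) ((mem_Ecl K _ _).1 (w j).2))
    · exact (mem_Ecl K _ _).2 ht
  have hal := pair_algIndep T s t hs ht
  constructor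
  · rw [LinearIndependent.pair_iff]
    intro a b hab
    have hab' : ∀ j, (a : F) * v j + b * w j = 0 := fun j => by
      have := congrFun hab j
      simpa using congrArg (fun z : Ecl K T => (z : F)) this
    by_cases ha : a = 0
    · refine ⟨ha, ?_⟩
      by_contra hb
      have hb' : (b : F) ≠ 0 := fun h => hb (Subtype.ext h)
      refine R1 s ?_
      rintro _ ⟨j, rfl⟩
      have : (w j : F) = 0 := by
        have := hab' j
        rw [ha] at this
        simpa [hb'] using this
      rw [hc, this, zero_mul, add_zero]
      exact mem_cl_lin T s (v j)
    · exfalso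
      have ha' : (a : F) ≠ 0 := fun h => ha (Subtype.ext h)
      refine R1 (t - b / a * s) ?_
      rintro _ ⟨j, rfl⟩
      have : c j = w j * (t - b / a * s) := by
        have := hab' j
        rw [hc]
        field_simp
        linear_combination s * this
      rw [this]
      exact mem_cl_lin T _ (w j)
  · intro i a b
    let H : MvPolynomial (Fin 2) (Ecl K T) := fe (fun α => C (f ⟨i, α⟩)) (fun j => X 0 * C (v j) + X 1 * C (w j))
    have hH : aeval ![s, t] H = 0 := by
      rw [← hf0 i]
      have := map_fe (aeval ![s, t] : MvPolynomial (Fin 2) (Ecl K T) →ₐ[Ecl K T] F).toRingHom (fun α => C (f ⟨i, α⟩)) (fun j => X 0 * C (v j) + X 1 * C (w j))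
      refine this.trans ?_
      congr 1
      · funext α; simp
      · funext j; rw [hc]; simp [mul_comm]
    have hH0 : H = 0 := hal.eq_zero_of_aeval_eq_zero H hH
    have h2 := map_fe (eval ![a, b] : MvPolynomial (Fin 2) (Ecl K T) →+* Ecl K T) (fun α => C (f ⟨i, α⟩)) (fun j => X 0 * C (v j) + X 1 * C (w j))
    have h3 : eval ![a, b] H = 0 := by rw [hH0, map_zero]
    rw [← h3]
    refine Eq.trans ?_ h2.symm
    congr 1
    · funext α; simp
    · funext j; simp

end P16

section P17
open MvPolynomial

theorem span_two {E F : Type*} [Field E] [Field F] [Algebra E F] {ι : Type*} [Finite ι] (c : ι → F)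
    (h : Module.finrank E (Submodule.span E (Set.range c)) ≤ 2) :
    ∃ (s t : F) (v w : ι → E), ∀ j, c j = algebraMap E F (v j) * s + algebraMap E F (w j) * t := by
  let W := Submodule.span E (Set.range c)
  have hfin : Module.Finite E W := FiniteDimensional.span_of_finite E (Set.finite_range c)
  let c' : ι → W := fun j => ⟨c j, Submodule.subset_span ⟨j, rfl⟩⟩
  obtain ⟨k, hk⟩ : ∃ k, Module.finrank E W = k := ⟨_, rfl⟩
  have hk2 : k ≤ 2 := hk ▸ h
  let b := Module.finBasisOfFinrankEq E W hk
  have hb : ∀ j, c j = ∑ i, algebraMap E F (b.repr (c' j) i) * (b i : F) := by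
    intro j
    have := congrArg (fun z : W => (z : F)) (b.sum_repr (c' j))
    simp only [AddSubmonoidClass.coe_finsetSum, Submodule.coe_smul, Algebra.smul_def] at this
    exact this.symm
  clear_value b
  interval_cases k
  · exact ⟨0, 0, 0, 0, fun j => by rw [hb]; simp⟩
  · exact ⟨b 0, 0, fun j => b.repr (c' j) 0, 0, fun j => by rw [hb]; simp⟩
  · exact ⟨b 0, b 1, fun j => b.repr (c' j) 0, fun j => b.repr (c' j) 1, fun j => by rw [hb]; simp [Fin.sum_univ_two]⟩

theorem field_main {K F : Type*} [Field K] [Field F] [Algebra K F] [IsAlgClosed F] (n : ℕ) (d : Fin (n + 1) → ℕ)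
    (hd : ∀ i, 1 ≤ d i) (hmono : Monotone d) (c : Fin (n + 1 + 1) → F) (f : Idx (n + 1) (n + 1) d → F)
    (hf0 : ∀ i, fe (fun α => f ⟨i, α⟩) c = 0) (T : Set F) (hT : T = ⋃ i, Set.range fun α => f ⟨i, α⟩)
    (hlast : (aM K).eRk T + 2 ≤ (aM K).eRk (T ∪ Set.range c)) (l1 l2 : F)
    (hK2 : Set.range c ⊆ (aM K).closure ((⋃ i : Fin n, Set.range fun α => f ⟨i.castSucc, α⟩) ∪ {l1, l2})) :
    (∃ (g : Idx (n + 1) (n + 1) d → Ecl K T), (∀ x, (g x : F) = f x) ∧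
      ∃ v w, LinearIndependent (Ecl K T) ![v, w] ∧ VL g v w) ∨
    (aM K).eRk T + 1 ≤ Nat.card (JJ n d) := by
  have hTf : T.Finite := by
    rw [hT]; exact Set.finite_iUnion fun i => Set.finite_range _
  by_cases hfr : Module.finrank (Ecl K T) (Submodule.span (Ecl K T) (Set.range c)) ≤ 2
  · left
    obtain ⟨s, t, v, w, hc⟩ := span_two c hfr
    refine ⟨fun x => ⟨f x, (mem_Ecl K T _).2 ((aM K).mem_closure_of_mem ?_ (Set.subset_univ _))⟩, fun x => rfl, v, w, ?_⟩
    · rw [hT]; exact Set.mem_iUnion.2 ⟨x.1, x.2, rfl⟩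
    · exact line_of_small T hTf c hlast s t v w hc _ hf0
  · right
    have h1 := rank_bound (K := K) n (Module.finrank (Ecl K T) (Submodule.span (Ecl K T) (Set.range c)) - 1)
      (by omega) d hd hmono c (fun i α => f ⟨i, α⟩) hf0 T hT hlast l1 l2 hK2 (by omega)
    have h2 := card_JJ n d
    have h3 : (aM K).eRk T ≠ ⊤ := by
      intro h
      have := (aM K).eRk_le_encard T
      rw [h, top_le_iff, Set.encard_eq_top_iff] at this
      exact this hTf
    lift (aM K).eRk T to ℕ using h3 with t
    norm_cast at h1 ⊢
    have := h1.trans h2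
    linarith
end P17

section P18
open MvPolynomial

theorem cl_up {K κ F : Type*} [Field K] [Field κ] [Field F] [Algebra K κ] [Algebra κ F] [Algebra K F]
    [IsScalarTower K κ F] (T Y : Set F) (hT : ∀ x ∈ T, ∃ z : κ, algebraMap κ F z = x) (x : F)
    (hx : x ∈ (aM K).closure (T ∪ Y)) : x ∈ (aM κ).closure Y := by
  rw [mem_aMcl] at *
  refine isAlg_of_range (F := F) (R := Algebra.adjoin K (T ∪ Y)) (S := Algebra.adjoin κ Y) Subtype.val_injective ?_ hx
  rintro ⟨z, hz⟩
  suffices z ∈ Algebra.adjoin κ Y from ⟨⟨z, this⟩, rfl⟩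
  induction hz using Algebra.adjoin_induction with
  | mem z hz =>
    rcases hz with hz | hz
    · obtain ⟨w, rfl⟩ := hT z hz
      exact Subalgebra.algebraMap_mem _ _
    · exact Algebra.subset_adjoin hz
  | algebraMap z =>
    rw [IsScalarTower.algebraMap_apply K κ F]
    exact Subalgebra.algebraMap_mem _ _
  | add a b _ _ ha hb => exact add_mem ha hb
  | mul a b _ _ ha hb => exact mul_mem ha hb

theorem hlast_of {K κ F : Type*} [Field K] [Field κ] [Field F] [Algebra K κ] [Algebra κ F] [Algebra K F]
    [IsScalarTower K κ F] (T C : Set F) (hT : ∀ x ∈ T, ∃ z : κ, algebraMap κ F z = x)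
    (hκ : ∀ z : κ, algebraMap κ F z ∈ (aM K).closure T) (y : Fin 2 → F) (hy : AlgebraicIndependent κ y)
    (hyc : ∀ i, y i ∈ Algebra.adjoin κ C) : (aM K).eRk T + 2 ≤ (aM K).eRk (T ∪ C) := by
  have hy' : (aM κ).Indep (Set.range y) := hy.to_subtype_range
  have hne : y 0 ≠ y 1 := fun h => by simpa using hy.injective h
  have h0 : y 0 ∉ (aM K).closure T := by
    intro h
    refine hy'.notMem_closure_sdiff_of_mem ⟨0, rfl⟩ (cl_up (K := K) (κ := κ) T _ hT _ ?_)
    exact (aM K).closure_subset_closure Set.subset_union_left h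
  have h1 : y 1 ∉ (aM K).closure (insert (y 0) T) := by
    intro h
    refine hy'.notMem_closure_sdiff_of_mem ⟨1, rfl⟩ (cl_up (K := K) (κ := κ) T _ hT _ ?_)
    refine (aM K).closure_subset_closure ?_ h
    rintro x (rfl | hx)
    · exact Or.inr ⟨⟨0, rfl⟩, by simpa using hne⟩
    · exact Or.inl hx
  have e1 := (aM K).eRk_insert_eq_add_one (e := y 0) (X := T) ⟨Set.mem_univ _, h0⟩
  have e2 := (aM K).eRk_insert_eq_add_one (e := y 1) (X := insert (y 0) T) ⟨Set.mem_univ _, h1⟩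
  have e3 : (aM K).eRk T + 2 = (aM K).eRk (insert (y 1) (insert (y 0) T)) := by
    rw [e2, e1, add_assoc]; rfl
  rw [e3, ← (aM K).eRk_closure_eq (T ∪ C)]
  have hyE : ∀ i, y i ∈ (aM K).closure (T ∪ C) := by
    intro i
    rw [← mem_Ecl]
    have := hyc i
    generalize y i = z at this
    induction this using Algebra.adjoin_induction with
    | mem z hz => exact (mem_Ecl K _ _).2 ((aM K).mem_closure_of_mem (Or.inr hz) (Set.subset_univ _))
    | algebraMap z => exact (mem_Ecl K _ _).2 ((aM K).closure_subset_closure Set.subset_union_left (hκ z))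
    | add a b _ _ ha hb => exact add_mem ha hb
    | mul a b _ _ ha hb => exact mul_mem ha hb
  refine (aM K).eRk_mono (Set.insert_subset (hyE 1) (Set.insert_subset (hyE 0) ?_))
  exact Set.subset_union_left.trans ((aM K).subset_closure _ (Set.subset_univ _))

theorem hK2_of {K F : Type*} [Field K] [Infinite K] [Field F] [Algebra K F] [IsAlgClosed F] (n : ℕ) (d : Fin (n + 1) → ℕ)
    (c : Fin (n + 1 + 1) → F) (f : Idx (n + 1) (n + 1) d → F)
    (hf0 : ∀ i, fe (fun α => f ⟨i, α⟩) c = 0) (g : Idx (n + 1) (n + 1) d → K)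
    (hg : ringKrullDim (MvPolynomial (Fin (n + 1 + 1)) K ⧸ sI g (Fin.castSucc : Fin n → _)) ≤ (2 : ℕ))
    (hs : ∀ p : MvPolynomial (Idx (n + 1) (n + 1) d) K, aeval f p = 0 → aeval g p = 0) :
    ∃ l1 l2, Set.range c ⊆ (aM K).closure ((⋃ i : Fin n, Set.range fun α => f ⟨i.castSucc, α⟩) ∪ {l1, l2}) := by
  let d' : Fin n → ℕ := fun i => d i.castSucc
  let ρ : Idx (n + 1) n d' → Idx (n + 1) (n + 1) d := fun x => ⟨x.1.castSucc, x.2⟩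
  have hg' : ringKrullDim (MvPolynomial (Fin (n + 1 + 1)) K ⧸ sI (g ∘ ρ) id) ≤ (2 : ℕ) := hg
  obtain ⟨l, N, a, ha, hO⟩ := small_open id (g ∘ ρ) hg'
  set T' := ⋃ i : Fin n, Set.range fun α => f ⟨i.castSucc, α⟩ with hT'
  let f' : Idx (n + 1) n d' → Ecl K T' := fun x => ⟨f (ρ x), (mem_Ecl K T' _).2 ((aM K).mem_closure_of_mem
    (Set.mem_iUnion.2 ⟨x.1, x.2, rfl⟩) (Set.subset_univ _))⟩
  have ha' : aeval f' a ≠ 0 := by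
    intro h
    apply ha
    rw [← aeval_rename]
    apply hs
    rw [aeval_rename]
    have h2 := congrArg (algebraMap (Ecl K T') F) h
    rw [map_zero, ← aeval_algebraMap_apply] at h2
    exact h2
  have h1 := small_spec id l N a hO f' ha'
  have hc : ∀ p ∈ sI f' id, aeval c p = 0 := by
    have : sI f' id ≤ RingHom.ker (aeval c : MvPolynomial (Fin (n + 1 + 1)) (Ecl K T') →ₐ[Ecl K T'] F) := by
      rw [sI, FI, Ideal.span_le]
      rintro _ ⟨i, rfl⟩
      show aeval c _ = 0
      rw [aeval_frm]
      exact hf0 i.castSucc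
    exact fun p hp => this hp
  have h2 := integ (sI f' id) (sI_hom f' id) _ N h1 c hc
  generalize (fun j => (aeval c) (lin fun i => (algebraMap K ↥(Ecl K T')) (l j i))) = Lf at h2
  refine ⟨Lf 0, Lf 1, ?_⟩
  · rintro _ ⟨i, rfl⟩
    have h3 := mem_cl_of_alg T' _ _ (h2 i).isAlgebraic
    refine (aM K).closure_subset_closure (Set.union_subset_union_right _ ?_) h3
    rintro _ ⟨j, rfl⟩
    fin_cases j
    · exact Or.inl rfl
    · exact Or.inr rfl
end P18

section P19
open MvPolynomial

theorem exists_emb.{u} (κ B : Type u) [Field κ] [CommRing B] [IsDomain B] [Algebra κ B] :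
    ∃ (F : Type u) (_ : Field F) (_ : Algebra κ F) (φ : B →ₐ[κ] F), IsAlgClosed F ∧ Function.Injective φ :=
  ⟨AlgebraicClosure (FractionRing B), inferInstance, inferInstance,
    (IsScalarTower.toAlgHom κ (FractionRing B) (AlgebraicClosure (FractionRing B))).comp
      (IsScalarTower.toAlgHom κ B (FractionRing B)), inferInstance,
    (algebraMap (FractionRing B) _).injective.comp (IsFractionRing.injective B (FractionRing B))⟩

theorem exists_gen_pt'.{u} {κ : Type u} [Field κ] {r : ℕ} (I : Ideal (MvPolynomial (Fin (r + 1)) κ))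
    (h : ((1 + 1 : ℕ) : WithBot ℕ∞) ≤ ringKrullDim (MvPolynomial (Fin (r + 1)) κ ⧸ I)) :
    ∃ (F : Type u) (_ : Field F) (_ : Algebra κ F), IsAlgClosed F ∧ ∃ c : Fin (r + 1) → F,
      (∀ p ∈ I, aeval c p = 0) ∧ ∃ y : Fin 2 → F, AlgebraicIndependent κ y ∧
        ∀ i, y i ∈ Algebra.adjoin κ (Set.range c) := by
  obtain ⟨Q, hQ, hIQ, y, hy⟩ := exists_gen_pt I h
  obtain ⟨F, _, _, φ, hF, hφ⟩ := exists_emb κ (MvPolynomial (Fin (r + 1)) κ ⧸ Q)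
  let ψ : MvPolynomial (Fin (r + 1)) κ →ₐ[κ] F := φ.comp (Ideal.Quotient.mkₐ κ Q)
  have hψ : ψ = aeval (fun i => ψ (X i)) := aeval_unique ψ
  refine ⟨F, inferInstance, inferInstance, hF, fun i => ψ (X i), ?_, fun i => φ (y i), hy.map' hφ, ?_⟩
  · intro p hp
    rw [← hψ]
    show φ (Ideal.Quotient.mk Q p) = 0
    rw [Ideal.Quotient.eq_zero_iff_mem.2 (hIQ hp), map_zero]
  · intro i
    obtain ⟨p, hp⟩ := Ideal.Quotient.mk_surjective (y i)
    have : φ (y i) = aeval (fun i => ψ (X i)) p := by rw [← hψ, ← hp]; rfl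
    show φ (y i) ∈ _
    rw [this, Algebra.adjoin_range_eq_range_aeval]
    exact ⟨p, rfl⟩

theorem main_claim {K : Type*} [Field K] [IsAlgClosed K] (n : ℕ) (d : Fin (n + 1) → ℕ)
    (hd : ∀ i, 1 ≤ d i) (hmono : Monotone d) (S : Set (tupleSpace K (n + 1) (n + 1) d))
    (hS1 : ∀ F ∈ S, ((1 + 1 : ℕ) : WithBot ℕ∞) ≤
      ringKrullDim (MvPolynomial (Fin (n + 1 + 1)) K ⧸ sI (tEq K (n + 1) (n + 1) d F) id))
    (hS2 : ∀ F ∈ S, ringKrullDim (MvPolynomial (Fin (n + 1 + 1)) K ⧸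
      sI (tEq K (n + 1) (n + 1) d F) (Fin.castSucc : Fin n → _)) ≤ (2 : ℕ))
    (C : Set (tupleSpace K (n + 1) (n + 1) d)) (hCi : IsIrreducible C) (hCS : C ⊆ closure (C ∩ S)) :
    C ⊆ LL K n (n + 1) d ∨ dimSet C < dimSet (LL K n (n + 1) d) := by
  have : Infinite K := IsAlgClosed.instInfinite
  have ch := tChart K (n + 1) (n + 1) d
  let ev := (tEq K (n + 1) (n + 1) d).toEquiv
  obtain ⟨P, hPdef⟩ : ∃ P, P = VI ev C := ⟨_, rfl⟩
  have hP : P.IsPrime := hPdef ▸ (ch.irr_iff C).1 hCi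
  have hPS : VI ev (C ∩ S) ≤ P := by
    rw [hPdef, ← ch.VI_closure (C ∩ S)]; exact VI_mono hCS
  have hPC : ∀ F ∈ C, ∀ p ∈ P, aeval (tEq K (n + 1) (n + 1) d F) p = 0 := fun F hF p hp => by
    rw [hPdef] at hp; exact (mem_VI _ _).1 hp F hF
  have hdense : ∀ a, a ∉ P → ∃ F ∈ C ∩ S, aeval (tEq K (n + 1) (n + 1) d F) a ≠ 0 := by
    intro a ha
    by_contra hc
    push Not at hc
    exact ha (hPS ((mem_VI _ _).2 hc))
  let B := MvPolynomial (Idx (n + 1) (n + 1) d) K ⧸ P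
  let κ := FractionRing B
  let fη : Idx (n + 1) (n + 1) d → κ := fun x => algebraMap B κ (Ideal.Quotient.mk P (X x))
  have hdim : ((1 + 1 : ℕ) : WithBot ℕ∞) ≤ ringKrullDim (MvPolynomial (Fin (n + 1 + 1)) κ ⧸ sI fη id) := by
    by_contra hc
    obtain ⟨a, haP, ha⟩ := gen_small id fη P (fun x => rfl) (dim_lt hc)
    obtain ⟨F, hF, hFa⟩ := hdense a haP
    exact not_dim_le (hS1 F hF.2) (ha _ (hPC F hF.1) hFa)
  obtain ⟨𝔽, _, _, _, c, hc, y, hy, hyc⟩ := exists_gen_pt' _ hdim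
  let _ : Algebra K 𝔽 := ((algebraMap κ 𝔽).comp (algebraMap K κ)).toAlgebra
  have htow : IsScalarTower K κ 𝔽 := IsScalarTower.of_algebraMap_eq' rfl
  let f : Idx (n + 1) (n + 1) d → 𝔽 := fun x => algebraMap κ 𝔽 (fη x)
  let φ : B →ₐ[K] 𝔽 := (IsScalarTower.toAlgHom K κ 𝔽).comp (IsScalarTower.toAlgHom K B κ)
  have hφ : Function.Injective φ := (algebraMap κ 𝔽).injective.comp (IsFractionRing.injective B κ)
  have hfφ : ∀ p, aeval f p = φ (Ideal.Quotient.mk P p) := by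
    intro p
    have : aeval f = φ.comp (Ideal.Quotient.mkₐ K P) := by
      ext x; rw [aeval_X]; rfl
    rw [this]; rfl
  have hfP : ∀ p, aeval f p = 0 ↔ p ∈ P := by
    intro p
    rw [hfφ, map_eq_zero_iff φ hφ, Ideal.Quotient.eq_zero_iff_mem]
  have hf0 : ∀ i, fe (fun α => f ⟨i, α⟩) c = 0 := by
    intro i
    have := hc _ (Ideal.subset_span ⟨i, rfl⟩)
    rw [aeval_frm] at this
    exact this
  obtain ⟨T, hT⟩ : ∃ T : Set 𝔽, T = ⋃ i, Set.range fun α => f ⟨i, α⟩ := ⟨_, rfl⟩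
  have hTf : ∀ x, f x ∈ T := fun x => by rw [hT]; exact Set.mem_iUnion.2 ⟨x.1, x.2, rfl⟩
  have hφT : ∀ b, φ b ∈ Algebra.adjoin K T := by
    intro b
    obtain ⟨p, rfl⟩ := Ideal.Quotient.mk_surjective b
    rw [← hfφ]
    refine Algebra.adjoin_mono (s := Set.range f) ?_ ?_
    · rintro _ ⟨x, rfl⟩; exact hTf x
    · rw [Algebra.adjoin_range_eq_range_aeval]; exact ⟨p, rfl⟩
  have hlast : (aM K).eRk T + 2 ≤ (aM K).eRk (T ∪ Set.range c) := by
    refine hlast_of (κ := κ) T _ ?_ ?_ y hy hyc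
    · intro x hx
      rw [hT] at hx
      obtain ⟨i, α, rfl⟩ := Set.mem_iUnion.1 hx
      exact ⟨_, rfl⟩
    · intro z
      obtain ⟨a, b, hb, rfl⟩ := IsFractionRing.div_surjective (A := B) z
      rw [map_div₀, ← mem_Ecl]
      exact div_mem ((mem_Ecl K _ _).2 (adjoin_subset_closure K T (hφT a)))
        ((mem_Ecl K _ _).2 (adjoin_subset_closure K T (hφT b)))
  obtain ⟨F0, hF0, -⟩ := hdense 1 (fun h => hP.ne_top ((Ideal.eq_top_iff_one _).2 h))
  obtain ⟨l1, l2, hK2⟩ := hK2_of n d c f hf0 (tEq K (n + 1) (n + 1) d F0) (hS2 F0 hF0.2)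
    (fun p hp => hPC F0 hF0.1 p ((hfP p).1 hp))
  rcases field_main n d hd hmono c f hf0 T hT hlast l1 l2 hK2 with ⟨g, hg, v, w, hli, hvl⟩ | h
  · left
    have h1 : VI ev (LL K n (n + 1) d) ≤ P := by
      intro p hp
      have h2 := congrArg (algebraMap (Ecl K T) 𝔽) (LL_over g v w hli hvl p hp)
      rw [map_zero, ← aeval_algebraMap_apply] at h2
      rw [← hfP, ← h2]
      congr 2
      funext x; exact (hg x).symm
    intro F hF
    rw [← (LL_closed K n (n + 1) d).closure_eq, ch.mem_closure]
    exact fun p hp => hPC F hF p (h1 hp)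
  · right
    refine lt_of_lt_of_le ?_ (LL_dim K n d hd)
    have h3 : (aM K).eRk T ≠ ⊤ := by
      intro h'
      rw [h'] at h
      simp at h
    obtain ⟨t, ht⟩ := ENat.ne_top_iff_exists.1 h3
    rw [← ht] at h
    have h4 : t + 1 ≤ Nat.card (JJ n d) := by exact_mod_cast h
    have h5 := dim_le_of_rk φ hφ T hφT t ht.ge
    rw [ch.dim, show VI (tEq K (n + 1) (n + 1) d).toEquiv C = P from hPdef.symm]
    refine lt_of_le_of_lt h5 ?_
    exact_mod_cast h4
end P19

noncomputable section Statement0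
open MvPolynomial
variable (K : Type*) [Field K]

/-- For `r ≥ 2` and degrees `1 ≤ d 0 ≤ ⋯ ≤ d (r-1)`, let `Z` be the locus
of `r`-tuples `(F_1, …, F_r)` with `dim V(F_1, …, F_r) ≥ 1`, let `D` be the locus where
`dim V(F_1, …, F_{r-1}) ≥ 2`, and let `L` be the locus of tuples vanishing on a common line.
Then the Zariski closure of `Z \ D` has a unique irreducible component of maximal dimension,
and this component equals `L`: i.e. `L` is an irreducible component (a maximal irreducible
subset) of `closure (Z \ D)`, and every other irreducible component has strictly smaller
dimension. -/
theorem statement0 [IsAlgClosed K] (r : ℕ) (hr : 2 ≤ r)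
    (d : Fin r → ℕ) (hd1 : ∀ i, 1 ≤ d i) (hmono : Monotone d)
    (Z D L : Set (tupleSpace K r r d))
    (hZ : Z = {F | vdimGE r r (fun i => (F i : MvPolynomial (Fin (r + 1)) K)) 1})
    (hD : D = {F | vdimGE r (r - 1)
      (fun i : Fin (r - 1) => (F (Fin.castLE (Nat.sub_le r 1) i) : MvPolynomial (Fin (r + 1)) K)) 2})
    (hL : L = {F | vanishOnCommonLine K F}) :
    Maximal (fun t => t ⊆ closure (Z \ D) ∧ IsIrreducible t) L ∧
      ∀ C : Set (tupleSpace K r r d),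
        Maximal (fun t => t ⊆ closure (Z \ D) ∧ IsIrreducible t) C → C ≠ L →
          dimSet C < dimSet L := by
  obtain ⟨n, rfl⟩ : ∃ n, r = n + 1 := ⟨r - 1, by omega⟩
  have : Infinite K := IsAlgClosed.instInfinite
  have hnoeth : TopologicalSpace.NoetherianSpace (tupleSpace K (n + 1) (n + 1) d) :=
    (tChart K (n + 1) (n + 1) d).noeth
  have hLL : L = LL K n (n + 1) d := hL
  have e1 : ∀ F : tupleSpace K (n + 1) (n + 1) d, F ∈ Z ↔ ((1 + 1 : ℕ) : WithBot ℕ∞) ≤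
      ringKrullDim (MvPolynomial (Fin (n + 1 + 1)) K ⧸ sI (tEq K (n + 1) (n + 1) d F) id) := by
    intro F
    rw [hZ, ← sI_eq F id]
    exact Iff.rfl
  have e2 : ∀ F : tupleSpace K (n + 1) (n + 1) d, F ∈ D ↔ ((2 + 1 : ℕ) : WithBot ℕ∞) ≤
      ringKrullDim (MvPolynomial (Fin (n + 1 + 1)) K ⧸
        sI (tEq K (n + 1) (n + 1) d F) (Fin.castSucc : Fin n → _)) := by
    intro F
    rw [hD, ← sI_eq F (Fin.castSucc : Fin n → _)]
    exact Iff.rfl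
  have key : ∀ C : Set (tupleSpace K (n + 1) (n + 1) d),
      Maximal (fun t => t ⊆ closure (Z \ D) ∧ IsIrreducible t) C → C ⊆ L ∨ dimSet C < dimSet L := by
    intro C hC
    rw [hLL]
    exact main_claim n d hd1 hmono (Z \ D) (fun F hF => (e1 F).1 hF.1)
      (fun F hF => dim_lt fun h => hF.2 ((e2 F).2 h)) C hC.prop.2 (max_facts _ C hC).2
  have hLsub : L ⊆ closure (Z \ D) := by
    rw [hLL]
    exact LL_sub K n d hd1 _ fun F h1 h2 => ⟨(e1 F).2 h1, fun h => not_dim_le ((e2 F).1 h) h2⟩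
  have hLirr : IsIrreducible L := hLL ▸ LL_irr K n (n + 1) d
  refine ⟨⟨⟨hLsub, hLirr⟩, ?_⟩, ?_⟩
  · rintro t ⟨ht, hti⟩ hLt
    obtain ⟨C, htC, hC⟩ := exists_max _ t ht hti
    rcases key C hC with h | h
    · exact htC.trans h
    · exact absurd ((tChart K (n + 1) (n + 1) d).dim_mono ((show L ⊆ t from hLt).trans htC)) (not_le.2 h)
  · intro C hC hne
    rcases key C hC with h | h
    · exact absurd (h.antisymm (hC.2 ⟨hLsub, hLirr⟩ h)) hne
    · exact h

end Statement0
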